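/- Let D be a non-trivial, non-symmetric 2-(v,k,3) design with 3 dividing the replication number r, admitting a flag-transitive, point-primitive automorphism group G that is almost simple with socle X = PSL(2,q), q ≥ 4 a prime power. Then X itself acts point-primitively on D; equivalently, the stabilizer X_α in X of a point α of D is a maximal subgroup of X. -/

import Mathlib

open scoped Pointwise
open Matrix

namespace FT

variable {Pt : Type*}

/-- `IsDesign 𝓑 k lam` says that the family `𝓑` of subsets of the point set `Pt` is the
block set of a `2-(v, k, lam)` design: every block has `k` points and any two distinct
points lie on exactly `lam` common blocks. -/
structure IsDesign (𝓑 : Set (Set Pt)) (k lam : ℕ) : Prop where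
  block_card : ∀ B ∈ 𝓑, Nat.card B = k
  pair_count : ∀ x y : Pt, x ≠ y → Nat.card {B : Set Pt | B ∈ 𝓑 ∧ x ∈ B ∧ y ∈ B} = lam

/-- The group `G` acts on the design with point set `Pt` and block set `𝓑` as a group of
automorphisms. -/
def ActsOn (G : Type*) [Group G] [MulAction G Pt] (𝓑 : Set (Set Pt)) : Prop :=
  ∀ (g : G), ∀ B ∈ 𝓑, g • B ∈ 𝓑

/-- The group `G` is transitive on the flags (incident point-block pairs) of the design. -/
def FlagTransitive (G : Type*) [Group G] [MulAction G Pt] (𝓑 : Set (Set Pt)) : Prop :=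
  ∀ B ∈ 𝓑, ∀ C ∈ 𝓑, ∀ x ∈ B, ∀ y ∈ C, ∃ g : G, g • B = C ∧ g • x = y

/-- The action of `G` on `Pt` is primitive: it is transitive and every block of
imprimitivity is trivial. -/
def PointPrimitive (G : Type*) [Group G] (Pt : Type*) [MulAction G Pt] : Prop :=
  MulAction.IsPretransitive G Pt ∧
    ∀ s : Set Pt, MulAction.IsBlock G s → s.Subsingleton ∨ s = Set.univ

/-- The number of blocks of `𝓑` through the point `x` (the replication number, for a
flag-transitive design). -/
noncomputable def repNum (𝓑 : Set (Set Pt)) (x : Pt) : ℕ :=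
  Nat.card {B : Set Pt | B ∈ 𝓑 ∧ x ∈ B}

/-- The projective general linear group `PGL(2,K)`, as the quotient of `GL(2,K)` by its
center. -/
abbrev PGL2 (K : Type*) [Field K] :=
  GL (Fin 2) K ⧸ Subgroup.center (GL (Fin 2) K)

/-- The projective special linear group `PSL(2,K)`. -/
abbrev PSL2 (K : Type*) [Field K] := Matrix.ProjectiveSpecialLinearGroup (Fin 2) K

end FT

open FT

/-!
Write `S = SL(2,q)` and let `φ : S → G` be the composite of `S → PSL(2,q)` with the embedding of the
socle `X`. Its kernel is the center and its image is `X`, so it suffices to show that the preimage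
`ptStab φ α` of some point stabilizer is maximal in `S`, or that the number `v` of points is prime.
Let `q = p ^ f` and `r = 3 R`.

*Design theory.* Counting and Fisher's inequality give `v = R (k - 1) + 1`, `R ≥ 2`, `k < 3 R` and
`k ∣ 3 R (R - 1)`. Flag-transitivity gives `3 R ∣ |G_α|`, and `R` divides the length of every
`G_α`-orbit on the other points (`rep_dvd`, `rep_dvd_orbit`).

*The characteristic does not divide `v`.* Then the group of upper unitriangular matrices fixes a
point `α`. As `X_α` is proper, its preimage lies in a Borel subgroup; hence `G_α` normalizes the
unipotent group, and by maximality of `G_α` the preimage is the Borel subgroup, which is maximal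
(`coatom_of_not_dvd`).

*The characteristic divides `v`.* Let `ℓ` be a prime divisor of `R`; it divides neither `v` nor `q`.
A Sylow `ℓ`-subgroup of a torus fixes a point `α`. If it fixes only `α`, the normalizer of the torus
fixes `α`, and then `X_α` is maximal by the classification of the subgroups of `S` containing such a
normalizer (`split_lemma`, `nonsplit_lemma`); the small exceptions contradict the divisibility
conditions. If it fixes two points, the orbit condition bounds the `ℓ`-part of `R`. Doing this for
the split and the nonsplit torus shows that `R` divides `f`, `2 f` or `4 f`, according to `q` modulo
four (`coatom_or_dvd`). On the other hand, Burnside's lemma for the unipotent group gives `q ≤ 2 v`,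
and `q ≤ v` unless `q ≡ 1 (mod 4)` (`card_points_ge`). Since `v ≤ 3 R ^ 2`, only finitely many
parameters remain, and a search leaves `v = 5` (`numerics`).

The overgroups of torus normalizers are found by counting. Commuting is a transitive relation on
noncentral elements of `S`, so the elements of a subgroup without fixed points on the projective line
fall into disjoint classes whose sizes are determined by the orders of centralizers, while Burnside's
lemma on the projective line prescribes how many such elements there are. The bound
`|G| ∣ |S| f` comes from a Frattini argument for the unipotent group together with the fact that an
element normalizing both root subgroups acts semilinearly.
-/

namespace SLTwo

/-! ### Classes of commuting elements in a finite group -/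

section Commuting

variable {S : Type*} [Group S]

/-- The elements of `M` conjugating `y` to an element that commutes with `y`. -/
def nrm (M : Subgroup S) (y : S) : Set S := {g | g ∈ M ∧ Commute (g * y * g⁻¹) y}

/-- The centralizer of `y` in `M`. -/
def cen (M : Subgroup S) (y : S) : Subgroup S := M ⊓ Subgroup.centralizer {y}

/-- The noncentral elements of `M` having an `M`-conjugate that commutes with `y`. -/
def cls (M : Subgroup S) (y : S) : Set S :=
  {z | z ∈ M ∧ z ∉ Subgroup.center S ∧ ∃ g ∈ M, Commute (g * z * g⁻¹) y}

/-- Commuting is transitive through noncentral elements. -/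
def CT (S : Type*) [Group S] : Prop :=
  ∀ a b c : S, b ∉ Subgroup.center S → Commute a b → Commute b c → Commute a c

lemma mem_cen {M : Subgroup S} {y z : S} : z ∈ cen M y ↔ z ∈ M ∧ Commute z y := by
  simp [cen, Subgroup.mem_centralizer_singleton_iff, Commute, SemiconjBy, eq_comm]

lemma mem_nrm {M : Subgroup S} {y g : S} : g ∈ nrm M y ↔ g ∈ M ∧ Commute (g * y * g⁻¹) y := Iff.rfl

lemma mem_cls {M : Subgroup S} {y z : S} : z ∈ cls M y ↔
    z ∈ M ∧ z ∉ Subgroup.center S ∧ ∃ g ∈ M, Commute (g * z * g⁻¹) y := Iff.rfl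

lemma conj_notMem_center {z : S} (hz : z ∉ Subgroup.center S) (g : S) :
    g * z * g⁻¹ ∉ Subgroup.center S := by
  intro h
  apply hz
  have := Subgroup.Normal.conj_mem (inferInstance : (Subgroup.center S).Normal) _ h g⁻¹
  simpa [mul_assoc] using this

lemma commute_conj {a b : S} (h : Commute a b) (g : S) :
    Commute (g * a * g⁻¹) (g * b * g⁻¹) := by
  have : g * a * g⁻¹ * (g * b * g⁻¹) = g * b * g⁻¹ * (g * a * g⁻¹) := by
    have := h.eq
    calc _ = g * (a * b) * g⁻¹ := by group
      _ = g * (b * a) * g⁻¹ := by rw [this]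
      _ = _ := by group
  exact this

/-- Double counting of the pairs `(g, z)` in `M × M` with `z` noncentral and `g z g⁻¹`
commuting with `y`. -/
lemma cls_count [Finite S] (hct : CT S) (M : Subgroup S) (hZ : Subgroup.center S ≤ M) {y : S}
    (hyM : y ∈ M) (hy : y ∉ Subgroup.center S) :
    (cls M y).ncard * (nrm M y).ncard + Nat.card (Subgroup.center S) * Nat.card M
      = Nat.card (cen M y) * Nat.card M := by
  classical
  have := Fintype.ofFinite S
  have key := Finset.sum_card_bipartiteAbove_eq_sum_card_bipartiteBelow
    (s := (M : Set S).toFinset) (t := (cls M y).toFinset)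
    (fun g z => Commute (g * z * g⁻¹) y)
  have h1 : ∀ g ∈ (M : Set S).toFinset,
      (Finset.bipartiteAbove (fun g z => Commute (g * z * g⁻¹) y) (cls M y).toFinset g).card
        + Nat.card (Subgroup.center S) = Nat.card (cen M y) := by
    intro g hg
    have hg : g ∈ M := by simpa using hg
    have e1 : Nat.card (Subgroup.center S) = ((Subgroup.center S : Set S).toFinset).card := by
      rw [← Set.ncard_eq_toFinset_card', ← Nat.card_coe_set_eq]; rfl
    have e2 : Nat.card (cen M y) = ((cen M y : Set S).toFinset).card := by
      rw [← Set.ncard_eq_toFinset_card', ← Nat.card_coe_set_eq]; rfl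
    have hsub : (Subgroup.center S : Set S).toFinset ⊆ (cen M y : Set S).toFinset := by
      intro z hz
      simp only [Set.mem_toFinset, SetLike.mem_coe] at hz ⊢
      exact mem_cen.2 ⟨hZ hz, (Subgroup.mem_center_iff.1 hz y).symm⟩
    rw [e1, e2, ← Finset.card_sdiff_add_card_eq_card hsub]
    congr 1
    refine Finset.card_bij (fun z _ => g * z * g⁻¹) ?_ ?_ ?_
    · intro z hz
      simp only [Finset.mem_bipartiteAbove, Set.mem_toFinset, mem_cls] at hz
      simp only [Finset.mem_sdiff, Set.mem_toFinset, SetLike.mem_coe]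
      exact ⟨mem_cen.2 ⟨M.mul_mem (M.mul_mem hg hz.1.1) (M.inv_mem hg), hz.2⟩,
        conj_notMem_center hz.1.2.1 g⟩
    · intro a _ b _ h
      simpa using h
    · intro z hz
      simp only [Finset.mem_sdiff, Set.mem_toFinset, SetLike.mem_coe] at hz
      have hz1 := mem_cen.1 hz.1
      have e : g * (g⁻¹ * z * g) * g⁻¹ = z := by group
      refine ⟨g⁻¹ * z * g, ?_, e⟩
      simp only [Finset.mem_bipartiteAbove, Set.mem_toFinset, mem_cls]
      have hc : Commute (g * (g⁻¹ * z * g) * g⁻¹) y := by rw [e]; exact hz1.2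
      refine ⟨⟨M.mul_mem (M.mul_mem (M.inv_mem hg) hz1.1) hg, ?_, g, hg, hc⟩, hc⟩
      have := conj_notMem_center hz.2 g⁻¹
      simpa using this
  have h2 : ∀ z ∈ (cls M y).toFinset,
      (Finset.bipartiteBelow (fun g z => Commute (g * z * g⁻¹) y) (M : Set S).toFinset z).card
        = (nrm M y).ncard := by
    intro z hz
    simp only [Set.mem_toFinset, mem_cls] at hz
    obtain ⟨hzM, hzc, g, hg, hgz⟩ := hz
    rw [Set.ncard_eq_toFinset_card']
    refine Finset.card_bij (fun n _ => n * g⁻¹) ?_ ?_ ?_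
    · intro n hn
      simp only [Finset.mem_bipartiteBelow, Set.mem_toFinset, SetLike.mem_coe] at hn
      simp only [Set.mem_toFinset, mem_nrm]
      refine ⟨M.mul_mem hn.1 (M.inv_mem hg), ?_⟩
      have h3 := commute_conj hgz (n * g⁻¹)
      have e : n * g⁻¹ * (g * z * g⁻¹) * (n * g⁻¹)⁻¹ = n * z * n⁻¹ := by group
      rw [e] at h3
      exact hct _ _ _ (conj_notMem_center hzc n) h3.symm hn.2
    · intro a _ b _ h
      simpa using h
    · intro n hn
      simp only [Set.mem_toFinset, mem_nrm] at hn
      refine ⟨n * g, ?_, by group⟩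
      simp only [Finset.mem_bipartiteBelow, Set.mem_toFinset, SetLike.mem_coe]
      refine ⟨M.mul_mem hn.1 hg, ?_⟩
      have h3 := commute_conj hgz n
      have e : n * (g * z * g⁻¹) * n⁻¹ = n * g * z * (n * g)⁻¹ := by group
      rw [e] at h3
      exact hct _ _ _ (conj_notMem_center hy n) h3 hn.2
  rw [Finset.sum_congr rfl h2, Finset.sum_const, smul_eq_mul] at key
  have e3 : Nat.card M = ((M : Set S).toFinset).card := by
    rw [← Set.ncard_eq_toFinset_card', ← Nat.card_coe_set_eq]; rfl
  rw [Set.ncard_eq_toFinset_card' (cls M y), ← key, e3, mul_comm (Nat.card (Subgroup.center S)),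
    mul_comm (Nat.card (cen M y)), ← smul_eq_mul, ← smul_eq_mul, ← Finset.sum_const,
    ← Finset.sum_const, ← Finset.sum_add_distrib]
  exact Finset.sum_congr rfl h1

lemma cen_dvd [Finite S] (M : Subgroup S) (hZ : Subgroup.center S ≤ M) (y : S) :
    Nat.card (Subgroup.center S) ∣ Nat.card (cen M y) :=
  Subgroup.card_dvd_of_le fun _ hz =>
    mem_cen.2 ⟨hZ hz, (Subgroup.mem_center_iff.1 hz y).symm⟩

lemma cen_lt [Finite S] (M : Subgroup S) (hZ : Subgroup.center S ≤ M) {y : S}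
    (hyM : y ∈ M) (hy : y ∉ Subgroup.center S) :
    Nat.card (Subgroup.center S) < Nat.card (cen M y) := by
  have h1 : (Subgroup.center S : Set S) ⊂ (cen M y : Set S) := by
    refine ⟨fun z hz => mem_cen.2 ⟨hZ hz, (Subgroup.mem_center_iff.1 hz y).symm⟩, fun h => hy ?_⟩
    exact h (mem_cen.2 ⟨hyM, Commute.refl _⟩)
  have := Set.ncard_lt_ncard h1 (Set.toFinite _)
  rwa [← Nat.card_coe_set_eq, ← Nat.card_coe_set_eq] at this

lemma nrm_card [Finite S] (M : Subgroup S) {y : S}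
    (hinv : ∀ g : S, Commute (g * y * g⁻¹) y → g * y * g⁻¹ = y ∨ g * y * g⁻¹ = y⁻¹) :
    (nrm M y).ncard = Nat.card (cen M y) ∨ (nrm M y).ncard = 2 * Nat.card (cen M y) := by
  classical
  have e0 : Nat.card (cen M y) = (cen M y : Set S).ncard := by
    rw [← Nat.card_coe_set_eq]; rfl
  by_cases h : ∃ n ∈ M, n * y * n⁻¹ = y⁻¹ ∧ y⁻¹ ≠ y
  · obtain ⟨n, hn, hny, hyy⟩ := h
    right
    have hu : nrm M y = (cen M y : Set S) ∪ (fun g => n * g) '' (cen M y : Set S) := by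
      ext g
      simp only [mem_nrm, Set.mem_union, SetLike.mem_coe, Set.mem_image]
      constructor
      · rintro ⟨hg, hc⟩
        rcases hinv g hc with h1 | h1
        · left; exact mem_cen.2 ⟨hg, mul_inv_eq_iff_eq_mul.1 h1⟩
        · right
          refine ⟨n⁻¹ * g, mem_cen.2 ⟨M.mul_mem (M.inv_mem hn) hg, ?_⟩, by group⟩
          have h2 : n⁻¹ * g * y * (n⁻¹ * g)⁻¹ = y := by
            have : n⁻¹ * (n * y * n⁻¹) * n = y := by group
            rw [hny, ← h1] at this
            calc _ = n⁻¹ * (g * y * g⁻¹) * n := by group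
              _ = y := this
          exact mul_inv_eq_iff_eq_mul.1 h2
      · rintro (h1 | ⟨c, h1, rfl⟩)
        · have h1 := mem_cen.1 h1
          refine ⟨h1.1, ?_⟩
          rw [h1.2.eq]; simp
        · have h1 := mem_cen.1 h1
          refine ⟨M.mul_mem hn h1.1, ?_⟩
          have : n * c * y * (n * c)⁻¹ = n * (c * y * c⁻¹) * n⁻¹ := by group
          rw [this, h1.2.eq]
          simp [hny]
    rw [hu, Set.ncard_union_eq _ (Set.toFinite _) (Set.toFinite _),
      Set.ncard_image_of_injective _ (mul_right_injective n), e0, two_mul]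
    rw [Set.disjoint_left]
    rintro _ h1 ⟨c, h2, rfl⟩
    have h1 := mem_cen.1 h1
    have h2 := mem_cen.1 h2
    apply hyy
    have : n * c * y * (n * c)⁻¹ = n * (c * y * c⁻¹) * n⁻¹ := by group
    have h3 : n * c * y * (n * c)⁻¹ = y := by
      have := h1.2.eq
      simp only at this
      rw [this]; group
    rw [this, h2.2.eq] at h3
    simpa [hny] using h3
  · left
    push Not at h
    rw [e0]
    congr 1
    ext g
    simp only [mem_nrm, SetLike.mem_coe]
    constructor
    · rintro ⟨hg, hc⟩
      refine mem_cen.2 ⟨hg, mul_inv_eq_iff_eq_mul.1 ?_⟩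
      rcases hinv g hc with h1 | h1
      · exact h1
      · rw [h1]; exact h g hg h1
    · intro h1
      have h1 := mem_cen.1 h1
      refine ⟨h1.1, ?_⟩
      rw [h1.2.eq]; simp

/-- The classes `cls M y` and `cls M y'` are disjoint as soon as `y'` is not in `cls M y`. -/
lemma cls_disjoint (hct : CT S) (M : Subgroup S) {y y' : S} (hyM : y' ∈ M)
    (hy : y' ∉ Subgroup.center S) (h : y' ∉ cls M y) : Disjoint (cls M y) (cls M y') := by
  rw [Set.disjoint_left]
  rintro z ⟨hz, hzc, g, hg, hgz⟩ ⟨-, -, g', hg', hgz'⟩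
  apply h
  refine ⟨hyM, hy, g * g'⁻¹, M.mul_mem hg (M.inv_mem hg'), ?_⟩
  have h1 := commute_conj hgz' (g * g'⁻¹)
  have e : g * g'⁻¹ * (g' * z * g'⁻¹) * (g * g'⁻¹)⁻¹ = g * z * g⁻¹ := by group
  rw [e] at h1
  exact hct _ _ _ (conj_notMem_center hzc g) h1.symm hgz

end Commuting

end SLTwo

namespace SLTwo

/-! ### The group `SL(2,F)` and its action on the projective line -/

open OnePoint

/-- The special linear group of degree two. -/
abbrev SL2 (F : Type*) [Field F] := Matrix.SpecialLinearGroup (Fin 2) F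

section Basics

variable {F : Type*} [Field F]

lemma det_eq (g : SL2 F) : g 0 0 * g 1 1 - g 0 1 * g 1 0 = 1 := by
  have := g.det_coe
  rwa [Matrix.det_fin_two] at this

/-- The matrix with rows `(a, b)` and `(c, d)`. -/
def mk (a b c d : F) (h : a * d - b * c = 1) : SL2 F :=
  ⟨!![a, b; c, d], by rw [Matrix.det_fin_two_of]; exact h⟩

@[simp] lemma mk00 (a b c d : F) (h) : (mk a b c d h) 0 0 = a := rfl
@[simp] lemma mk01 (a b c d : F) (h) : (mk a b c d h) 0 1 = b := rfl
@[simp] lemma mk10 (a b c d : F) (h) : (mk a b c d h) 1 0 = c := rfl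
@[simp] lemma mk11 (a b c d : F) (h) : (mk a b c d h) 1 1 = d := rfl

lemma ext4 {g h : SL2 F} (h00 : g 0 0 = h 0 0) (h01 : g 0 1 = h 0 1) (h10 : g 1 0 = h 1 0)
    (h11 : g 1 1 = h 1 1) : g = h := by
  ext i j
  fin_cases i <;> fin_cases j <;> assumption

lemma mul00 (g h : SL2 F) : (g * h) 0 0 = g 0 0 * h 0 0 + g 0 1 * h 1 0 := by
  simp [Matrix.mul_apply, Fin.sum_univ_two]
lemma mul01 (g h : SL2 F) : (g * h) 0 1 = g 0 0 * h 0 1 + g 0 1 * h 1 1 := by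
  simp [Matrix.mul_apply, Fin.sum_univ_two]
lemma mul10 (g h : SL2 F) : (g * h) 1 0 = g 1 0 * h 0 0 + g 1 1 * h 1 0 := by
  simp [Matrix.mul_apply, Fin.sum_univ_two]
lemma mul11 (g h : SL2 F) : (g * h) 1 1 = g 1 0 * h 0 1 + g 1 1 * h 1 1 := by
  simp [Matrix.mul_apply, Fin.sum_univ_two]

lemma inv00 (g : SL2 F) : g⁻¹ 0 0 = g 1 1 := by
  rw [Matrix.SpecialLinearGroup.SL2_inv_expl]; rfl
lemma inv01 (g : SL2 F) : g⁻¹ 0 1 = - g 0 1 := by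
  rw [Matrix.SpecialLinearGroup.SL2_inv_expl]; rfl
lemma inv10 (g : SL2 F) : g⁻¹ 1 0 = - g 1 0 := by
  rw [Matrix.SpecialLinearGroup.SL2_inv_expl]; rfl
lemma inv11 (g : SL2 F) : g⁻¹ 1 1 = g 0 0 := by
  rw [Matrix.SpecialLinearGroup.SL2_inv_expl]; rfl
lemma one00 : (1 : SL2 F) 0 0 = 1 := by simp
lemma one01 : (1 : SL2 F) 0 1 = 0 := by simp
lemma one10 : (1 : SL2 F) 1 0 = 0 := by simp
lemma one11 : (1 : SL2 F) 1 1 = 1 := by simp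

lemma commute_iff (g h : SL2 F) : Commute g h ↔
    g 0 1 * h 1 0 = h 0 1 * g 1 0 ∧ g 0 1 * (h 0 0 - h 1 1) = h 0 1 * (g 0 0 - g 1 1) ∧
      g 1 0 * (h 0 0 - h 1 1) = h 1 0 * (g 0 0 - g 1 1) := by
  constructor
  · intro hc
    have hc : g * h = h * g := hc
    have h00 := congrArg (fun m : SL2 F => m 0 0) hc
    have h01 := congrArg (fun m : SL2 F => m 0 1) hc
    have h10 := congrArg (fun m : SL2 F => m 1 0) hc
    simp only [mul00, mul01, mul10] at h00 h01 h10
    refine ⟨by linear_combination h00, by linear_combination -h01, by linear_combination h10⟩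
  · rintro ⟨h1, h2, h3⟩
    show g * h = h * g
    apply ext4 <;> simp only [mul00, mul01, mul10, mul11]
    · linear_combination h1
    · linear_combination -h2
    · linear_combination h3
    · linear_combination -h1

/-- The upper unitriangular matrices. -/
def u (x : F) : SL2 F := mk 1 x 0 1 (by ring)

/-- The lower unitriangular matrices. -/
def l (x : F) : SL2 F := mk 1 0 x 1 (by ring)

/-- The diagonal matrices. -/
def hh (a : Fˣ) : SL2 F := mk a 0 0 (a⁻¹ : Fˣ) (by simp)

/-- The Weyl element. -/
def w : SL2 F := mk 0 1 (-1) 0 (by ring)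

lemma mem_center (g : SL2 F) :
    g ∈ Subgroup.center (SL2 F) ↔ g 0 1 = 0 ∧ g 1 0 = 0 ∧ g 0 0 = g 1 1 := by
  rw [Subgroup.mem_center_iff]
  constructor
  · intro h
    have h1 := (commute_iff _ _).1 (show Commute (u 1) g from h (u 1))
    have h2 := (commute_iff _ _).1 (show Commute (l 1) g from h (l 1))
    simp [u, l] at h1 h2
    exact ⟨by simpa using h2.1.symm, h1.1, by simpa [sub_eq_zero] using h1.2⟩
  · rintro ⟨h1, h2, h3⟩ k
    exact (commute_iff k g).2 ⟨by simp [h1, h2], by simp [h1, h3], by simp [h2, h3]⟩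

lemma ct : CT (SL2 F) := by
  intro a b c hb hab hbc
  rw [mem_center] at hb
  rw [commute_iff] at *
  obtain ⟨h1, h2, h3⟩ := hab
  obtain ⟨k1, k2, k3⟩ := hbc
  by_cases hb1 : b 0 1 = 0
  · by_cases hb2 : b 1 0 = 0
    · have hb3 : b 0 0 - b 1 1 ≠ 0 := by
        intro h; exact hb ⟨hb1, hb2, sub_eq_zero.1 h⟩
      have e1 : a 0 1 = 0 := by simpa [hb1, hb3] using h2
      have e2 : a 1 0 = 0 := by simpa [hb2, hb3] using h3
      have e3 : c 0 1 = 0 := by simpa [hb1, hb3] using k2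
      have e4 : c 1 0 = 0 := by simpa [hb2, hb3] using k3
      simp [e1, e2, e3, e4]
    · have e1 : a 0 1 = 0 := by simpa [hb1, hb2] using h1
      have e3 : c 0 1 = 0 := by simpa [hb1, hb2] using k1
      refine ⟨by simp [e1, e3], by simp [e1, e3], mul_left_cancel₀ hb2 ?_⟩
      linear_combination a 1 0 * k3 + c 1 0 * h3
  · refine ⟨mul_left_cancel₀ hb1 ?_, mul_left_cancel₀ hb1 ?_, mul_left_cancel₀ hb1 ?_⟩
    · linear_combination a 0 1 * k1 + c 0 1 * h1
    · linear_combination a 0 1 * k2 + c 0 1 * h2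
    · linear_combination a 1 0 * k2 - (a 0 0 - a 1 1) * k1 + c 0 1 * h3

lemma trace_conj (g y : SL2 F) :
    (g * y * g⁻¹) 0 0 + (g * y * g⁻¹) 1 1 = y 0 0 + y 1 1 := by
  have := det_eq g
  simp only [mul00, mul01, mul10, mul11, inv00, inv01, inv10, inv11]
  linear_combination (y 0 0 + y 1 1) * this

/-- If the characteristic polynomial of `y` has no root, then a conjugate of `y` that commutes
with `y` is `y` or `y⁻¹`. -/
lemma conj_eq_or_inv {y : SL2 F} (hy : ∀ x : F, x ^ 2 - (y 0 0 + y 1 1) * x + 1 ≠ 0)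
    (g : SL2 F) (h : Commute (g * y * g⁻¹) y) : g * y * g⁻¹ = y ∨ g * y * g⁻¹ = y⁻¹ := by
  have ht := trace_conj g y
  generalize g * y * g⁻¹ = z at *
  obtain ⟨h1, h2, h3⟩ := (commute_iff _ _).1 h
  have dz := det_eq z
  have dy := det_eq y
  have hc : y 1 0 ≠ 0 := by
    intro h0
    apply hy (y 0 0)
    rw [h0] at dy
    linear_combination -dy
  obtain ⟨β, hβ⟩ : ∃ β, z 1 0 = β * y 1 0 := ⟨z 1 0 / y 1 0, by field_simp⟩
  have hb : z 0 1 = β * y 0 1 := by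
    apply mul_right_cancel₀ hc; linear_combination h1 + y 0 1 * hβ
  have hd : z 0 0 - z 1 1 = β * (y 0 0 - y 1 1) := by
    apply mul_left_cancel₀ hc; linear_combination -h3 + (y 0 0 - y 1 1) * hβ
  obtain ⟨α, hα⟩ : ∃ α, z 0 0 = α + β * y 0 0 := ⟨z 0 0 - β * y 0 0, by ring⟩
  have hα' : z 1 1 = α + β * y 1 1 := by linear_combination -hd + hα
  set T := y 0 0 + y 1 1 with hT
  have e1 : 2 * α + β * T = T := by rw [hα, hα'] at ht; linear_combination ht
  have e2 : α ^ 2 + α * β * T + β ^ 2 = 1 := by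
    rw [hα, hα', hb, hβ] at dz
    linear_combination dz - β ^ 2 * dy
  have N : ∀ a c : F, a ^ 2 + a * c * T + c ^ 2 = 0 → a = 0 ∧ c = 0 := by
    intro a c hac
    by_cases hc0 : c = 0
    · subst hc0; simp at hac; exact ⟨hac, rfl⟩
    · exfalso
      apply hy (-a / c)
      field_simp
      linear_combination hac
  have hprod : (α ^ 2 + α * (β - 1) * T + (β - 1) ^ 2) *
      ((α - T) ^ 2 + (α - T) * (β + 1) * T + (β + 1) ^ 2) = 0 := by
    grind
  rcases mul_eq_zero.1 hprod with h0 | h0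
  · left
    obtain ⟨ha, hc⟩ := N _ _ h0
    have hb1 : β = 1 := sub_eq_zero.1 hc
    apply ext4
    · rw [hα, ha, hb1]; ring
    · rw [hb, hb1]; ring
    · rw [hβ, hb1]; ring
    · rw [hα', ha, hb1]; ring
  · right
    obtain ⟨ha, hc⟩ := N _ _ h0
    have ha : α = T := sub_eq_zero.1 ha
    have hb1 : β = -1 := eq_neg_of_add_eq_zero_left hc
    apply ext4
    · rw [inv00, hα, ha, hb1, hT]; ring
    · rw [inv01, hb, hb1]; ring
    · rw [inv10, hβ, hb1]; ring
    · rw [inv11, hα', ha, hb1, hT]; ring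

end Basics

section Line

variable {F : Type*} [Field F] [DecidableEq F]

/-- The action of `SL(2,F)` on the projective line by Möbius transformations. -/
instance lineAction : MulAction (SL2 F) (OnePoint F) :=
  MulAction.compHom _ (Matrix.SpecialLinearGroup.toGL (n := Fin 2) (R := F))

lemma smul_inf (g : SL2 F) :
    g • (∞ : OnePoint F) = if g 1 0 = 0 then ∞ else ((g 0 0 / g 1 0 : F) : OnePoint F) :=
  smul_infty_eq_ite _

lemma smul_coe (g : SL2 F) (t : F) :
    g • (t : OnePoint F) =
      if g 1 0 * t + g 1 1 = 0 then ∞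
      else (((g 0 0 * t + g 0 1) / (g 1 0 * t + g 1 1) : F) : OnePoint F) :=
  smul_some_eq_ite

lemma fix_inf (g : SL2 F) : g • (∞ : OnePoint F) = ∞ ↔ g 1 0 = 0 := by
  rw [smul_inf]; simp

lemma fix_coe (g : SL2 F) (t : F) :
    g • (t : OnePoint F) = t ↔ g 1 0 * t ^ 2 + (g 1 1 - g 0 0) * t - g 0 1 = 0 := by
  have hd := det_eq g
  rw [smul_coe]
  split_ifs with h
  · constructor
    · intro h'; exact absurd h'.symm (OnePoint.coe_ne_infty t)
    · intro h'
      exfalso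
      have h2 : g 0 0 * t + g 0 1 = 0 := by linear_combination t * h - h'
      have : (1 : F) = 0 := by
        rw [← hd]
        by_cases ht : t = 0
        · subst ht; simp at h h2; rw [h, h2]; ring
        · apply mul_left_cancel₀ ht; linear_combination g 1 1 * h2 - g 0 1 * h
      exact one_ne_zero this
  · rw [OnePoint.coe_eq_coe, div_eq_iff h]
    constructor
    · intro h'; linear_combination -h'
    · intro hroot; linear_combination -hroot

/-- The number of fixed points of `g` on the projective line. -/
noncomputable def fx (g : SL2 F) : ℕ := (MulAction.fixedBy (OnePoint F) g).ncard

lemma mem_fixedBy' {g : SL2 F} {o : OnePoint F} :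
    o ∈ MulAction.fixedBy (OnePoint F) g ↔ g • o = o := Iff.rfl

instance finiteLine [Finite F] : Finite (OnePoint F) := inferInstanceAs (Finite (Option F))

lemma card_line [Finite F] : Nat.card (OnePoint F) = Nat.card F + 1 := Finite.card_option

variable [Finite F]

lemma fx_eq_zero {g : SL2 F} : fx g = 0 ↔ ∀ o : OnePoint F, g • o ≠ o := by
  rw [fx, Set.ncard_eq_zero (Set.toFinite _), Set.eq_empty_iff_forall_notMem]
  rfl

lemma fx_center {g : SL2 F} (hg : g ∈ Subgroup.center (SL2 F)) : fx g = Nat.card F + 1 := by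
  rw [mem_center] at hg
  have : MulAction.fixedBy (OnePoint F) g = Set.univ := by
    rw [Set.eq_univ_iff_forall]
    intro o
    rw [mem_fixedBy']
    induction o using OnePoint.rec with
    | infty => rw [fix_inf]; exact hg.2.1
    | coe t => rw [fix_coe, hg.1, hg.2.1, hg.2.2]; ring
  rw [fx, this, Set.ncard_univ]
  exact card_line

lemma charpoly_ne {y : SL2 F} (hy : fx y = 0) (x : F) :
    x ^ 2 - (y 0 0 + y 1 1) * x + 1 ≠ 0 := by
  intro hx
  have hd := det_eq y
  rw [fx_eq_zero] at hy
  have hc : y 1 0 ≠ 0 := fun h => hy ∞ ((fix_inf y).2 h)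
  apply hy (((x - y 1 1) / y 1 0 : F) : OnePoint F)
  rw [fix_coe]
  field_simp
  linear_combination hx + hd

lemma fx_zero_notMem {y : SL2 F} (hy : fx y = 0) : y ∉ Subgroup.center (SL2 F) := by
  intro h
  rw [fx_center h] at hy
  omega

lemma fx_conj (g y : SL2 F) : fx (g * y * g⁻¹) = fx y := by
  rw [fx, fx]
  have : MulAction.fixedBy (OnePoint F) (g * y * g⁻¹) =
      (fun o => g • o) '' MulAction.fixedBy (OnePoint F) y := by
    ext o
    simp only [mem_fixedBy', Set.mem_image]
    constructor
    · intro h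
      refine ⟨g⁻¹ • o, ?_, by simp⟩
      rw [mul_smul, mul_smul] at h
      rw [eq_inv_smul_iff]; exact h
    · rintro ⟨o, h, rfl⟩
      simp [mul_smul, h]
  rw [this, Set.ncard_image_of_injective _ (MulAction.injective g)]

/-- Commuting noncentral elements have the same fixed points. -/
lemma fix_of_commute {a b : SL2 F} (ha : a ∉ Subgroup.center (SL2 F)) (h : Commute a b)
    {o : OnePoint F} (ho : a • o = o) : b • o = o := by
  rw [mem_center] at ha
  obtain ⟨h1, h2, h3⟩ := (commute_iff _ _).1 h
  induction o using OnePoint.rec with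
  | infty =>
    rw [fix_inf] at *
    rw [ho] at h1 h3
    by_contra hb
    have e1 : a 0 1 = 0 := by simpa [hb] using h1
    have e2 : a 0 0 - a 1 1 = 0 := by simpa [hb] using h3
    exact ha ⟨e1, ho, sub_eq_zero.1 e2⟩
  | coe t =>
    rw [fix_coe] at *
    by_cases h10 : a 1 0 = 0
    · by_cases hd : a 0 0 - a 1 1 = 0
      · exfalso
        refine ha ⟨?_, h10, sub_eq_zero.1 hd⟩
        linear_combination -ho + t ^ 2 * h10 - t * hd
      · apply mul_left_cancel₀ hd
        linear_combination (b 0 0 - b 1 1) * ho - t ^ 2 * h3 + h2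
    · apply mul_left_cancel₀ h10
      linear_combination b 1 0 * ho - t * h3 + h1

lemma fx_commute {a b : SL2 F} (ha : a ∉ Subgroup.center (SL2 F))
    (hb : b ∉ Subgroup.center (SL2 F)) (h : Commute a b) : fx a = fx b := by
  rw [fx, fx]
  congr 1
  ext o
  exact ⟨fun ho => fix_of_commute ha h ho, fun ho => fix_of_commute hb h.symm ho⟩

lemma fx_le_two {g : SL2 F} (hg : g ∉ Subgroup.center (SL2 F)) : fx g ≤ 2 := by
  rw [mem_center] at hg
  by_contra! hlt
  rw [fx, Set.two_lt_ncard_iff (Set.toFinite _)] at hlt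
  obtain ⟨x, y, z, hx, hy, hz, hxy, hxz, hyz⟩ := hlt
  rw [mem_fixedBy'] at hx hy hz
  -- three fixed finite points make the quadratic form vanish, and `∞` kills its top coefficient
  have two : ∀ s t : F, s ≠ t → g • (s : OnePoint F) = s → g • (t : OnePoint F) = t →
      g 1 0 * (s + t) + (g 1 1 - g 0 0) = 0 := by
    intro s t hst hs ht
    rw [fix_coe] at hs ht
    apply mul_left_cancel₀ (sub_ne_zero.2 hst)
    linear_combination hs - ht
  have inf : ∀ s t : F, s ≠ t → g • (∞ : OnePoint F) = ∞ → g • (s : OnePoint F) = s →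
      g • (t : OnePoint F) = t → False := by
    intro s t hst hi hs ht
    have h2 := two s t hst hs ht
    rw [fix_inf] at hi
    rw [fix_coe] at hs
    have h3 : g 1 1 - g 0 0 = 0 := by linear_combination h2 - (s + t) * hi
    exact hg ⟨by linear_combination -hs + s ^ 2 * hi + s * h3, hi, by linear_combination -h3⟩
  induction x using OnePoint.rec with
  | infty =>
    induction y using OnePoint.rec with
    | infty => exact hxy rfl
    | coe y =>
      induction z using OnePoint.rec with
      | infty => exact hxz rfl
      | coe z => exact inf y z (by simpa using hyz) hx hy hz
  | coe x =>
    induction y using OnePoint.rec with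
    | infty =>
      induction z using OnePoint.rec with
      | infty => exact hyz rfl
      | coe z => exact inf x z (by simpa using hxz) hy hx hz
    | coe y =>
      induction z using OnePoint.rec with
      | infty => exact inf x y (by simpa using hxy) hz hx hy
      | coe z =>
        have h1 := two x y (by simpa using hxy) hx hy
        have h2 := two x z (by simpa using hxz) hx hz
        have hyz : y - z ≠ 0 := sub_ne_zero.2 (by simpa using hyz)
        have h0 : g 1 0 = 0 := by
          apply mul_left_cancel₀ hyz
          linear_combination h1 - h2
        exact inf x y (by simpa using hxy) ((fix_inf g).2 h0) hx hy

end Line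

end SLTwo

namespace SLTwo

open OnePoint

/-! ### Orders, transitivity and Burnside's count -/

section Count

variable {F : Type*} [Field F] [DecidableEq F] [Finite F]

lemma card_subgroup_eq {S : Type*} [Group S] [Fintype S] (M : Subgroup S)
    [Fintype (M : Set S)] : Nat.card M = ((M : Set S).toFinset).card := by
  rw [← Set.ncard_eq_toFinset_card', ← Nat.card_coe_set_eq]; rfl

/-- Burnside's lemma on the projective line: `n₀` and `n₁` count the elements of `M` with no,
respectively exactly one, fixed point. -/
lemma burnside (M : Subgroup (SL2 F)) (hZ : Subgroup.center (SL2 F) ≤ M) :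
    2 * Nat.card M + Nat.card (Subgroup.center (SL2 F)) * Nat.card F =
      Nat.card (MulAction.orbitRel.Quotient M (OnePoint F)) * Nat.card M
        + 2 * {g | g ∈ M ∧ fx g = 0}.ncard + {g | g ∈ M ∧ fx g = 1}.ncard
        + Nat.card (Subgroup.center (SL2 F)) := by
  classical
  have := Fintype.ofFinite (SL2 F)
  have := Fintype.ofFinite F
  have : Fintype (MulAction.orbitRel.Quotient M (OnePoint F)) := Fintype.ofFinite _
  have hF : 2 ≤ Nat.card F := Finite.one_lt_card
  have hB := MulAction.sum_card_fixedBy_eq_card_orbits_mul_card_group M (OnePoint F)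
  have e1 : (∑ g ∈ (M : Set (SL2 F)).toFinset, fx g) =
      ∑ a : M, Fintype.card (MulAction.fixedBy (OnePoint F) a) := by
    have e0 : ∀ a : M, Fintype.card (MulAction.fixedBy (OnePoint F) a) = fx (a : SL2 F) := by
      intro a
      rw [fx, ← Nat.card_eq_fintype_card, Nat.card_coe_set_eq]; rfl
    simp_rw [e0]
    refine Finset.sum_subtype _ (fun x => by simp) _
  rw [← e1, ← Nat.card_eq_fintype_card, ← Nat.card_eq_fintype_card] at hB
  rw [← hB]
  have n0 : {g | g ∈ M ∧ fx g = 0}.ncard =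
      ∑ g ∈ (M : Set (SL2 F)).toFinset, if fx g = 0 then 1 else 0 := by
    rw [Set.ncard_eq_toFinset_card', ← Finset.card_filter]
    congr 1; ext; simp
  have n1 : {g | g ∈ M ∧ fx g = 1}.ncard =
      ∑ g ∈ (M : Set (SL2 F)).toFinset, if fx g = 1 then 1 else 0 := by
    rw [Set.ncard_eq_toFinset_card', ← Finset.card_filter]
    congr 1; ext; simp
  have nz : Nat.card (Subgroup.center (SL2 F)) =
      ∑ g ∈ (M : Set (SL2 F)).toFinset, if g ∈ Subgroup.center (SL2 F) then 1 else 0 := by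
    rw [card_subgroup_eq, ← Finset.card_filter]
    congr 1; ext g
    simp only [Set.mem_toFinset, SetLike.mem_coe, Finset.mem_filter]
    exact ⟨fun h => ⟨hZ h, h⟩, fun h => h.2⟩
  have nM : Nat.card M = ∑ g ∈ (M : Set (SL2 F)).toFinset, 1 := by
    rw [card_subgroup_eq]; simp
  rw [n0, n1, nz, nM, Finset.mul_sum, Finset.sum_mul, Finset.mul_sum, ← Finset.sum_add_distrib,
    ← Finset.sum_add_distrib, ← Finset.sum_add_distrib, ← Finset.sum_add_distrib]
  refine Finset.sum_congr rfl fun g _ => ?_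
  by_cases hg : g ∈ Subgroup.center (SL2 F)
  · rw [fx_center hg, if_pos hg, if_neg (by omega), if_neg (by omega)]; omega
  · have := fx_le_two hg
    rw [if_neg hg]
    interval_cases fx g <;> simp

lemma w_inf : (w : SL2 F) • (∞ : OnePoint F) = ((0 : F) : OnePoint F) := by
  rw [smul_inf]; simp [w]

lemma u_coe (x t : F) : u x • (t : OnePoint F) = ((t + x : F) : OnePoint F) := by
  rw [smul_coe]; simp [u]

lemma u_inf (x : F) : u x • (∞ : OnePoint F) = ∞ := by
  rw [fix_inf]; simp [u]

lemma line_trans (o : OnePoint F) : ∃ g : SL2 F, g • (∞ : OnePoint F) = o := by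
  induction o using OnePoint.rec with
  | infty => exact ⟨1, one_smul _ _⟩
  | coe t => exact ⟨u t * w, by rw [mul_smul, w_inf, u_coe, zero_add]⟩

instance : MulAction.IsPretransitive (SL2 F) (OnePoint F) :=
  MulAction.IsPretransitive.mk fun a b => by
    obtain ⟨g, hg⟩ := line_trans a
    obtain ⟨k, hk⟩ := line_trans b
    exact ⟨k * g⁻¹, by rw [mul_smul, ← hg, inv_smul_smul, hk]⟩

/-- The stabilizer of `∞`, that is, the upper triangular matrices. -/
abbrev borel (F : Type*) [Field F] [DecidableEq F] : Subgroup (SL2 F) :=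
  MulAction.stabilizer (SL2 F) (∞ : OnePoint F)

lemma mem_borel {g : SL2 F} : g ∈ borel F ↔ g 1 0 = 0 := fix_inf g

lemma u_mem_borel (x : F) : u x ∈ borel F := mem_borel.2 rfl

/-- The Borel subgroup is maximal, because it is transitive on the affine line. -/
lemma eq_top_of_borel_le {M : Subgroup (SL2 F)} (hM : borel F ≤ M) {g : SL2 F} (hg : g ∈ M)
    (hgb : g ∉ borel F) : M = ⊤ := by
  rw [eq_top_iff]
  intro k _
  by_cases hk : k ∈ borel F
  · exact hM hk
  have e1 := smul_inf g
  have e2 := smul_inf k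
  rw [mem_borel] at hgb hk
  rw [if_neg hgb] at e1
  rw [if_neg hk] at e2
  have h3 : k⁻¹ * (u (k 0 0 / k 1 0 - g 0 0 / g 1 0) * g) ∈ borel F := by
    rw [MulAction.mem_stabilizer_iff, mul_smul, mul_smul, inv_smul_eq_iff, e1, e2, u_coe]
    congr 1; ring
  have h4 := M.mul_mem (M.mul_mem (hM (u_mem_borel (k 0 0 / k 1 0 - g 0 0 / g 1 0))) hg) (M.inv_mem (hM h3))
  have e : u (k 0 0 / k 1 0 - g 0 0 / g 1 0) * g *
      (k⁻¹ * (u (k 0 0 / k 1 0 - g 0 0 / g 1 0) * g))⁻¹ = k := by group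
  rwa [e] at h4

lemma borel_coatom : IsCoatom (borel F) := by
  refine ⟨fun h => ?_, fun M hM => ?_⟩
  · have : (w : SL2 F) ∈ borel F := by rw [h]; trivial
    rw [mem_borel] at this
    simp [w] at this
  · obtain ⟨g, hg, hgb⟩ := SetLike.exists_of_lt hM
    exact eq_top_of_borel_le hM.le hg hgb

lemma card_borel : Nat.card (borel F) = Nat.card F * (Nat.card F - 1) := by
  have e : borel F ≃ F × Fˣ :=
    { toFun := fun g => (g.1 0 1, ⟨g.1 0 0, g.1 1 1, by
          have := det_eq g.1; rw [mem_borel.1 g.2] at this; linear_combination this, by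
          have := det_eq g.1; rw [mem_borel.1 g.2] at this; linear_combination this⟩)
      invFun := fun p => ⟨mk p.2 p.1 0 (p.2⁻¹ : Fˣ) (by simp), mem_borel.2 (by simp)⟩
      left_inv := fun g => Subtype.ext (ext4 rfl rfl (by simp [mem_borel.1 g.2]) rfl)
      right_inv := fun p => by ext <;> simp }
  rw [Nat.card_congr e, Nat.card_prod, Nat.card_units]

lemma card_SL2 : Nat.card (SL2 F) = (Nat.card F + 1) * (Nat.card F * (Nat.card F - 1)) := by
  have h := Subgroup.card_mul_index (borel F)
  rw [MulAction.index_stabilizer_of_transitive] at h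
  rw [← card_borel, ← card_line (F := F), mul_comm, h]

end Count

section Center

variable {F : Type*} [Field F] [Finite F]

/-- The negative of the identity matrix. -/
def nOne : SL2 F := mk (-1) 0 0 (-1) (by ring)

lemma mem_center' {g : SL2 F} : g ∈ Subgroup.center (SL2 F) ↔ g = 1 ∨ g = nOne := by
  rw [mem_center]
  constructor
  · rintro ⟨h1, h2, h3⟩
    have hd := det_eq g
    rw [h1, h3] at hd
    have : (g 1 1 - 1) * (g 1 1 + 1) = 0 := by linear_combination hd
    rcases mul_eq_zero.1 this with h | h
    · left
      have h : g 1 1 = 1 := sub_eq_zero.1 h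
      exact ext4 (by rw [h3, h, one00]) (by rw [h1, one01]) (by rw [h2, one10]) (by rw [h, one11])
    · right
      have h : g 1 1 = -1 := eq_neg_of_add_eq_zero_left h
      exact ext4 (by rw [h3, h]; rfl) (by rw [h1]; rfl) (by rw [h2]; rfl) (by rw [h]; rfl)
  · rintro (rfl | rfl)
    · simp
    · simp [nOne]

lemma center_set : (Subgroup.center (SL2 F) : Set (SL2 F)) = {1, nOne} := by
  ext g; simpa using mem_center'

lemma card_center_one (h2 : (2 : F) = 0) : Nat.card (Subgroup.center (SL2 F)) = 1 := by
  have : (nOne : SL2 F) = 1 := ext4 (by simp [nOne]; grind) rfl rfl (by simp [nOne]; grind)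
  have h := center_set (F := F)
  rw [this] at h
  rw [← SetLike.coe_sort_coe, h]; simp

lemma card_center_two (h2 : (2 : F) ≠ 0) : Nat.card (Subgroup.center (SL2 F)) = 2 := by
  have : (1 : SL2 F) ≠ nOne := by
    intro h
    have := congrArg (fun m : SL2 F => m 0 0) h
    simp [nOne] at this
    grind
  rw [← SetLike.coe_sort_coe, center_set, Nat.card_coe_set_eq, Set.ncard_pair this]

lemma two_eq_zero_iff : (2 : F) = 0 ↔ Even (Nat.card F) := by
  have := Fintype.ofFinite F
  have h := FiniteField.even_card_iff_char_two (F := F)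
  rw [Nat.card_eq_fintype_card, Nat.even_iff, ← h]
  constructor
  · intro h2; exact (CharP.ringChar_of_prime_eq_zero Nat.prime_two (by exact_mod_cast h2))
  · intro h2
    have := ringChar.Nat.cast_ringChar (R := F)
    rw [h2] at this; exact_mod_cast this

end Center

end SLTwo

namespace SLTwo

open OnePoint

/-! ### Fixed-point-free classes and the split torus -/

section ClassData

variable {F : Type*} [Field F] [DecidableEq F] [Finite F]

/-- The elements of `M` without fixed points on the projective line. -/
def N0 (M : Subgroup (SL2 F)) : Set (SL2 F) := {g | g ∈ M ∧ fx g = 0}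

lemma cls_subset {M : Subgroup (SL2 F)} {y : SL2 F} (hy : fx y = 0) : cls M y ⊆ N0 M := by
  rintro z ⟨hz, hzc, g, _, hc⟩
  refine ⟨hz, ?_⟩
  rw [← fx_conj g z, fx_commute (conj_notMem_center hzc g) (fx_zero_notMem hy) hc, hy]

lemma self_mem_cls {M : Subgroup (SL2 F)} {y : SL2 F} (hyM : y ∈ M) (hy : fx y = 0) :
    y ∈ cls M y :=
  ⟨hyM, fx_zero_notMem hy, 1, M.one_mem, by simp⟩

/-- The size of the class of a fixed-point-free element, in terms of the order `d * f` of its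
centralizer and the index `s` of that centralizer in the normalizer. -/
lemma class_data {M : Subgroup (SL2 F)} (hZ : Subgroup.center (SL2 F) ≤ M) {y : SL2 F}
    (hyM : y ∈ M) (hy : fx y = 0) :
    ∃ f s : ℕ, 2 ≤ f ∧ (s = 1 ∨ s = 2) ∧
      (cls M y).ncard * (s * f) + Nat.card M = f * Nat.card M := by
  have h1 := cls_count ct M hZ hyM (fx_zero_notMem hy)
  obtain ⟨f, hf⟩ := cen_dvd M hZ y
  have h2 := cen_lt M hZ hyM (fx_zero_notMem hy)
  have hd : 0 < Nat.card (Subgroup.center (SL2 F)) := Nat.card_pos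
  rw [hf] at h1 h2
  have hf2 : 2 ≤ f := by
    by_contra! h
    interval_cases f <;> omega
  rcases nrm_card M (conj_eq_or_inv (charpoly_ne hy)) with h | h
  · refine ⟨f, 1, hf2, Or.inl rfl, ?_⟩
    rw [h, hf] at h1
    apply Nat.eq_of_mul_eq_mul_left hd
    linear_combination h1
  · refine ⟨f, 2, hf2, Or.inr rfl, ?_⟩
    rw [h, hf] at h1
    apply Nat.eq_of_mul_eq_mul_left hd
    linear_combination h1

lemma class_ge {c f s m : ℕ} (hf : 2 ≤ f) (hs : s = 1 ∨ s = 2) (h : c * (s * f) + m = f * m) :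
    m ≤ 2 * s * c := by
  obtain ⟨f, rfl⟩ := Nat.exists_eq_add_of_le hf
  have : (2 + f) * m ≤ (2 + f) * (2 * s * c) := by nlinarith
  exact Nat.le_of_mul_le_mul_left this (by omega)

/-- A fixed-point-free element outside `cls M y` gives a further class. -/
lemma disjoint_class {M : Subgroup (SL2 F)} {y y' : SL2 F} (hy'M : y' ∈ M) (hy' : fx y' = 0)
    (h : y' ∉ cls M y) : Disjoint (cls M y) (cls M y') :=
  cls_disjoint ct M hy'M (fx_zero_notMem hy') h

end ClassData

section Split

variable {F : Type*} [Field F]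

lemma u_mul (x y : F) : u x * u y = u (x + y) := by
  apply ext4 <;> simp [mul00, mul01, mul10, mul11, u]
  ring

lemma u_zero : u (0 : F) = 1 := by
  apply ext4 <;> simp [u]

lemma u_inv (x : F) : (u x)⁻¹ = u (-x) := by
  apply ext4 <;> simp [inv00, inv01, inv10, inv11, u]

lemma hh_conj_u (a : Fˣ) (x : F) : hh a * u x * (hh a)⁻¹ = u ((a : F) ^ 2 * x) := by
  apply ext4 <;> simp [mul00, mul01, mul10, mul11, inv00, inv01, inv10, inv11, u, hh]
  ring

variable [Finite F]

/-- A nontrivial subgroup of `u F` normalized by the split torus is all of `u F`, because the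
squares generate the field additively. -/
lemma u_all {M : Subgroup (SL2 F)} (hT : ∀ a : Fˣ, hh a ∈ M) {x : F} (hx : x ≠ 0)
    (hux : u x ∈ M) (y : F) : u y ∈ M := by
  have hsq : ∀ a : F, u (a ^ 2 * x) ∈ M := by
    intro a
    by_cases ha : a = 0
    · subst ha; simpa [u_zero] using M.one_mem
    · have := M.mul_mem (M.mul_mem (hT (Units.mk0 a ha)) hux) (M.inv_mem (hT (Units.mk0 a ha)))
      rw [hh_conj_u] at this
      simpa using this
  by_cases h2 : (2 : F) = 0
  · have hch : ringChar F = 2 := CharP.ringChar_of_prime_eq_zero Nat.prime_two (by exact_mod_cast h2)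
    have := FiniteField.isSquare_of_char_two hch (y / x)
    obtain ⟨a, ha⟩ := this
    have h3 := hsq a
    have : a ^ 2 * x = y := by rw [pow_two, ← ha]; field_simp
    rwa [this] at h3
  · have h3 := M.mul_mem (hsq ((y / x + 1) / 2)) (M.inv_mem (hsq ((y / x - 1) / 2)))
    rw [u_inv, u_mul] at h3
    have : ((y / x + 1) / 2) ^ 2 * x + -(((y / x - 1) / 2) ^ 2 * x) = y := by
      field_simp; ring
    rwa [this] at h3

lemma borel_decomp {g : SL2 F} (a : Fˣ) (ha : g 0 0 = a) (h : g 1 0 = 0) :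
    g = u (g 0 1 * a) * hh a := by
  have hd := det_eq g
  have h11 : g 1 1 = ((a⁻¹ : Fˣ) : F) := by
    rw [h, ha] at hd
    rw [Units.val_inv_eq_inv_val]
    exact eq_inv_of_mul_eq_one_left (by linear_combination hd)
  apply ext4 <;> simp [mul00, mul01, mul10, mul11, u, hh, ha, h, h11]

variable [DecidableEq F]

lemma borel_le {M : Subgroup (SL2 F)} (hT : ∀ a : Fˣ, hh a ∈ M) (hu : ∀ x, u x ∈ M) :
    borel F ≤ M := by
  intro g hg
  rw [mem_borel] at hg
  have h0 : g 0 0 ≠ 0 := by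
    intro h0
    have := det_eq g
    rw [hg, h0] at this; simp at this
  rw [borel_decomp (Units.mk0 _ h0) rfl hg]
  exact M.mul_mem (hu _) (hT _)

lemma nOne_eq : (nOne : SL2 F) = hh (-1) := by
  apply ext4 <;> simp [nOne, hh]

lemma center_le_of_T {M : Subgroup (SL2 F)} (hT : ∀ a : Fˣ, hh a ∈ M) :
    Subgroup.center (SL2 F) ≤ M := by
  intro g hg
  rcases mem_center'.1 hg with rfl | rfl
  · exact M.one_mem
  · rw [nOne_eq]; exact hT _

/-- A nonempty set of nonzero field elements stable under multiplication by squares has at least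
`(q - 1) / 2` elements. -/
lemma sq_stable (Y : Set F) (hY : ∀ y ∈ Y, ∀ a : Fˣ, (a : F) ^ 2 * y ∈ Y) {y : F} (hy : y ∈ Y)
    (hy0 : y ≠ 0) : Nat.card F - 1 ≤ 2 * Y.ncard := by
  classical
  have := Fintype.ofFinite F
  have hmaps : ∀ a ∈ (Finset.univ : Finset Fˣ), (a : F) ^ 2 * y ∈ Y.toFinset := by
    intro a _
    simpa using hY y hy a
  have hfib : ∀ b ∈ Y.toFinset,
      (Finset.univ.filter fun a : Fˣ => (a : F) ^ 2 * y = b).card ≤ 2 := by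
    intro b _
    by_contra! hlt
    obtain ⟨a₁, h1, a₂, h2, a₃, h3, h12, h13, h23⟩ := Finset.two_lt_card.1 hlt
    simp only [Finset.mem_filter, Finset.mem_univ, true_and] at h1 h2 h3
    have e2 : (a₂ : F) = -a₁ := by
      have : (a₂ : F) ^ 2 = (a₁ : F) ^ 2 := mul_right_cancel₀ hy0 (h2.trans h1.symm)
      rcases sq_eq_sq_iff_eq_or_eq_neg.1 this with h | h
      · exact absurd (Units.ext h).symm h12
      · exact h
    have e3 : (a₃ : F) = -a₁ := by
      have : (a₃ : F) ^ 2 = (a₁ : F) ^ 2 := mul_right_cancel₀ hy0 (h3.trans h1.symm)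
      rcases sq_eq_sq_iff_eq_or_eq_neg.1 this with h | h
      · exact absurd (Units.ext h).symm h13
      · exact h
    exact h23 (Units.ext (e2.trans e3.symm))
  have := Finset.card_le_mul_card_image_of_maps_to hmaps 2 hfib
  rw [Finset.card_univ, ← Nat.card_eq_fintype_card, Nat.card_units] at this
  rwa [Set.ncard_eq_toFinset_card']

end Split

end SLTwo

namespace SLTwo

open OnePoint

/-! ### Overgroups of the normalizer of a split torus -/

section SplitLemma

lemma num_two_classes {q f₁ f₂ : ℕ} (hq : 5 ≤ q) (h1 : 2 ≤ f₁) (h2 : f₁ ≤ f₂)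
    (h : (q - 1) * (f₁ * f₂) = (q + 1) * (f₁ + f₂)) : q = 5 ∨ q = 7 ∨ q = 11 := by
  obtain ⟨a, rfl⟩ := Nat.exists_eq_add_of_le hq
  rw [show 5 + a - 1 = 4 + a by omega] at h
  have hf : f₁ ≤ 3 := by
    have h3 : (4 + a) * f₁ * f₂ ≤ 2 * (6 + a) * f₂ := by nlinarith
    have h4 := Nat.le_of_mul_le_mul_right h3 (by omega)
    by_contra! hlt
    nlinarith
  interval_cases f₁
  · have h3 : (a + 2) * f₂ = 2 * (a + 6) := by nlinarith
    have h4 : (a + 2) ∣ 8 := by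
      have : (a + 2) ∣ 2 * (a + 2) + 8 := ⟨f₂, by linarith⟩
      exact (Nat.dvd_add_right (Dvd.intro_left 2 rfl)).1 this
    have h5 := Nat.le_of_dvd (by norm_num) h4
    have : a ≤ 6 := by omega
    interval_cases a <;> simp_all <;> omega
  · left; nlinarith

lemma num_one_class {q f s : ℕ} (hq : 5 ≤ q) (hf : 2 ≤ f) (hs : s = 1 ∨ s = 2)
    (h : (q + 3) * (s * f) + 2 * (q + 1) = f * (2 * (q + 1))) : q = 5 := by
  rcases hs with rfl | rfl
  · have h1 : f * q = 2 * q + 2 + f := by nlinarith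
    have h2 : f ≤ 3 := by by_contra! h; nlinarith
    interval_cases f <;> omega
  · nlinarith

variable {F : Type*} [Field F] [DecidableEq F] [Finite F]

/-- The arithmetic of the fixed-point-free classes in a transitive subgroup of order `q² - 1`. -/
lemma split_transitive {M : Subgroup (SL2 F)} (hZ : Subgroup.center (SL2 F) ≤ M)
    (hq : 5 ≤ Nat.card F) (hM : Nat.card M = (Nat.card F - 1) * (Nat.card F + 1))
    (hn : 2 * (N0 M).ncard = (Nat.card F - 1) * (Nat.card F + 3)) :
    Nat.card F = 5 ∨ Nat.card F = 7 ∨ Nat.card F = 11 := by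
  generalize Nat.card F = q at *
  have hfin : (N0 M).Finite := Set.toFinite _
  obtain ⟨y₁, hy₁⟩ : (N0 M).Nonempty := by
    rw [← Set.ncard_pos hfin]
    by_contra! h0
    have : (q - 1) * (q + 3) = 0 := by omega
    rcases Nat.mul_eq_zero.1 this with h | h <;> omega
  obtain ⟨f₁, s₁, hf₁, hs₁, hc₁⟩ := class_data hZ hy₁.1 hy₁.2
  have hg₁ := class_ge hf₁ hs₁ hc₁
  by_cases hall : cls M y₁ = N0 M
  · left
    rw [hall] at hc₁
    refine num_one_class hq hf₁ hs₁ ?_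
    apply Nat.eq_of_mul_eq_mul_left (show 0 < q - 1 by omega)
    rw [hM] at hc₁
    linear_combination 2 * hc₁ - s₁ * f₁ * hn
  obtain ⟨y₂, hy₂, hy₂'⟩ := Set.exists_of_ssubset ((cls_subset hy₁.2).ssubset_of_ne hall)
  obtain ⟨f₂, s₂, hf₂, hs₂, hc₂⟩ := class_data hZ hy₂.1 hy₂.2
  have hg₂ := class_ge hf₂ hs₂ hc₂
  have hdis := disjoint_class hy₂.1 hy₂.2 hy₂'
  have hsub : cls M y₁ ∪ cls M y₂ ⊆ N0 M := Set.union_subset (cls_subset hy₁.2) (cls_subset hy₂.2)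
  have hle := Set.ncard_le_ncard hsub hfin
  have hun := Set.ncard_union_eq hdis (Set.toFinite _) (Set.toFinite _)
  rw [hun] at hle
  obtain ⟨a, rfl⟩ := Nat.exists_eq_add_of_le hq
  rw [show 5 + a - 1 = 4 + a by omega] at hM hn
  have big : ¬ (3 * Nat.card M ≤ 4 * (N0 M).ncard) := by
    rw [hM]; nlinarith
  have hs₁ : s₁ = 2 := by
    rcases hs₁ with rfl | h
    · exfalso; apply big
      rcases hs₂ with rfl | rfl <;> omega
    · exact h
  have hs₂ : s₂ = 2 := by
    rcases hs₂ with rfl | h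
    · exfalso; apply big
      subst hs₁; omega
    · exact h
  subst hs₁ hs₂
  have hall2 : cls M y₁ ∪ cls M y₂ = N0 M := by
    by_contra hne
    obtain ⟨y₃, hy₃, hy₃'⟩ := Set.exists_of_ssubset (hsub.ssubset_of_ne hne)
    obtain ⟨f₃, s₃, hf₃, hs₃, hc₃⟩ := class_data hZ hy₃.1 hy₃.2
    have hg₃ := class_ge hf₃ hs₃ hc₃
    have hd1 := disjoint_class hy₃.1 hy₃.2 (fun h => hy₃' (Or.inl h))
    have hd2 := disjoint_class hy₃.1 hy₃.2 (fun h => hy₃' (Or.inr h))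
    have hun3 := Set.ncard_union_eq (hd1.union_left hd2) (Set.toFinite _) (Set.toFinite _)
    have hle3 := Set.ncard_le_ncard (Set.union_subset hsub (cls_subset hy₃.2)) hfin
    rw [hun3, hun] at hle3
    apply big
    rcases hs₃ with rfl | rfl <;> omega
  rw [hall2] at hun
  have key : (4 + a) * ((4 + a) * (f₁ * f₂)) = (4 + a) * ((6 + a) * (f₁ + f₂)) := by
    zify at *
    rw [hM] at hc₁ hc₂
    rw [hun] at hn
    linear_combination (f₁ * f₂ : ℤ) * hn - f₂ * hc₁ - f₁ * hc₂
  have key := Nat.eq_of_mul_eq_mul_left (by omega) key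
  have e1 : 5 + a - 1 = 4 + a := by omega
  have e2 : 5 + a + 1 = 6 + a := by omega
  rcases le_total f₁ f₂ with h | h
  · exact num_two_classes hq hf₁ h (by rw [e1, e2]; exact key)
  · exact num_two_classes hq hf₂ h (by rw [e1, e2, mul_comm f₂, add_comm f₂]; exact key)

/-- A proper subgroup containing the normalizer of the split torus is that normalizer, apart from
a few small exceptions. -/
lemma split_lemma (hq : 4 ≤ Nat.card F) {M : Subgroup (SL2 F)} (hT : ∀ a : Fˣ, hh a ∈ M)
    (hw : w ∈ M) (hM : M ≠ ⊤) :
    Nat.card M = 2 * (Nat.card F - 1) ∨ (Nat.card F = 9 ∧ Nat.card M = 48) ∨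
      ((Nat.card F = 5 ∨ Nat.card F = 7 ∨ Nat.card F = 11) ∧
        Nat.card M = (Nat.card F - 1) * (Nat.card F + 1)) := by
  have hZ := center_le_of_T hT
  have hu : ∀ x, u x ∈ M → x = 0 := by
    intro x hx
    by_contra hx0
    refine hM (eq_top_of_borel_le (borel_le hT (u_all hT hx0 hx)) hw ?_)
    rw [mem_borel]; simp [w]
  have hdiag : ∀ g ∈ M, g 1 0 = 0 → ∃ a : Fˣ, g = hh a := by
    intro g hg h
    have h0 : g 0 0 ≠ 0 := by
      intro h0
      have := det_eq g
      rw [h, h0] at this; simp at this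
    obtain ⟨a, ha⟩ : ∃ a : Fˣ, g 0 0 = a := ⟨Units.mk0 _ h0, rfl⟩
    have e := borel_decomp a ha h
    have h1 : u (g 0 1 * a) ∈ M := by
      rw [eq_mul_inv_of_mul_eq e.symm]
      exact M.mul_mem hg (M.inv_mem (hT a))
    rw [hu _ h1, u_zero, one_mul] at e
    exact ⟨_, e⟩
  -- the orbit of `∞`
  set O : Set (OnePoint F) := MulAction.orbit M (∞ : OnePoint F) with hO
  have hOmem : ∀ o, o ∈ O ↔ ∃ g ∈ M, g • (∞ : OnePoint F) = o := by
    intro o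
    constructor
    · rintro ⟨⟨g, hg⟩, h⟩; exact ⟨g, hg, h⟩
    · rintro ⟨g, hg, h⟩; exact ⟨⟨g, hg⟩, h⟩
  have hstab : Nat.card (MulAction.stabilizer M (∞ : OnePoint F)) = Nat.card F - 1 := by
    rw [← Nat.card_units]
    symm
    refine Nat.card_eq_of_bijective (fun a : Fˣ => (⟨⟨hh a, hT a⟩, ?_⟩ :
      MulAction.stabilizer M (∞ : OnePoint F))) ⟨?_, ?_⟩
    · exact (fix_inf (hh a)).2 (by simp [hh])
    · intro a b hab
      have := congrArg (fun m => (m.1.1 : SL2 F) 0 0) hab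
      exact Units.ext (by simpa [hh] using this)
    · rintro ⟨⟨g, hg⟩, hs⟩
      obtain ⟨a, rfl⟩ := hdiag g hg ((fix_inf g).1 hs)
      exact ⟨a, rfl⟩
  have hcard : Nat.card M = O.ncard * (Nat.card F - 1) := by
    rw [← hstab, ← Subgroup.card_mul_index (MulAction.stabilizer M (∞ : OnePoint F)),
      MulAction.index_stabilizer, mul_comm]
  set Y : Set F := {y | y ≠ 0 ∧ (y : OnePoint F) ∈ O} with hY
  have hOY : O = insert ∞ (insert ((0 : F) : OnePoint F) ((fun y : F => (y : OnePoint F)) '' Y)) := by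
    ext o
    induction o using OnePoint.rec with
    | infty =>
      simp only [Set.mem_insert_iff, true_or, iff_true]
      exact (hOmem _).2 ⟨1, M.one_mem, one_smul _ _⟩
    | coe t =>
      have h0 : ((0 : F) : OnePoint F) ∈ O := (hOmem _).2 ⟨w, hw, w_inf⟩
      by_cases ht : t = 0
      · subst ht; simp [h0]
      · simp [hY, ht]
  have hOc : O.ncard = Y.ncard + 2 := by
    rw [hOY, Set.ncard_insert_of_notMem, Set.ncard_insert_of_notMem,
      Set.ncard_image_of_injective _ OnePoint.coe_injective]
    · simp [hY]
    · simp
  have hstable : ∀ y : F, ∀ a : Fˣ, (y : OnePoint F) ∈ O → (((a : F) ^ 2 * y : F) : OnePoint F) ∈ O := by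
    intro y a hy
    obtain ⟨g, hg, hgy⟩ := (hOmem _).1 hy
    refine (hOmem _).2 ⟨hh a * g, M.mul_mem (hT a) hg, ?_⟩
    rw [mul_smul, hgy, smul_coe]
    simp [hh]
    ring
  have hstable' : ∀ y : F, ∀ a : Fˣ, (((a : F) ^ 2 * y : F) : OnePoint F) ∈ O → (y : OnePoint F) ∈ O := by
    intro y a hy
    have := hstable _ a⁻¹ hy
    have e : ((a⁻¹ : Fˣ) : F) ^ 2 * ((a : F) ^ 2 * y) = y := by
      rw [← mul_assoc, ← mul_pow]; simp
    rwa [e] at this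
  set Y' : Set F := {y | y ≠ 0 ∧ (y : OnePoint F) ∉ O} with hY'
  have hYY' : Y.ncard + Y'.ncard = Nat.card F - 1 := by
    rw [← Set.ncard_union_eq]
    · have : Y ∪ Y' = {0}ᶜ := by
        ext y; simp only [hY, hY', Set.mem_union, Set.mem_setOf_eq, Set.mem_compl_iff,
          Set.mem_singleton_iff]; tauto
      rw [this, Set.ncard_compl]; simp
    · rw [Set.disjoint_left]; rintro y ⟨_, h⟩ ⟨_, h'⟩; exact h' h
  have hYs : Y.ncard = 0 ∨ Nat.card F - 1 ≤ 2 * Y.ncard := by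
    rcases Set.eq_empty_or_nonempty Y with h | ⟨y, hy⟩
    · left; rw [h]; simp
    · right
      refine sq_stable Y ?_ hy hy.1
      rintro z ⟨hz, hz'⟩ a
      exact ⟨by simp [hz], hstable z a hz'⟩
  have hYs' : Y'.ncard = 0 ∨ Nat.card F - 1 ≤ 2 * Y'.ncard := by
    rcases Set.eq_empty_or_nonempty Y' with h | ⟨y, hy⟩
    · left; rw [h]; simp
    · right
      refine sq_stable Y' ?_ hy hy.1
      rintro z ⟨hz, hz'⟩ a
      exact ⟨by simp [hz], fun h => hz' (hstable' z a h)⟩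
  rcases hYs with h0 | hYs
  · left; rw [hcard, hOc, h0]
  rcases hYs' with h0' | hYs'
  · -- transitive case
    have hYq : Y.ncard = Nat.card F - 1 := by omega
    have hM1 : Nat.card M = (Nat.card F - 1) * (Nat.card F + 1) := by
      rw [hcard, hOc, hYq, mul_comm]; congr 1; omega
    right; right
    refine ⟨?_, hM1⟩
    have h2 : (2 : F) ≠ 0 := by
      intro h2
      have hev := two_eq_zero_iff.1 h2
      have hord : orderOf (⟨w, hw⟩ : M) = 2 := by
        refine orderOf_eq_prime ?_ ?_
        · apply Subtype.ext
          apply ext4 <;> simp [pow_two, mul00, mul01, mul10, mul11, w] <;> grind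
        · intro h
          have := congrArg (fun m : M => (m.1 : SL2 F) 0 0) h
          simp [w] at this
      have hdv := orderOf_dvd_natCard (⟨w, hw⟩ : M)
      rw [hord, hM1, Nat.prime_two.dvd_mul] at hdv
      obtain ⟨c, hc⟩ := hev
      omega
    have hodd : ¬ Even (Nat.card F) := fun h => h2 (two_eq_zero_iff.2 h)
    have hd := card_center_two h2
    have hO1 : ∀ o, o ∈ O := by
      have : O = Set.univ := by
        rw [Set.eq_univ_iff_ncard, hOc, hYq, card_line]; omega
      rw [this]; exact Set.mem_univ
    have horb : Nat.card (MulAction.orbitRel.Quotient M (OnePoint F)) = 1 := by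
      have : MulAction.IsPretransitive M (OnePoint F) :=
        (MulAction.isPretransitive_iff_base (∞ : OnePoint F)).2 (fun o => hO1 o)
      rw [Nat.card_eq_one_iff_unique]
      exact ⟨(MulAction.pretransitive_iff_subsingleton_quotient _ _).1 this, inferInstance⟩
    have hn1 : {g | g ∈ M ∧ fx g = 1}.ncard = 0 := by
      rw [Set.ncard_eq_zero]
      rw [Set.eq_empty_iff_forall_notMem]
      rintro g ⟨hg, hfx⟩
      obtain ⟨o, ho⟩ := Set.ncard_eq_one.1 hfx
      have hgo : g • o = o := by
        have : o ∈ MulAction.fixedBy (OnePoint F) g := by rw [ho]; rfl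
        exact this
      obtain ⟨k, hk, hko⟩ := (hOmem o).1 (hO1 o)
      have hfix : (k⁻¹ * g * k⁻¹⁻¹) • (∞ : OnePoint F) = ∞ := by
        rw [inv_inv, mul_smul, mul_smul, hko, hgo, inv_smul_eq_iff, hko]
      obtain ⟨a, ha⟩ := hdiag _ (M.mul_mem (M.mul_mem (M.inv_mem hk) hg) (M.inv_mem (M.inv_mem hk)))
        ((fix_inf _).1 hfix)
      have hfx' : fx (hh a) = 1 := by rw [← ha, fx_conj, hfx]
      have : 1 < fx (hh a) := by
        rw [fx, Set.one_lt_ncard]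
        refine ⟨∞, (fix_inf _).2 (by simp [hh]), ((0 : F) : OnePoint F),
          (fix_coe _ _).2 (by simp [hh]), OnePoint.infty_ne_coe _⟩
      omega
    have hB := burnside M hZ
    rw [horb, hn1, hd] at hB
    have hq5 : 5 ≤ Nat.card F := by
      rcases Nat.lt_or_ge 4 (Nat.card F) with h | h
      · exact h
      · exact absurd (by rw [le_antisymm h hq]; decide) hodd
    refine split_transitive hZ hq5 hM1 ?_
    change 2 * Nat.card M + 2 * Nat.card F = 1 * Nat.card M + 2 * (N0 M).ncard + 0 + 2 at hB
    rw [hM1] at hB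
    obtain ⟨a, ha⟩ := Nat.exists_eq_add_of_le hq5
    rw [ha] at hB ⊢
    rw [show 5 + a - 1 = 4 + a by omega] at *
    nlinarith
  · right; left
    have hYq : 2 * Y.ncard = Nat.card F - 1 := by omega
    have hdv := Subgroup.card_subgroup_dvd_card M
    rw [card_SL2, hcard, hOc] at hdv
    have hdv2 : (Nat.card F + 3) ∣ 12 := by
      have h1 : (Y.ncard + 2) ∣ (Nat.card F + 1) * Nat.card F := by
        refine Nat.dvd_of_mul_dvd_mul_right (show 0 < Nat.card F - 1 by omega) ?_
        rwa [mul_assoc]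
      have h2 : 2 * (Y.ncard + 2) ∣ 2 * ((Nat.card F + 1) * Nat.card F) := Nat.mul_dvd_mul_left 2 h1
      have h3 : 2 * (Y.ncard + 2) = Nat.card F + 3 := by omega
      rw [h3] at h2
      zify at h2 ⊢
      have h4 : (12 : ℤ) = 2 * (((Nat.card F : ℤ) + 1) * Nat.card F)
        - (Nat.card F + 3) * (2 * Nat.card F - 4) := by ring
      rw [h4]
      exact dvd_sub h2 (Dvd.intro _ rfl)
    have hle := Nat.le_of_dvd (by norm_num) hdv2
    have : Nat.card F = 9 := by
      have : Nat.card F ≤ 9 := by omega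
      interval_cases Nat.card F <;> omega
    refine ⟨this, ?_⟩
    rw [hcard, hOc]
    rw [this] at hYq ⊢
    have : Y.ncard = 4 := by omega
    rw [this]

end SplitLemma

end SLTwo

namespace SLTwo

open OnePoint

/-! ### Nonsplit tori -/

section Nonsplit

variable {F : Type*} [Field F]

/-- A matrix of trace `τ`. -/
def y0 (τ : F) : SL2 F := mk 0 (-1) 1 τ (by ring)

/-- The trace `τ` is that of an element without eigenvalues in `F`. -/
def NonsplitTrace (τ : F) : Prop := ∀ x : F, x ^ 2 + τ * x + 1 ≠ 0

lemma exists_nonsplit [Finite F] : ∃ τ : F, NonsplitTrace τ := by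
  have : ¬ Function.Surjective (fun a : Fˣ => -((a : F) + (a⁻¹ : Fˣ))) := by
    intro h
    have h1 := Nat.card_le_card_of_surjective _ h
    rw [Nat.card_units] at h1
    have : 0 < Nat.card F := Nat.card_pos
    omega
  simp only [Function.Surjective, not_forall, not_exists] at this
  obtain ⟨τ, hτ⟩ := this
  refine ⟨τ, fun x hx => ?_⟩
  have hx0 : x ≠ 0 := by rintro rfl; simp at hx
  apply hτ (Units.mk0 x hx0)
  simp only [Units.val_mk0, Units.val_inv_eq_inv_val]
  field_simp
  linear_combination -hx

lemma norm_eq_zero {τ : F} (hτ : NonsplitTrace τ) {a c : F} (h : a ^ 2 + τ * a * c + c ^ 2 = 0) :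
    a = 0 ∧ c = 0 := by
  by_cases hc : c = 0
  · subst hc; simp at h; exact ⟨h, rfl⟩
  · exfalso
    apply hτ (a / c)
    field_simp
    linear_combination h

lemma tau_ne_zero {τ : F} (hτ : NonsplitTrace τ) (h2 : (2 : F) = 0) : τ ≠ 0 := by
  rintro rfl
  apply hτ 1
  linear_combination h2

lemma fx_y0 [DecidableEq F] [Finite F] {τ : F} (hτ : NonsplitTrace τ) : fx (y0 τ) = 0 := by
  rw [fx_eq_zero]
  intro o
  induction o using OnePoint.rec with
  | infty => rw [Ne, fix_inf]; simp [y0]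
  | coe t =>
    rw [Ne, fix_coe]
    simp only [y0, mk00, mk01, mk10, mk11]
    intro h
    apply hτ t
    linear_combination h

lemma commute_y0 {τ : F} {g : SL2 F} :
    Commute g (y0 τ) ↔ g 0 1 = - g 1 0 ∧ g 1 1 = g 0 0 + τ * g 1 0 := by
  rw [commute_iff]
  simp only [y0, mk00, mk01, mk10, mk11]
  constructor
  · rintro ⟨h1, h2, h3⟩
    exact ⟨by linear_combination h1, by linear_combination h3⟩
  · rintro ⟨h1, h2⟩
    refine ⟨?_, ?_, ?_⟩
    · linear_combination h1
    · rw [h1, h2]; ring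
    · rw [h2]; ring

/-- The element `a + c y0` of norm one. -/
def tor (τ a c : F) (h : a ^ 2 + τ * a * c + c ^ 2 = 1) : SL2 F :=
  mk a (-c) c (a + τ * c) (by linear_combination h)

/-- The lines through the base point `(1,0)` of the conic `a² + τ a c + c² = 1` parametrize its
points by the projective line. -/
lemma card_torus [Finite F] {τ : F} (hτ : NonsplitTrace τ) :
    Nat.card (cen ⊤ (y0 τ)) = Nat.card F + 1 := by
  have hD : ∀ m : F, m ^ 2 + τ * m + 1 ≠ 0 := hτ
  set s : F → F := fun m => -(2 * m + τ) / (m ^ 2 + τ * m + 1) with hs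
  have hsD : ∀ m, s m * (m ^ 2 + τ * m + 1) = -(2 * m + τ) := fun m => by
    simp only [hs]; exact div_mul_cancel₀ _ (hD m)
  have hs0 : ∀ m, s m = 0 → 2 * m + τ = 0 := by
    intro m h; have := hsD m; rw [h] at this; linear_combination this
  have hnorm : ∀ m, (1 + s m * m) ^ 2 + τ * (1 + s m * m) * s m + s m ^ 2 = 1 := by
    intro m; linear_combination s m * hsD m
  have hmem : ∀ a c h, tor τ a c h ∈ cen ⊤ (y0 τ) := by
    intro a c h
    exact mem_cen.2 ⟨trivial, commute_y0.2 ⟨rfl, rfl⟩⟩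
  have hcard : Nat.card (Option F) = Nat.card F + 1 := Finite.card_option
  rw [← hcard]
  symm
  refine Nat.card_eq_of_bijective (fun o : Option F => match o with
    | Option.none => (⟨tor τ (-1) 0 (by ring), hmem _ _ _⟩ : cen ⊤ (y0 τ))
    | Option.some m => ⟨tor τ (1 + s m * m) (s m) (hnorm m), hmem _ _ _⟩) ⟨?_, ?_⟩
  · have hns : ∀ m : F, (-1 : F) = 1 + s m * m → (0 : F) = s m → False := by
      intro m h1 h2
      have h3 := hs0 m h2.symm
      rw [← h2] at h1
      have h20 : (2 : F) = 0 := by linear_combination -h1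
      apply tau_ne_zero hτ h20
      linear_combination h3 - m * h20
    rintro (_ | m) (_ | m') h
    · rfl
    · exfalso
      have e1 := congrArg (fun t : cen ⊤ (y0 τ) => (t.1 : SL2 F) 0 0) h
      have e2 := congrArg (fun t : cen ⊤ (y0 τ) => (t.1 : SL2 F) 1 0) h
      exact hns m' e1 e2
    · exfalso
      have e1 := congrArg (fun t : cen ⊤ (y0 τ) => (t.1 : SL2 F) 0 0) h
      have e2 := congrArg (fun t : cen ⊤ (y0 τ) => (t.1 : SL2 F) 1 0) h
      exact hns m e1.symm e2.symm
    · have e1 := congrArg (fun t : cen ⊤ (y0 τ) => (t.1 : SL2 F) 0 0) h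
      have e2 := congrArg (fun t : cen ⊤ (y0 τ) => (t.1 : SL2 F) 1 0) h
      simp only [tor, mk00, mk10] at e1 e2
      congr 1
      by_cases h0 : s m = 0
      · have h1 := hs0 m h0
        have h2 := hs0 m' (e2 ▸ h0)
        have h20 : (2 : F) ≠ 0 := fun h20 => tau_ne_zero hτ h20 (by linear_combination h1 - m * h20)
        apply mul_left_cancel₀ h20
        linear_combination h1 - h2
      · apply mul_left_cancel₀ h0
        rw [← e2] at e1
        linear_combination e1
  · rintro ⟨g, hg⟩
    obtain ⟨h01, h11⟩ := commute_y0.1 (mem_cen.1 hg).2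
    have hd := det_eq g
    rw [h01, h11] at hd
    by_cases hc : g 1 0 = 0
    · have hα : (g 0 0 - 1) * (g 0 0 + 1) = 0 := by rw [hc] at hd; linear_combination hd
      by_cases hneg : g 0 0 = -1
      · refine ⟨Option.none, Subtype.ext (ext4 ?_ ?_ ?_ ?_)⟩ <;> simp [tor, h01, h11, hc, hneg]
      · have h1 : g 0 0 = 1 := by
          rcases mul_eq_zero.1 hα with h | h
          · exact sub_eq_zero.1 h
          · exact absurd (eq_neg_of_add_eq_zero_left h) hneg
        have h20 : (2 : F) ≠ 0 := fun h20 => hneg (by rw [h1]; linear_combination h20)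
        have hsm : s (-τ / 2) = 0 := by
          simp only [hs]
          have : 2 * (-τ / 2) + τ = 0 := by field_simp; ring
          rw [this]; simp
        refine ⟨Option.some (-τ / 2), Subtype.ext (ext4 ?_ ?_ ?_ ?_)⟩ <;>
          simp [tor, h01, h11, hc, h1, hsm]
    · have hsm : s ((g 0 0 - 1) / g 1 0) = g 1 0 := by
        have h1 := hsD ((g 0 0 - 1) / g 1 0)
        apply mul_right_cancel₀ (hD ((g 0 0 - 1) / g 1 0))
        rw [h1]
        field_simp
        linear_combination -hd
      have hm : g 1 0 * ((g 0 0 - 1) / g 1 0) = g 0 0 - 1 := by field_simp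
      refine ⟨Option.some ((g 0 0 - 1) / g 1 0), Subtype.ext (ext4 ?_ ?_ ?_ ?_)⟩ <;>
        simp [tor, h01, h11, hsm, hm]

lemma exists_norm_neg_one [Finite F] {τ : F} (hτ : NonsplitTrace τ) :
    ∃ a c : F, a ^ 2 + τ * a * c + c ^ 2 = -1 := by
  by_cases h2 : (2 : F) = 0
  · exact ⟨1, 0, by linear_combination h2⟩
  · have := Fintype.ofFinite F
    have h4 : (1 - τ ^ 2 / 4 : F) ≠ 0 := by
      intro h
      apply hτ (-τ / 2)
      field_simp
      have h44 : (4 : F) ≠ 0 := by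
        intro h4; apply h2; have : (2 : F) * 2 = 0 := by linear_combination h4
        simpa using this
      field_simp at h
      linear_combination h
    have hodd : Fintype.card F % 2 = 1 := by
      have h := two_eq_zero_iff (F := F)
      rw [Nat.card_eq_fintype_card, Nat.even_iff] at h
      by_contra hne
      exact h2 (h.2 (by omega))
    obtain ⟨x, c, hxc⟩ := FiniteField.exists_root_sum_quadratic
      (f := (Polynomial.C 1 * Polynomial.X ^ 2 + Polynomial.C 0 * Polynomial.X + Polynomial.C 0 : Polynomial F))
      (g := Polynomial.C (1 - τ ^ 2 / 4) * Polynomial.X ^ 2 + Polynomial.C 0 * Polynomial.X + Polynomial.C 1)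
      (Polynomial.degree_quadratic one_ne_zero) (Polynomial.degree_quadratic h4) hodd
    simp only [Polynomial.eval_add, Polynomial.eval_mul, Polynomial.eval_C, Polynomial.eval_pow,
      Polynomial.eval_X] at hxc
    refine ⟨x - τ * c / 2, c, ?_⟩
    have h44 : (4 : F) ≠ 0 := by
      intro h4; apply h2; have : (2 : F) * 2 = 0 := by linear_combination h4
      simpa using this
    field_simp at hxc ⊢
    linear_combination hxc

lemma exists_inverting [Finite F] {τ : F} (hτ : NonsplitTrace τ) :
    ∃ n : SL2 F, n * y0 τ * n⁻¹ = (y0 τ)⁻¹ := by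
  obtain ⟨a, c, h⟩ := exists_norm_neg_one hτ
  refine ⟨mk c (a + τ * c) a (-c) (by linear_combination -h), ?_⟩
  rw [mul_inv_eq_iff_eq_mul]
  apply ext4 <;> simp [mul00, mul01, mul10, mul11, inv00, inv01, inv10, inv11, y0] <;> ring

/-- The normalizer of the nonsplit torus. -/
def nonsplitNormalizer (τ : F) : Subgroup (SL2 F) where
  carrier := {g | g * y0 τ * g⁻¹ = y0 τ ∨ g * y0 τ * g⁻¹ = (y0 τ)⁻¹}
  one_mem' := by left; simp
  inv_mem' := by
    rintro g (h | h)
    · left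
      nth_rewrite 1 [← h]; group
    · right
      have h' : g * (y0 τ)⁻¹ * g⁻¹ = y0 τ := by
        have := congrArg (fun t => t⁻¹) h
        simpa [mul_assoc] using this
      nth_rewrite 1 [← h']; group
  mul_mem' := by
    intro g g' hg hg'
    have e : ∀ t, g * g' * t * (g * g')⁻¹ = g * (g' * t * g'⁻¹) * g⁻¹ := by intro t; group
    have hinv : ∀ t, g * t⁻¹ * g⁻¹ = (g * t * g⁻¹)⁻¹ := by intro t; group
    show _ ∨ _
    rw [e]
    rcases hg' with h' | h' <;> rw [h']
    · exact hg
    · rw [hinv]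
      rcases hg with h | h <;> rw [h]
      · right; rfl
      · left; simp

lemma mem_nonsplitNormalizer {τ : F} {g : SL2 F} : g ∈ nonsplitNormalizer τ ↔
    g * y0 τ * g⁻¹ = y0 τ ∨ g * y0 τ * g⁻¹ = (y0 τ)⁻¹ := Iff.rfl

variable [DecidableEq F] [Finite F]

lemma nrm_eq {τ : F} (hτ : NonsplitTrace τ) {M : Subgroup (SL2 F)}
    (hM : nonsplitNormalizer τ ≤ M) : nrm M (y0 τ) = (nonsplitNormalizer τ : Set (SL2 F)) := by
  ext g
  rw [mem_nrm, SetLike.mem_coe]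
  constructor
  · rintro ⟨_, h⟩
    exact conj_eq_or_inv (charpoly_ne (fx_y0 hτ)) g h
  · intro h
    refine ⟨hM h, ?_⟩
    rcases h with h | h
    · rw [h]; exact Commute.refl _
    · rw [h]; exact (Commute.refl (y0 τ)).inv_left

lemma cen_le_nonsplitNormalizer {τ : F} : cen ⊤ (y0 τ) ≤ nonsplitNormalizer τ := by
  intro g hg
  left
  rw [(mem_cen.1 hg).2.eq]; group

lemma card_cen_eq {τ : F} (hτ : NonsplitTrace τ) {M : Subgroup (SL2 F)}
    (hM : nonsplitNormalizer τ ≤ M) : Nat.card (cen M (y0 τ)) = Nat.card F + 1 := by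
  rw [← card_torus hτ]
  congr 2
  ext g
  rw [mem_cen, mem_cen]
  exact ⟨fun h => ⟨trivial, h.2⟩, fun h => ⟨hM (cen_le_nonsplitNormalizer (mem_cen.2 h)), h.2⟩⟩

lemma card_nonsplitNormalizer {τ : F} (hτ : NonsplitTrace τ) :
    Nat.card (nonsplitNormalizer τ) = 2 * (Nat.card F + 1) := by
  classical
  have e0 : Nat.card (nonsplitNormalizer τ) = (nrm ⊤ (y0 τ)).ncard := by
    rw [nrm_eq hτ le_top, ← Nat.card_coe_set_eq]; rfl
  rcases nrm_card ⊤ (conj_eq_or_inv (charpoly_ne (fx_y0 hτ))) with h | h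
  · -- the torus would be its own normalizer, but some element inverts it
    exfalso
    obtain ⟨n, hn⟩ := exists_inverting hτ
    have hsub : (cen ⊤ (y0 τ) : Set (SL2 F)) ⊆ nrm ⊤ (y0 τ) := by
      rw [nrm_eq hτ le_top]; exact cen_le_nonsplitNormalizer
    have heq := Set.eq_of_subset_of_ncard_le hsub (by
      rw [h, ← Nat.card_coe_set_eq (cen ⊤ (y0 τ) : Set (SL2 F))]; rfl) (Set.toFinite _)
    have hnm : n ∈ nrm ⊤ (y0 τ) := by
      rw [nrm_eq hτ le_top]; exact Or.inr hn
    rw [← heq] at hnm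
    have hc := (mem_cen.1 hnm).2
    rw [hc.eq, mul_inv_cancel_right] at hn
    have h00 := congrArg (fun m : SL2 F => m 0 0) hn
    have h10 := congrArg (fun m : SL2 F => m 1 0) hn
    simp [y0, inv00, inv10] at h00 h10
    apply hτ 1
    rw [← h00]
    linear_combination h10
  · rw [e0, h, card_torus hτ]

end Nonsplit

end SLTwo

namespace SLTwo

open OnePoint

/-! ### Subgroups containing the normalizer of a nonsplit torus -/

section NonsplitLemma

variable {F : Type*} [Field F]

/-- The translations contained in `M`. -/
def trans (M : Subgroup (SL2 F)) : AddSubgroup F where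
  carrier := {x | u x ∈ M}
  zero_mem' := by show u 0 ∈ M; rw [u_zero]; exact M.one_mem
  add_mem' := by
    intro a b ha hb
    show u (a + b) ∈ M
    rw [← u_mul]; exact M.mul_mem ha hb
  neg_mem' := by
    intro a ha
    show u (-a) ∈ M
    rw [← u_inv]; exact M.inv_mem ha

lemma mem_trans {M : Subgroup (SL2 F)} {x : F} : x ∈ trans M ↔ u x ∈ M := Iff.rfl

variable [DecidableEq F] [Finite F]

lemma center_u {z : SL2 F} (hz : z ∈ Subgroup.center (SL2 F)) (x : F) :
    (z * u x) 0 0 = z 0 0 ∧ (z * u x) 0 1 = z 0 0 * x ∧ (z * u x) 1 0 = 0 ∧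
      (z * u x) 1 1 = z 0 0 ∧ z 0 0 ≠ 0 := by
  rcases mem_center'.1 hz with rfl | rfl <;>
    simp [mul00, mul01, mul10, mul11, u, nOne]


lemma fix_center_u {z : SL2 F} (hz : z ∈ Subgroup.center (SL2 F)) {x : F} (hx : x ≠ 0)
    (o : OnePoint F) : (z * u x) • o = o ↔ o = ∞ := by
  obtain ⟨h1, h2, h3, h4, h5⟩ := center_u hz x
  induction o using OnePoint.rec with
  | infty => rw [fix_inf]; simp [h3]
  | coe t =>
    rw [fix_coe, h1, h2, h3, h4]
    constructor
    · intro h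
      exfalso
      have : z 0 0 * x = 0 := by linear_combination -h
      simp_all
    · intro h; exact absurd h (OnePoint.coe_ne_infty t)

/-- Elements of `M` with one fixed point: each point contributes at least the nontrivial
translations at that point, up to the center. -/
lemma n1_ge {M : Subgroup (SL2 F)} (hZ : Subgroup.center (SL2 F) ≤ M)
    (htr : ∀ o : OnePoint F, ∃ g ∈ M, g • (∞ : OnePoint F) = o) :
    (Nat.card F + 1) * (Nat.card (Subgroup.center (SL2 F)) * (Nat.card (trans M) - 1)) ≤
      {g | g ∈ M ∧ fx g = 1}.ncard := by
  choose k hkM hk using htr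
  have e : Nat.card (OnePoint F × Subgroup.center (SL2 F) × {x : trans M // x ≠ 0}) =
    (Nat.card F + 1) * (Nat.card (Subgroup.center (SL2 F)) * (Nat.card (trans M) - 1)) := by
    rw [Nat.card_prod, Nat.card_prod, card_line]
    congr 2
    have := Set.ncard_compl ({0} : Set (trans M))
    rw [Set.ncard_singleton] at this
    rw [← this, ← Nat.card_coe_set_eq]; rfl
  rw [← e, ← Nat.card_coe_set_eq]
  have hfix : ∀ (o : OnePoint F) (z : Subgroup.center (SL2 F)) (x : {x : trans M // x ≠ 0})
      (o' : OnePoint F), (k o * (z.1 * u x.1.1) * (k o)⁻¹) • o' = o' ↔ o' = o := by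
    intro o z x o'
    have hx : (x.1.1 : F) ≠ 0 := fun h => x.2 (Subtype.ext h)
    rw [mul_smul, mul_smul, smul_eq_iff_eq_inv_smul, fix_center_u z.2 hx, inv_smul_eq_iff, hk]
  refine Nat.card_le_card_of_injective (fun t : OnePoint F × Subgroup.center (SL2 F) ×
    {x : trans M // x ≠ 0} => (⟨k t.1 * (t.2.1.1 * u t.2.2.1.1) * (k t.1)⁻¹, ?_, ?_⟩ :
      {g | g ∈ M ∧ fx g = 1})) ?_
  · exact M.mul_mem (M.mul_mem (hkM _) (M.mul_mem (hZ t.2.1.2) t.2.2.1.2)) (M.inv_mem (hkM _))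
  · rw [fx, Set.ncard_eq_one]
    refine ⟨t.1, ?_⟩
    ext o'
    rw [mem_fixedBy', hfix]; rfl
  · rintro ⟨o, z, x⟩ ⟨o', z', x'⟩ h
    have h := congrArg Subtype.val h
    simp only at h
    have ho : o = o' := by
      rw [← hfix o' z' x' o, ← h, hfix]
    subst ho
    have h := mul_left_cancel (mul_right_cancel h)
    obtain ⟨a1, a2, -, -, a5⟩ := center_u z.2 x.1.1
    obtain ⟨b1, b2, -, -, b5⟩ := center_u z'.2 x'.1.1
    rw [h] at a1 a2
    have h0 := a1.symm.trans b1
    have h1 := a2.symm.trans b2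
    rw [h0] at h1
    have hx : x = x' := Subtype.ext (Subtype.ext (mul_left_cancel₀ b5 h1))
    subst hx
    have hz : z = z' := Subtype.ext (mul_right_cancel h)
    rw [hz]

/-- An element of the Borel subgroup with equal eigenvalues is a translation up to the center. -/
lemma borel_eq {g : SL2 F} (h : g 1 0 = 0) (h2 : (g 0 0) ^ 2 = 1) :
    ∃ z ∈ Subgroup.center (SL2 F), ∃ x, g = z * u x := by
  have hd := det_eq g
  rw [h] at hd
  have h11 : g 1 1 = g 0 0 := by
    have h0 : g 0 0 ≠ 0 := by intro h0; rw [h0] at h2; simp at h2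
    apply mul_left_cancel₀ h0; linear_combination hd - h2
  rcases (show g 0 0 = 1 ∨ g 0 0 = -1 by simpa using h2) with h1 | h1
  · refine ⟨1, Subgroup.one_mem _, g 0 1, ?_⟩
    apply ext4 <;> simp [mul00, mul01, mul10, mul11, u, h, h1, h11]
  · refine ⟨nOne, mem_center'.2 (Or.inr rfl), - g 0 1, ?_⟩
    apply ext4 <;> simp [mul00, mul01, mul10, mul11, u, nOne, h, h1, h11]

lemma eq_top_of_ul {M : Subgroup (SL2 F)} (hu : ∀ x, u x ∈ M) (hl : ∀ x, l x ∈ M) : M = ⊤ := by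
  have hgen : ∀ g : SL2 F, g 1 0 ≠ 0 → g ∈ M := by
    intro g hg
    have hd := det_eq g
    have e : g = u ((g 0 0 - 1) / g 1 0) * l (g 1 0) * u ((g 1 1 - 1) / g 1 0) := by
      apply ext4 <;> simp [mul00, mul01, mul10, mul11, u, l] <;> field_simp
      · ring
      · linear_combination -hd
      · ring
    rw [e]
    exact M.mul_mem (M.mul_mem (hu _) (hl _)) (hu _)
  rw [eq_top_iff]
  intro g _
  by_cases hg : g 1 0 = 0
  · have hw : (w : SL2 F) ∈ M := hgen _ (by simp [w])
    have : w * g ∈ M := hgen _ (by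
      have hd := det_eq g
      rw [hg] at hd
      simp [mul10, w, hg]
      intro h; rw [h] at hd; simp at hd)
    exact (M.mul_mem_cancel_left hw).1 this
  · exact hgen g hg

/-- Any subgroup that is transitive on the projective line and contains all translations is the
whole group. -/
lemma eq_top_of_trans {M : Subgroup (SL2 F)} (hu : ∀ x, u x ∈ M)
    (htr : ∀ o : OnePoint F, ∃ g ∈ M, g • (∞ : OnePoint F) = o) : M = ⊤ := by
  obtain ⟨k, hkM, hk⟩ := htr ((0 : F) : OnePoint F)
  -- `k` maps `∞` to `0`, so it conjugates the translations to the lower unitriangular group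
  have hk00 : k 0 0 = 0 := by
    rw [smul_inf] at hk
    split_ifs at hk with h
    · exact absurd hk (OnePoint.infty_ne_coe _)
    · have := OnePoint.coe_injective hk
      rcases div_eq_zero_iff.1 this with h' | h'
      · exact h'
      · exact absurd h' h
  have hkd := det_eq k
  rw [hk00] at hkd
  have hk10 : k 1 0 ≠ 0 := by intro h; rw [h] at hkd; simp at hkd
  have hk01 : k 0 1 = - (k 1 0)⁻¹ := by field_simp; linear_combination -hkd
  have hl : ∀ c, l c ∈ M := by
    intro c
    have e : l c = k * u (- c / (k 1 0) ^ 2) * k⁻¹ := by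
      apply ext4 <;> simp [mul00, mul01, mul10, mul11, inv00, inv01, inv10, inv11, u, l, hk00, hk01]
        <;> field_simp
      · ring
    rw [e]
    exact M.mul_mem (M.mul_mem hkM (hu _)) (M.inv_mem hkM)
  exact eq_top_of_ul hu hl

lemma sq_of_fix_one {g : SL2 F} (h : g 1 0 = 0) (hfx : fx g = 1) : (g 0 0) ^ 2 = 1 := by
  have hd := det_eq g
  rw [h] at hd
  by_cases he : g 0 0 = g 1 1
  · rw [← he] at hd; linear_combination hd
  · exfalso
    have hne : g 1 1 - g 0 0 ≠ 0 := sub_ne_zero.2 (Ne.symm he)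
    have : 1 < fx g := by
      rw [fx, Set.one_lt_ncard]
      refine ⟨∞, (fix_inf _).2 h, ((g 0 1 / (g 1 1 - g 0 0) : F) : OnePoint F),
        (fix_coe _ _).2 ?_, OnePoint.infty_ne_coe _⟩
      rw [h]; field_simp; ring
    omega

lemma n1_zero {M : Subgroup (SL2 F)} (hZ : Subgroup.center (SL2 F) ≤ M)
    (htr : ∀ o : OnePoint F, ∃ g ∈ M, g • (∞ : OnePoint F) = o) (hU : ∀ x, u x ∈ M → x = 0) :
    {g | g ∈ M ∧ fx g = 1}.ncard = 0 := by
  rw [Set.ncard_eq_zero, Set.eq_empty_iff_forall_notMem]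
  rintro g ⟨hg, hfx⟩
  obtain ⟨o, ho⟩ := Set.ncard_eq_one.1 hfx
  have hgo : g • o = o := by
    have : o ∈ MulAction.fixedBy (OnePoint F) g := by rw [ho]; rfl
    exact this
  obtain ⟨k, hk, hko⟩ := htr o
  have hfix : (k⁻¹ * g * k⁻¹⁻¹) • (∞ : OnePoint F) = ∞ := by
    rw [inv_inv, mul_smul, mul_smul, hko, hgo, inv_smul_eq_iff, hko]
  have hfx' : fx (k⁻¹ * g * k⁻¹⁻¹) = 1 := by rw [fx_conj, hfx]
  have hmem : k⁻¹ * g * k⁻¹⁻¹ ∈ M :=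
    M.mul_mem (M.mul_mem (M.inv_mem hk) hg) (M.inv_mem (M.inv_mem hk))
  have h10 := (fix_inf _).1 hfix
  obtain ⟨z, hz, x, hzx⟩ := borel_eq h10 (sq_of_fix_one h10 hfx')
  rw [hzx] at hmem hfx'
  rw [hU x ((M.mul_mem_cancel_left (hZ hz)).1 hmem), u_zero, mul_one, fx_center hz] at hfx'
  have : 0 < Nat.card F := Nat.card_pos
  omega

/-- The stabilizer of `∞` acts on the nontrivial translations of `M` through squares of
eigenvalues. -/
lemma stab_le {M : Subgroup (SL2 F)} {x0 : F} (hx0 : x0 ≠ 0) (hx0M : u x0 ∈ M)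
    (hZ : Subgroup.center (SL2 F) ≤ M) :
    Nat.card (MulAction.stabilizer M (∞ : OnePoint F)) ≤
      (Nat.card (trans M) - 1) * (Nat.card (Subgroup.center (SL2 F)) * Nat.card (trans M)) := by
  classical
  have hg10 : ∀ g : MulAction.stabilizer M (∞ : OnePoint F), (g.1.1 : SL2 F) 1 0 = 0 :=
    fun g => (fix_inf _).1 g.2
  have hne : ∀ g : MulAction.stabilizer M (∞ : OnePoint F), (g.1.1 : SL2 F) 0 0 ≠ 0 := by
    intro g h0
    have := det_eq g.1.1
    rw [hg10, h0] at this; simp at this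
  have h11 : ∀ g : MulAction.stabilizer M (∞ : OnePoint F),
      (g.1.1 : SL2 F) 0 0 * (g.1.1 : SL2 F) 1 1 = 1 := by
    intro g
    have := det_eq g.1.1
    rw [hg10] at this; linear_combination this
  have hconj : ∀ g : MulAction.stabilizer M (∞ : OnePoint F),
      u (((g.1.1 : SL2 F) 0 0) ^ 2 * x0) ∈ M := by
    intro g
    have e : u (((g.1.1 : SL2 F) 0 0) ^ 2 * x0) = g.1.1 * u x0 * (g.1.1)⁻¹ := by
      have h1 := h11 g
      have h2 := hg10 g
      apply ext4 <;>
        simp only [mul00, mul01, mul10, mul11, inv00, inv01, inv10, inv11, u, mk00, mk01, mk10,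
          mk11, h2]
      · linear_combination -h1
      · ring
      · ring
      · linear_combination -h1
    rw [e]
    exact M.mul_mem (M.mul_mem g.1.2 hx0M) (M.inv_mem g.1.2)
  have := Fintype.ofFinite (MulAction.stabilizer M (∞ : OnePoint F))
  have : Fintype (trans M) := Fintype.ofFinite _
  set f : MulAction.stabilizer M (∞ : OnePoint F) → trans M :=
    fun g => ⟨((g.1.1 : SL2 F) 0 0) ^ 2 * x0, hconj g⟩ with hf
  have hmaps : ∀ g ∈ (Finset.univ : Finset (MulAction.stabilizer M (∞ : OnePoint F))),
      f g ∈ (Finset.univ.erase 0 : Finset (trans M)) := by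
    intro g _
    rw [Finset.mem_erase]
    refine ⟨fun h => ?_, Finset.mem_univ _⟩
    have := congrArg Subtype.val h
    simp [hf, hx0, hne g] at this
  have key := Finset.card_le_mul_card_image_of_maps_to hmaps
    (Nat.card (Subgroup.center (SL2 F)) * Nat.card (trans M)) ?_
  · rw [Finset.card_erase_of_mem (Finset.mem_univ _), Finset.card_univ, Finset.card_univ,
      ← Nat.card_eq_fintype_card, ← Nat.card_eq_fintype_card, mul_comm] at key
    exact key
  · intro y _
    rcases Finset.eq_empty_or_nonempty
      (Finset.univ.filter fun g : MulAction.stabilizer M (∞ : OnePoint F) => f g = y) with h | ⟨g0, hg0⟩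
    · rw [h]; simp
    · have hg0 := (Finset.mem_filter.1 hg0).2
      have hex : ∀ g : MulAction.stabilizer M (∞ : OnePoint F), f g = y →
          ∃ t : Subgroup.center (SL2 F) × trans M,
            (g.1.1 : SL2 F) = t.1.1 * u t.2.1 * g0.1.1 := by
        intro g hg
        have h1 : ((g.1.1 : SL2 F) 0 0) ^ 2 = ((g0.1.1 : SL2 F) 0 0) ^ 2 := by
          have := congrArg Subtype.val (hg.trans hg0.symm)
          exact mul_right_cancel₀ hx0 this
        have hgg : ((g * g0⁻¹).1.1 : SL2 F) = g.1.1 * (g0.1.1)⁻¹ := rfl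
        obtain ⟨z, hz, x, hzx⟩ := borel_eq (hg10 (g * g0⁻¹)) (by
          rw [hgg, mul00, inv00, inv10, hg10 g0]
          have := h11 g0
          linear_combination ((g0.1.1 : SL2 F) 1 1) ^ 2 * h1 +
            ((g0.1.1 : SL2 F) 0 0 * (g0.1.1 : SL2 F) 1 1 + 1) * this)
        have hxM : u x ∈ M := by
          have : z * u x ∈ M := by rw [← hzx]; exact (g * g0⁻¹).1.2
          exact (M.mul_mem_cancel_left (hZ hz)).1 this
        refine ⟨(⟨z, hz⟩, ⟨x, hxM⟩), ?_⟩
        rw [← hzx, hgg, inv_mul_cancel_right]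
      choose! t ht using hex
      have : Fintype (Subgroup.center (SL2 F)) := Fintype.ofFinite _
      rw [Nat.card_eq_fintype_card, Nat.card_eq_fintype_card, ← Fintype.card_prod,
        ← Finset.card_univ]
      refine Finset.card_le_card_of_injOn t (fun _ _ => Finset.mem_coe.2 (Finset.mem_univ _)) ?_
      intro a ha b hb hab
      have ha := ht a (Finset.mem_filter.1 ha).2
      have hb := ht b (Finset.mem_filter.1 hb).2
      rw [hab, ← hb] at ha
      exact Subtype.ext (Subtype.ext ha)

/-- The case `U ≠ 0` of the numerical analysis: `ω` is the number of translations. -/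
lemma num_trans {q ω m d : ℕ} (hq : 4 ≤ q) (hd : d = 1 ∧ Even q ∨ d = 2 ∧ ¬ Even q) (hω : ω ∣ q)
    (hω1 : 1 < ω) (hωq : ω ≠ q) (h1 : 2 * m ≤ (ω - 1) * (d * ω))
    (h2 : (q + 1) * (ω - 1) ≤ 2 * m + q - 1) : m ≤ 1 ∨ (q = 9 ∧ m = 6) := by
  obtain ⟨t, rfl⟩ := hω
  obtain ⟨ω, rfl⟩ := Nat.exists_eq_add_of_le (show 2 ≤ ω from hω1)
  rw [show 2 + ω - 1 = 1 + ω by omega] at h1 h2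
  have ht : 2 ≤ t := by
    by_contra! h
    interval_cases t
    · omega
    · simp at hωq
  obtain ⟨t, rfl⟩ := Nat.exists_eq_add_of_le ht
  rcases hd with ⟨rfl, -⟩ | ⟨rfl, hodd⟩
  · left
    have h3 : ((2 + ω) * (2 + t) + 1) * (1 + ω) + 1 ≤ (1 + ω) * (1 * (2 + ω)) + (2 + ω) * (2 + t) := by
      omega
    have : ω = 0 := by
      by_contra h0
      obtain ⟨ω, rfl⟩ := Nat.exists_eq_succ_of_ne_zero h0
      nlinarith [Nat.zero_le (ω * t), Nat.zero_le (ω * ω * t)]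
    subst this
    omega
  · right
    rw [Nat.even_mul, not_or] at hodd
    have hω3 : 1 ≤ ω := by
      by_contra h; apply hodd.1; rw [show ω = 0 by omega]; decide
    have ht3 : 1 ≤ t := by
      by_contra h; apply hodd.2; rw [show t = 0 by omega]; decide
    obtain ⟨ω, rfl⟩ := Nat.exists_eq_add_of_le hω3
    obtain ⟨t, rfl⟩ := Nat.exists_eq_add_of_le ht3
    have h3 : ((2 + (1 + ω)) * (2 + (1 + t)) + 1) * (1 + (1 + ω)) + 1 ≤
      (1 + (1 + ω)) * (2 * (2 + (1 + ω))) + (2 + (1 + ω)) * (2 + (1 + t)) := by omega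
    have hω0 : ω = 0 := by
      by_contra h0
      obtain ⟨ω, rfl⟩ := Nat.exists_eq_succ_of_ne_zero h0
      nlinarith [Nat.zero_le (ω * t), Nat.zero_le (ω * ω * t)]
    subst hω0
    have : t = 0 := by omega
    subst this
    omega

/-- The case `U = 0`, `q` odd, of the numerical analysis. -/
lemma num_no_trans {q m c f s : ℕ} (hq : 5 ≤ q) (hm : 0 < m) (h2m : 2 * m ∣ q - 1)
    (hf : 2 ≤ f) (hs : s = 1 ∨ s = 2) (hc : c * (s * f) + 2 * (q + 1) * m = f * (2 * (q + 1) * m))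
    (hcle : c ≤ 2 * m + q - 1) (hceq : m = 2 → c = q + 3) :
    m = 1 ∨ (q = 5 ∧ m = 2) ∨ (q = 7 ∧ m = 3) := by
  have h1 := class_ge hf hs hc
  have h4 : 2 * (q + 1) * m ≤ 4 * (2 * m + q - 1) := by
    rcases hs with rfl | rfl
    · calc _ ≤ _ := h1
        _ ≤ _ := by omega
    · omega
  obtain ⟨t, ht⟩ := h2m
  have hq' : q = 2 * m * t + 1 := by omega
  have ht0 : 0 < t := by
    rcases Nat.eq_zero_or_pos t with h | h
    · subst h; omega
    · exact h
  by_cases hm3 : m ≤ 2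
  · rcases (show m = 1 ∨ m = 2 by omega) with h | h
    · exact Or.inl h
    · have hc' := hceq h
      subst h
      subst hc'
      right; left
      refine ⟨?_, rfl⟩
      obtain ⟨a, rfl⟩ := Nat.exists_eq_add_of_le hq
      rcases hs with rfl | rfl
      · nlinarith
      · have h5 : f * (4 + a) = 2 * (6 + a) := by nlinarith
        have hf3 : f ≤ 3 := by by_contra! h; nlinarith
        interval_cases f <;> omega
  · right; right
    obtain ⟨m, rfl⟩ := Nat.exists_eq_add_of_le (show 3 ≤ m by omega)
    obtain ⟨t, rfl⟩ := Nat.exists_eq_add_of_le (show 1 ≤ t by omega)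
    have h6 : 2 * (q + 1) * (3 + m) + 4 ≤ 4 * (2 * (3 + m) + q) := by omega
    rw [hq'] at h6
    have h7 : (3 + m) * ((1 + t) * (3 + m)) ≤ (3 + m) * (1 + 2 * (1 + t)) := by nlinarith
    have h8 := Nat.le_of_mul_le_mul_left h7 (by omega)
    have hm0 : m = 0 := by
      by_contra h; have : 1 ≤ m := by omega
      nlinarith
    subst hm0
    have ht0 : t = 0 := by omega
    subst ht0
    omega

/-- A proper subgroup containing the normalizer of a nonsplit torus is that normalizer, apart from
a few small exceptions. -/
lemma nonsplit_lemma (hq : 4 ≤ Nat.card F) {τ : F} (hτ : NonsplitTrace τ) {M : Subgroup (SL2 F)}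
    (hN : nonsplitNormalizer τ ≤ M) (hM : M ≠ ⊤) :
    Nat.card M = 2 * (Nat.card F + 1) ∨ (Nat.card F = 5 ∧ Nat.card M = 24) ∨
      (Nat.card F = 7 ∧ Nat.card M = 48) ∨ (Nat.card F = 9 ∧ Nat.card M = 120) := by
  have hZ : Subgroup.center (SL2 F) ≤ M := fun z hz => hN (cen_le_nonsplitNormalizer
    (mem_cen.2 ⟨trivial, (Subgroup.mem_center_iff.1 hz (y0 τ)).symm⟩))
  have hfx := fx_y0 hτ
  have hyM : y0 τ ∈ M := hN (Or.inl (by group))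
  obtain ⟨m, hm⟩ := Subgroup.card_dvd_of_le hN
  rw [card_nonsplitNormalizer hτ] at hm
  have hM0 : 0 < Nat.card M := Nat.card_pos
  have hm0 : 0 < m := by
    rcases Nat.eq_zero_or_pos m with h | h
    · subst h; omega
    · exact h
  have hcls := cls_count ct M hZ hyM (fx_zero_notMem hfx)
  have hnrm : (nrm M (y0 τ)).ncard = 2 * (Nat.card F + 1) := by
    rw [nrm_eq hτ hN, ← card_nonsplitNormalizer hτ, ← Nat.card_coe_set_eq]; rfl
  rw [hnrm, card_cen_eq hτ hN, hm] at hcls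
  set q := Nat.card F with hqdef
  set d := Nat.card (Subgroup.center (SL2 F)) with hd
  set c := (cls M (y0 τ)).ncard with hc
  have hcls' : c + d * m = (q + 1) * m := by
    apply Nat.eq_of_mul_eq_mul_left (show 0 < 2 * (q + 1) by omega)
    linear_combination hcls
  have hB := burnside M hZ
  change _ = _ + 2 * (N0 M).ncard + _ + _ at hB
  have hcN : c ≤ (N0 M).ncard := Set.ncard_le_ncard (cls_subset hfx) (Set.toFinite _)
  have hdq : d = 1 ∧ Even q ∨ d = 2 ∧ ¬ Even q := by
    by_cases h2 : (2 : F) = 0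
    · exact Or.inl ⟨card_center_one h2, two_eq_zero_iff.1 h2⟩
    · exact Or.inr ⟨card_center_two h2, fun h => h2 (two_eq_zero_iff.2 h)⟩
  rw [← hd, ← hqdef, hm] at hB
  set o := Nat.card (MulAction.orbitRel.Quotient M (OnePoint F)) with ho
  set n0 := (N0 M).ncard with hn0
  set n1 := {g | g ∈ M ∧ fx g = 1}.ncard with hn1
  suffices hmm : m = 1 ∨ (q = 5 ∧ m = 2) ∨ (q = 7 ∧ m = 3) ∨ (q = 9 ∧ m = 6) by
    rcases hmm with h | ⟨h, h'⟩ | ⟨h, h'⟩ | ⟨h, h'⟩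
    · left; rw [hm, h, mul_one]
    · right; left; rw [hm, h, h']; simp
    · right; right; left; rw [hm, h, h']; simp
    · right; right; right; rw [hm, h, h']; simp
  have ho0 : 0 < o := Nat.card_pos
  by_cases ho1 : o = 1
  · -- transitive case
    have hsub : Subsingleton (MulAction.orbitRel.Quotient M (OnePoint F)) :=
      (Nat.card_eq_one_iff_unique.1 ho1).1
    have htrM : MulAction.IsPretransitive M (OnePoint F) :=
      (MulAction.pretransitive_iff_subsingleton_quotient _ _).2 hsub
    have htr : ∀ o : OnePoint F, ∃ g ∈ M, g • (∞ : OnePoint F) = o := by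
      intro o
      obtain ⟨⟨g, hg⟩, h⟩ := MulAction.exists_smul_eq M (∞ : OnePoint F) o
      exact ⟨g, hg, h⟩
    have hstab : Nat.card (MulAction.stabilizer M (∞ : OnePoint F)) = 2 * m := by
      have h1 := Subgroup.card_mul_index (MulAction.stabilizer M (∞ : OnePoint F))
      rw [MulAction.index_stabilizer_of_transitive, card_line, hm, ← hqdef] at h1
      apply Nat.eq_of_mul_eq_mul_left (show 0 < q + 1 by omega)
      linear_combination h1
    rw [ho1] at hB
    set ω := Nat.card (trans M) with hω
    have hω0 : 0 < ω := Nat.card_pos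
    by_cases hω1 : ω = 1
    · -- no translations
      have hU : ∀ x, u x ∈ M → x = 0 := by
        intro x hx
        have : Subsingleton (trans M) := (Nat.card_eq_one_iff_unique.1 hω1).1
        have h := Subsingleton.elim (⟨x, hx⟩ : trans M) 0
        exact congrArg Subtype.val h
      have hdiv : 2 * m ∣ q - 1 := by
        rw [← hstab, hqdef, ← Nat.card_units]
        have h10 : ∀ g : MulAction.stabilizer M (∞ : OnePoint F), (g.1.1 : SL2 F) 1 0 = 0 :=
          fun g => (fix_inf _).1 g.2
        have h11 : ∀ g : MulAction.stabilizer M (∞ : OnePoint F),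
            (g.1.1 : SL2 F) 0 0 * (g.1.1 : SL2 F) 1 1 = 1 := by
          intro g
          have := det_eq g.1.1
          rw [h10] at this; linear_combination this
        let χ : MulAction.stabilizer M (∞ : OnePoint F) →* Fˣ :=
          { toFun := fun g => Units.mk0 ((g.1.1 : SL2 F) 0 0) (left_ne_zero_of_mul_eq_one (h11 g))
            map_one' := Units.ext (by simp)
            map_mul' := fun g h => Units.ext (by
              simp only [Units.val_mk0, Units.val_mul]
              show ((g.1.1 * h.1.1 : SL2 F)) 0 0 = _
              rw [mul00, h10 h]; ring) }
        refine Subgroup.card_dvd_of_injective χ ?_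
        rw [injective_iff_map_eq_one]
        intro g hg
        have h00 : (g.1.1 : SL2 F) 0 0 = 1 := congrArg Units.val hg
        have h1 := h11 g
        rw [h00, one_mul] at h1
        have e : (g.1.1 : SL2 F) = u ((g.1.1 : SL2 F) 0 1) := by
          apply ext4 <;> simp [u, h00, h1, h10 g]
        have hx := hU _ (by rw [← e]; exact g.1.2)
        rw [hx, u_zero] at e
        exact Subtype.ext (Subtype.ext e)
      rcases hdq with ⟨-, hev⟩ | ⟨hd2, hodd⟩
      · exfalso
        obtain ⟨e, he⟩ := hev
        obtain ⟨t, ht⟩ := hdiv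
        rw [mul_assoc] at ht
        omega
      have hn10 : n1 = 0 := n1_zero hZ htr hU
      rw [hn10, hd2] at hB
      rw [hd2] at hcls'
      have hq5 : 5 ≤ q := by
        rcases Nat.lt_or_ge 4 q with h | h
        · exact h
        · exact absurd (by rw [le_antisymm h hq]; decide) hodd
      have hn0c : n0 = c + (2 * m + q - 1) := by
        have e1 : 2 * (q + 1) * m = 2 * ((q + 1) * m) := by ring
        rw [e1] at hB
        omega
      have hex : ∃ y' ∈ N0 M, y' ∉ cls M (y0 τ) := by
        by_contra! h
        have := Set.ncard_le_ncard (show N0 M ⊆ cls M (y0 τ) from h) (Set.toFinite _)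
        omega
      obtain ⟨y', hy', hy'c⟩ := hex
      have hdis := disjoint_class hy'.1 hy'.2 hy'c
      have hun : (cls M (y0 τ) ∪ cls M y').ncard = c + (cls M y').ncard :=
        Set.ncard_union_eq hdis (Set.toFinite _) (Set.toFinite _)
      have hunN : cls M (y0 τ) ∪ cls M y' ⊆ N0 M :=
        Set.union_subset (cls_subset hfx) (cls_subset hy'.2)
      have hule := Set.ncard_le_ncard hunN (Set.toFinite _)
      obtain ⟨f, s, hf, hs, hfs⟩ := class_data hZ hy'.1 hy'.2
      have hfin := num_no_trans (q := q) (m := m) (c := (cls M y').ncard) hq5 hm0 hdiv hf hs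
        (by rw [hm] at hfs; exact hfs) (by omega) (by
          intro hm2
          by_contra hne
          -- a third class would not fit
          have hex2 : ∃ z ∈ N0 M, z ∉ cls M (y0 τ) ∪ cls M y' := by
            by_contra! h
            have := Set.ncard_le_ncard (show N0 M ⊆ _ from h) (Set.toFinite _)
            omega
          obtain ⟨z, hz, hzc⟩ := hex2
          rw [Set.mem_union, not_or] at hzc
          have hd1 := disjoint_class hz.1 hz.2 hzc.1
          have hd2 := disjoint_class hz.1 hz.2 hzc.2
          have hun3 : (cls M (y0 τ) ∪ cls M y' ∪ cls M z).ncard =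
              c + (cls M y').ncard + (cls M z).ncard := by
            rw [Set.ncard_union_eq (Set.disjoint_union_left.2 ⟨hd1, hd2⟩) (Set.toFinite _)
              (Set.toFinite _), hun]
          have hle3 := Set.ncard_le_ncard (Set.union_subset hunN (cls_subset (M := M) hz.2))
            (Set.toFinite _)
          obtain ⟨f', s', hf', hs', hfs'⟩ := class_data hZ hz.1 hz.2
          have g1 := class_ge hf hs hfs
          have g2 := class_ge hf' hs' hfs'
          rw [hm, hm2] at g1 g2
          have g1' : 2 * (q + 1) * 2 ≤ 4 * (cls M y').ncard := by
            rcases hs with rfl | rfl <;> omega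
          have g2' : 2 * (q + 1) * 2 ≤ 4 * (cls M z).ncard := by
            rcases hs' with rfl | rfl <;> omega
          omega)
      tauto
    · -- nontrivial translations
      have hωq : ω ≠ q := by
        intro h
        refine hM (eq_top_of_trans (fun x => ?_) htr)
        have : trans M = ⊤ := AddSubgroup.eq_top_of_card_eq _ h
        exact mem_trans.1 (by rw [this]; trivial)
      obtain ⟨x0, hx0, hx0M⟩ : ∃ x, x ≠ 0 ∧ u x ∈ M := by
        by_contra! h
        apply hω1
        rw [hω, Nat.card_eq_one_iff_unique]
        refine ⟨⟨fun a b => ?_⟩, ⟨0⟩⟩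
        have ha : a.1 = 0 := by by_contra h'; exact h _ h' a.2
        have hb : b.1 = 0 := by by_contra h'; exact h _ h' b.2
        exact Subtype.ext (ha.trans hb.symm)
      have hle := stab_le hx0 hx0M hZ
      rw [hstab] at hle
      have hn := n1_ge hZ htr
      rw [← hω, ← hd, ← hqdef] at hn
      change _ ≤ n1 at hn
      have hd0 : 0 < d := Nat.card_pos
      have h2 : (q + 1) * (ω - 1) ≤ 2 * m + q - 1 := by
        have : d * ((q + 1) * (ω - 1)) ≤ d * (2 * m + q - 1) := by
          have e1 : (q + 1) * (d * (ω - 1)) = d * ((q + 1) * (ω - 1)) := by ring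
          rw [e1] at hn
          have e2 : d * (2 * m + q - 1) + d = 2 * (d * m) + d * q := by
            obtain ⟨p, hp⟩ := Nat.exists_eq_add_of_le (show 1 ≤ q by omega)
            rw [hp, show 2 * m + (1 + p) - 1 = 2 * m + p by omega]; ring
          have e3 : 2 * (q + 1) * m = 2 * ((q + 1) * m) := by ring
          rw [e3] at hB
          omega
        exact Nat.le_of_mul_le_mul_left this hd0
      have := num_trans hq hdq (AddSubgroup.card_addSubgroup_dvd_card _) (by omega) hωq hle h2
      omega
  · -- at least two orbits
    left
    have ho2 : 2 ≤ o := by omega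
    have e3 : 2 * (q + 1) * m = 2 * ((q + 1) * m) := by ring
    have h1 : 2 * (2 * (q + 1) * m) ≤ o * (2 * (q + 1) * m) := Nat.mul_le_mul_right _ ho2
    rw [e3] at h1 hB
    have h2 : 2 * ((q + 1) * m) + d ≤ 2 * (d * m) + d * q := by omega
    by_contra hne
    obtain ⟨m, rfl⟩ := Nat.exists_eq_add_of_le (show 2 ≤ m by omega)
    rcases hdq with ⟨h, -⟩ | ⟨h, -⟩ <;> rw [h] at h2 <;> nlinarith

end NonsplitLemma

end SLTwo

namespace SLTwo

/-! ### Arithmetic of the design -/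

section Design

variable {Pt : Type*} [Fintype Pt]

open Classical in
/-- The blocks through `x`. -/
noncomputable def blocksAt (𝓑 : Set (Set Pt)) (x : Pt) : Finset (Set Pt) :=
  Finset.univ.filter fun B => B ∈ 𝓑 ∧ x ∈ B

lemma mem_blocksAt {𝓑 : Set (Set Pt)} {x : Pt} {B : Set Pt} :
    B ∈ blocksAt 𝓑 x ↔ B ∈ 𝓑 ∧ x ∈ B := by simp [blocksAt]

lemma card_blocksAt {𝓑 : Set (Set Pt)} {x : Pt} : (blocksAt 𝓑 x).card = repNum 𝓑 x := by
  classical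
  rw [repNum, Nat.card_coe_set_eq, Set.ncard_eq_toFinset_card']
  congr 1
  ext B; simp [mem_blocksAt]

lemma block_card_filter {𝓑 : Set (Set Pt)} {k lam : ℕ} (hD : IsDesign 𝓑 k lam) {B : Set Pt}
    (hB : B ∈ 𝓑) : B.ncard = k := by
  rw [← hD.block_card B hB, Nat.card_coe_set_eq]

open Classical in
/-- Counting the pairs `(β, B)` with `β ∈ O` and `α, β ∈ B`. -/
lemma count_pairs {𝓑 : Set (Set Pt)} {k lam : ℕ} (hD : IsDesign 𝓑 k lam) {α : Pt}
    (O : Finset Pt) (hO : α ∉ O) :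
    ∑ B ∈ blocksAt 𝓑 α, (O.filter (· ∈ B)).card = lam * O.card := by
  have key := Finset.sum_card_bipartiteAbove_eq_sum_card_bipartiteBelow
    (s := blocksAt 𝓑 α) (t := O) (fun B β => β ∈ B)
  have e : ∀ β ∈ O, ((blocksAt 𝓑 α).bipartiteBelow (fun B β => β ∈ B) β).card = lam := by
    intro β hβ
    rw [← hD.pair_count α β (fun h => hO (h ▸ hβ)), Nat.card_coe_set_eq,
      Set.ncard_eq_toFinset_card']
    congr 1
    ext B
    simp [Finset.mem_bipartiteBelow, mem_blocksAt]
    tauto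
  rw [Finset.sum_congr rfl e, Finset.sum_const, smul_eq_mul, mul_comm] at key
  exact key

lemma rep_eq {𝓑 : Set (Set Pt)} {k lam : ℕ} (hD : IsDesign 𝓑 k lam) (α : Pt) :
    repNum 𝓑 α * (k - 1) = lam * (Nat.card Pt - 1) := by
  classical
  have h := count_pairs hD (Finset.univ.erase α) (Finset.notMem_erase α _)
  rw [Finset.card_erase_of_mem (Finset.mem_univ _), Finset.card_univ,
    ← Nat.card_eq_fintype_card] at h
  rw [← h, ← card_blocksAt, ← smul_eq_mul, ← Finset.sum_const]
  refine Finset.sum_congr rfl fun B hB => ?_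
  obtain ⟨hB, hα⟩ := mem_blocksAt.1 hB
  rw [← block_card_filter hD hB, Set.ncard_eq_toFinset_card',
    ← Finset.card_erase_of_mem (by simpa using hα)]
  congr 1
  ext x; simp

lemma block_count {𝓑 : Set (Set Pt)} {k lam r : ℕ} (hD : IsDesign 𝓑 k lam)
    (hr : ∀ x, repNum 𝓑 x = r) : Nat.card 𝓑 * k = Nat.card Pt * r := by
  classical
  have key := Finset.sum_card_bipartiteAbove_eq_sum_card_bipartiteBelow
    (s := (Finset.univ : Finset Pt)) (t := 𝓑.toFinset) (fun x B => x ∈ B)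
  have e1 : ∀ x ∈ (Finset.univ : Finset Pt),
      ((𝓑.toFinset).bipartiteAbove (fun x B => x ∈ B) x).card = r := by
    intro x _
    rw [← hr x, ← card_blocksAt]
    congr 1; ext B; simp [Finset.mem_bipartiteAbove, mem_blocksAt]
  have e2 : ∀ B ∈ 𝓑.toFinset,
      ((Finset.univ : Finset Pt).bipartiteBelow (fun x B => x ∈ B) B).card = k := by
    intro B hB
    rw [← block_card_filter hD (Set.mem_toFinset.1 hB), Set.ncard_eq_toFinset_card']
    congr 1; ext x; simp [Finset.mem_bipartiteBelow]
  rw [Finset.sum_congr rfl e1, Finset.sum_congr rfl e2, Finset.sum_const, Finset.sum_const,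
    smul_eq_mul, smul_eq_mul, Finset.card_univ, ← Nat.card_eq_fintype_card,
    ← Set.ncard_eq_toFinset_card', ← Nat.card_coe_set_eq] at key
  exact key.symm

/-- Fisher's inequality: the incidence vectors of the points are linearly independent. -/
lemma fisher {𝓑 : Set (Set Pt)} {k lam r : ℕ} (hD : IsDesign 𝓑 k lam)
    (hr : ∀ x, repNum 𝓑 x = r) (hlt : lam < r) : Nat.card Pt ≤ Nat.card 𝓑 := by
  classical
  have : Fintype 𝓑 := Fintype.ofFinite _
  let N : Pt → (𝓑 → ℚ) := fun x B => if x ∈ B.1 then 1 else 0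
  have hdot : ∀ x y, ∑ B, N x B * N y B = (if x = y then ((r : ℚ) - lam) else 0) + lam := by
    intro x y
    have e : ∑ B, N x B * N y B =
        ((Finset.univ.filter fun B : Set Pt => B ∈ 𝓑 ∧ x ∈ B ∧ y ∈ B).card : ℚ) := by
      have e0 : (Finset.univ.filter fun B : Set Pt => B ∈ 𝓑 ∧ x ∈ B ∧ y ∈ B) =
          (𝓑.toFinset).filter fun B => x ∈ B ∧ y ∈ B := by ext B; simp
      rw [e0, Finset.card_filter, Nat.cast_sum, Finset.sum_subtype 𝓑.toFinset (p := (· ∈ 𝓑))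
        (fun B => Set.mem_toFinset)]
      refine Finset.sum_congr rfl fun B _ => ?_
      by_cases h1 : x ∈ B.1 <;> by_cases h2 : y ∈ B.1 <;> simp [N, h1, h2]
    rw [e]
    split_ifs with h
    · subst h
      have := hr x
      rw [← card_blocksAt] at this
      simp only [and_self]
      change ((blocksAt 𝓑 x).card : ℚ) = _
      rw [this]; ring
    · have := hD.pair_count x y h
      rw [Nat.card_coe_set_eq, Set.ncard_eq_toFinset_card'] at this
      rw [zero_add, ← this]
      congr 2
      ext B; simp; tauto
  have hli : LinearIndependent ℚ N := by
    rw [Fintype.linearIndependent_iff]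
    intro c hc
    have hsq : ∑ B, (∑ x, c x * N x B) * (∑ x, c x * N x B) = 0 := by
      apply Finset.sum_eq_zero
      intro B _
      have := congrFun hc B
      simp only [Finset.sum_apply, Pi.smul_apply, smul_eq_mul, Pi.zero_apply] at this
      rw [this, zero_mul]
    have hexp : ∑ B, (∑ x, c x * N x B) * (∑ x, c x * N x B) =
        ((r : ℚ) - lam) * ∑ x, c x ^ 2 + lam * (∑ x, c x) ^ 2 := by
      have e1 : ∀ B, (∑ x, c x * N x B) * (∑ x, c x * N x B) =
          ∑ x, ∑ y, c x * c y * (N x B * N y B) := by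
        intro B
        rw [Finset.sum_mul_sum]
        refine Finset.sum_congr rfl fun x _ => Finset.sum_congr rfl fun y _ => by ring
      simp_rw [e1]
      rw [Finset.sum_comm]
      have e2 : ∀ x, ∑ B, ∑ y, c x * c y * (N x B * N y B) =
          ((r : ℚ) - lam) * c x ^ 2 + lam * (c x * ∑ y, c y) := by
        intro x
        rw [Finset.sum_comm]
        simp_rw [← Finset.mul_sum, hdot, mul_add, Finset.sum_add_distrib]
        congr 1
        · simp; ring
        · rw [Finset.mul_sum, Finset.mul_sum]
          refine Finset.sum_congr rfl fun y _ => by ring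
      simp_rw [e2]
      rw [Finset.sum_add_distrib, ← Finset.mul_sum, ← Finset.mul_sum, ← Finset.sum_mul, sq (∑ x, c x)]
    rw [hexp] at hsq
    have hpos : (0 : ℚ) < (r : ℚ) - lam := by
      rw [sub_pos]; exact_mod_cast hlt
    have h1 : 0 ≤ ∑ x, c x ^ 2 := Finset.sum_nonneg fun _ _ => sq_nonneg _
    have h2 : (0 : ℚ) ≤ lam * (∑ x, c x) ^ 2 := by positivity
    have h3 : ∑ x, c x ^ 2 = 0 := by nlinarith
    intro x
    have := (Finset.sum_eq_zero_iff_of_nonneg (fun _ _ => sq_nonneg _)).1 h3 x (Finset.mem_univ _)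
    simpa using this
  have := hli.fintype_card_le_finrank
  rw [Module.finrank_fintype_fun_eq_card] at this
  rwa [Nat.card_eq_fintype_card, Nat.card_eq_fintype_card]

variable {G : Type*} [Group G] [MulAction G Pt]

lemma rep_dvd {𝓑 : Set (Set Pt)} (hacts : ActsOn G 𝓑) (hflag : FlagTransitive G 𝓑) (α : Pt)
    (hne : ∃ B ∈ 𝓑, α ∈ B) : repNum 𝓑 α ∣ Nat.card (MulAction.stabilizer G α) := by
  obtain ⟨B, hB, hα⟩ := hne
  have h := Subgroup.card_mul_index (MulAction.stabilizer (MulAction.stabilizer G α) B)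
  rw [MulAction.index_stabilizer] at h
  have e : repNum 𝓑 α = (MulAction.orbit (MulAction.stabilizer G α) B).ncard := by
    rw [repNum, Nat.card_coe_set_eq]
    congr 1
    ext C
    constructor
    · rintro ⟨hC, hαC⟩
      obtain ⟨g, h1, h2⟩ := hflag B hB C hC α hα α hαC
      exact ⟨⟨g, h2⟩, h1⟩
    · rintro ⟨⟨g, hg⟩, rfl⟩
      refine ⟨hacts g B hB, ?_⟩
      have := Set.smul_mem_smul_set (a := g) hα
      rw [MulAction.mem_stabilizer_iff.1 hg] at this
      exact this
  rw [e, ← h]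
  exact Dvd.intro_left _ rfl

/-- All blocks through `α` meet an orbit of `G_α` in the same number of points. -/
lemma rep_dvd_orbit {𝓑 : Set (Set Pt)} {k lam : ℕ} (hD : IsDesign 𝓑 k lam)
    (hflag : FlagTransitive G 𝓑) {α β : Pt} (hαβ : β ≠ α) :
    repNum 𝓑 α ∣ lam * (MulAction.orbit (MulAction.stabilizer G α) β).ncard := by
  classical
  set O := (MulAction.orbit (MulAction.stabilizer G α) β).toFinset with hO
  have hαO : α ∉ O := by
    rw [hO, Set.mem_toFinset]
    rintro ⟨⟨g, hg⟩, h⟩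
    apply hαβ
    have h1 : g • β = α := h
    exact smul_left_cancel g (h1.trans (MulAction.mem_stabilizer_iff.1 hg).symm)
  have h := count_pairs hD O hαO
  rw [Set.ncard_eq_toFinset_card', ← hO, ← h, ← card_blocksAt]
  rcases Finset.eq_empty_or_nonempty (blocksAt 𝓑 α) with h0 | ⟨B, hB⟩
  · rw [h0]; simp
  · refine ⟨(O.filter (· ∈ B)).card, ?_⟩
    rw [← smul_eq_mul, ← Finset.sum_const]
    refine Finset.sum_congr rfl fun C hC => ?_
    obtain ⟨hB, hαB⟩ := mem_blocksAt.1 hB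
    obtain ⟨hC, hαC⟩ := mem_blocksAt.1 hC
    obtain ⟨g, h1, h2⟩ := hflag B hB C hC α hαB α hαC
    symm
    refine Finset.card_bij (fun x _ => g • x) ?_ ?_ ?_
    · intro x hx
      rw [Finset.mem_filter, hO, Set.mem_toFinset] at hx ⊢
      refine ⟨?_, by rw [← h1]; exact Set.smul_mem_smul_set hx.2⟩
      exact (MulAction.mem_orbit_of_mem_orbit (⟨g, h2⟩ : MulAction.stabilizer G α) hx.1)
    · intro x _ y _ hxy
      exact smul_left_cancel g hxy
    · intro y hy
      rw [Finset.mem_filter, hO, Set.mem_toFinset] at hy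
      refine ⟨g⁻¹ • y, ?_, smul_inv_smul _ _⟩
      rw [Finset.mem_filter, hO, Set.mem_toFinset]
      refine ⟨MulAction.mem_orbit_of_mem_orbit ((⟨g, h2⟩ : MulAction.stabilizer G α)⁻¹) hy.1, ?_⟩
      rw [← Set.mem_smul_set_iff_inv_smul_mem, h1]; exact hy.2

end Design

end SLTwo

namespace SLTwo

open OnePoint

/-! ### Groups with socle `PSL(2,q)` -/

section Semi

variable {F : Type*} [Field F] {G : Type*} [Group G]

/-- Conjugation by `g` acts on the image of `SL(2,F)` under `φ` as the field automorphism `τ`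
followed by conjugation by the diagonal matrix `diag(c,1)`; it is recorded on the two root subgroups
`u F` and `l F`, which generate `SL(2,F)`. -/
def Semi (φ : SL2 F →* G) (g : G) (c : Fˣ) (τ : F ≃+* F) : Prop :=
  (∀ x, g * φ (u x) * g⁻¹ = φ (u (c * τ x))) ∧
    ∀ x, g * φ (l x) * g⁻¹ = φ (l ((c⁻¹ : Fˣ) * τ x))

lemma l_mul (x y : F) : l x * l y = l (x + y) := by
  apply ext4 <;> simp [mul00, mul01, mul10, mul11, l]

lemma l_zero : l (0 : F) = 1 := by
  apply ext4 <;> simp [l]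

lemma l_inv (x : F) : (l x)⁻¹ = l (-x) := by
  apply ext4 <;> simp [inv00, inv01, inv10, inv11, l]

variable {φ : SL2 F →* G}

lemma phi_eq (hker : φ.ker = Subgroup.center (SL2 F)) {s t : SL2 F} (h : φ s = φ t) :
    s 0 0 * t 0 1 = s 0 1 * t 0 0 ∧ s 1 0 * t 1 1 = s 1 1 * t 1 0 := by
  have h1 : s * t⁻¹ ∈ Subgroup.center (SL2 F) := by
    rw [← hker, MonoidHom.mem_ker, map_mul, map_inv, h, mul_inv_cancel]
  obtain ⟨h01, h10, -⟩ := (mem_center _).1 h1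
  rw [mul01, inv01, inv11] at h01
  rw [mul10, inv00, inv10] at h10
  exact ⟨by linear_combination -h01, by linear_combination h10⟩

lemma phi_u_inj (hker : φ.ker = Subgroup.center (SL2 F)) {x y : F} (h : φ (u x) = φ (u y)) :
    x = y := by
  have := (phi_eq hker h).1
  simp [u] at this
  exact this.symm

lemma phi_l_inj (hker : φ.ker = Subgroup.center (SL2 F)) {x y : F} (h : φ (l x) = φ (l y)) :
    x = y := by
  have := (phi_eq hker h).2
  simp [l] at this
  exact this

lemma semi_one : Semi φ 1 1 (RingEquiv.refl F) := by
  constructor <;> intro x <;> simp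

lemma semi_mul {g g' : G} {c c' : Fˣ} {τ τ' : F ≃+* F} (h : Semi φ g c τ) (h' : Semi φ g' c' τ') :
    Semi φ (g * g') (c * Units.map τ.toRingHom.toMonoidHom c') (τ'.trans τ) := by
  have e : ∀ t, g * g' * t * (g * g')⁻¹ = g * (g' * t * g'⁻¹) * g⁻¹ := by intro t; group
  constructor
  · intro x
    rw [e, h'.1, h.1]; simp [mul_assoc]
  · intro x
    rw [e, h'.2, h.2]
    congr 2
    rw [map_mul, mul_inv, Units.val_mul, mul_assoc, RingEquiv.trans_apply]
    congr 2

lemma semi_inv {g : G} {c : Fˣ} {τ : F ≃+* F} (h : Semi φ g c τ) :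
    Semi φ g⁻¹ (Units.map τ.symm.toRingHom.toMonoidHom c⁻¹) τ.symm := by
  constructor
  · intro x
    have := h.1 (τ.symm ((c⁻¹ : Fˣ) * x))
    rw [RingEquiv.apply_symm_apply, Units.mul_inv_cancel_left] at this
    rw [← this]
    simp [mul_assoc]
  · intro x
    have := h.2 (τ.symm (c * x))
    rw [RingEquiv.apply_symm_apply, Units.inv_mul_cancel_left] at this
    rw [← this]
    simp [mul_assoc]

lemma semi_unique (hker : φ.ker = Subgroup.center (SL2 F)) {g : G} {c c' : Fˣ} {τ τ' : F ≃+* F}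
    (h : Semi φ g c τ) (h' : Semi φ g c' τ') : c = c' ∧ τ = τ' := by
  have e : ∀ x, (c : F) * τ x = c' * τ' x := fun x => phi_u_inj hker ((h.1 x).symm.trans (h'.1 x))
  have hc : c = c' := by
    have := e 1
    simp only [map_one, mul_one] at this
    exact Units.ext this
  refine ⟨hc, RingEquiv.ext fun x => ?_⟩
  have := e x
  rw [hc] at this
  exact mul_left_cancel₀ (Units.ne_zero _) this

variable [DecidableEq F] [Finite F]

/-- An element acting trivially on the root subgroups centralizes the socle. -/
lemma semi_faithful (hcent : Subgroup.centralizer (φ.range : Set G) = ⊥) {g : G}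
    (h : Semi φ g 1 (RingEquiv.refl F)) : g = 1 := by
  have h1 : (Subgroup.centralizer ({g} : Set G)).comap φ = ⊤ := by
    apply eq_top_of_ul
    · intro x
      rw [Subgroup.mem_comap, Subgroup.mem_centralizer_singleton_iff]
      have := h.1 x
      simp only [Units.val_one, one_mul, RingEquiv.refl_apply] at this
      exact (mul_inv_eq_iff_eq_mul.1 this).symm
    · intro x
      rw [Subgroup.mem_comap, Subgroup.mem_centralizer_singleton_iff]
      have := h.2 x
      simp only [inv_one, Units.val_one, one_mul, RingEquiv.refl_apply] at this
      exact (mul_inv_eq_iff_eq_mul.1 this).symm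
  have h2 : g ∈ Subgroup.centralizer (φ.range : Set G) := by
    rw [Subgroup.mem_centralizer_iff]
    rintro _ ⟨s, rfl⟩
    have : s ∈ (Subgroup.centralizer ({g} : Set G)).comap φ := by rw [h1]; trivial
    rw [Subgroup.mem_comap, Subgroup.mem_centralizer_singleton_iff] at this
    exact this
  rw [hcent] at h2
  exact h2

/-- The antidiagonal matrix with upper entry `x`. -/
def anti (x : Fˣ) : SL2 F := mk 0 x (-((x⁻¹ : Fˣ) : F)) 0 (by simp)

lemma anti_eq (x : Fˣ) : anti x = u (x : F) * l (-((x⁻¹ : Fˣ) : F)) * u (x : F) := by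
  apply ext4 <;> simp [mul00, mul01, mul10, mul11, anti, u, l]

lemma hh_eq (a : Fˣ) : hh a = anti a * (anti 1)⁻¹ := by
  apply ext4 <;> simp [mul00, mul01, mul10, mul11, inv00, inv01, inv10, inv11, anti, hh]

/-- An element normalizing both root subgroups acts semilinearly. -/
lemma semi_of_normalizes (hker : φ.ker = Subgroup.center (SL2 F)) {g : G}
    (hP : ∀ x, ∃ y, g * φ (u x) * g⁻¹ = φ (u y)) (hP' : ∀ y, ∃ x, g * φ (u x) * g⁻¹ = φ (u y))
    (hL : ∀ x, ∃ y, g * φ (l x) * g⁻¹ = φ (l y)) : ∃ c τ, Semi φ g c τ := by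
  choose σ hσ using hP
  choose ρ hρ using hL
  have hinj : Function.Injective σ := by
    intro x y h
    apply phi_u_inj hker
    have := (hσ x).trans ((congrArg (fun t => φ (u t)) h).trans (hσ y).symm)
    exact mul_left_cancel (mul_right_cancel this)
  have hadd : ∀ x y, σ (x + y) = σ x + σ y := by
    intro x y
    apply phi_u_inj hker
    rw [← hσ, ← u_mul, ← u_mul, map_mul, map_mul, ← hσ, ← hσ]; group
  have hsurj : Function.Surjective σ := by
    intro y
    obtain ⟨x, hx⟩ := hP' y
    exact ⟨x, phi_u_inj hker ((hσ x).symm.trans hx)⟩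
  have h0 : σ 0 = 0 := by have := hadd 0 0; simpa using this
  have hne : ∀ x, x ≠ 0 → σ x ≠ 0 := fun x hx h => hx (hinj (h.trans h0.symm))
  -- the image of an antidiagonal element still exchanges the two root subgroups
  have hρσ : ∀ x : Fˣ, ρ (-((x⁻¹ : Fˣ) : F)) = -(σ x)⁻¹ := by
    intro x
    have hx := hne x x.ne_zero
    set a := σ (x : F) with ha
    set b := ρ (-((x⁻¹ : Fˣ) : F)) with hb
    have hg : g * φ (anti x) * g⁻¹ = φ (u a * l b * u a) := by
      rw [anti_eq, map_mul, map_mul, map_mul, map_mul, ← hσ, ← hρ]; group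
    have hu : anti x * u 1 * (anti x)⁻¹ = l (-((x⁻¹ : Fˣ) : F) ^ 2) := by
      apply ext4 <;> simp [mul00, mul01, mul10, mul11, inv00, inv01, inv10, inv11, anti, u, l]
      ring
    have h1 : φ ((u a * l b * u a) * u (σ 1) * (u a * l b * u a)⁻¹) =
        φ (l (ρ (-((x⁻¹ : Fˣ) : F) ^ 2))) := by
      rw [← hρ, ← hu, map_mul, map_mul _ (u a * l b * u a), map_inv, ← hg, ← hσ, map_mul, map_mul,
        map_inv]
      group
    have h2 := (phi_eq hker h1).1
    simp only [mul00, mul01, mul10, mul11, inv00, inv01, inv10, inv11, u, l, mk00, mk01, mk10,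
      mk11] at h2
    have h3 : (1 + a * b) ^ 2 * σ 1 = 0 := by linear_combination -h2
    have h4 : 1 + a * b = 0 := by
      rcases mul_eq_zero.1 h3 with h | h
      · exact pow_eq_zero_iff (two_ne_zero) |>.1 h
      · exact absurd h (hne 1 one_ne_zero)
    field_simp
    linear_combination h4
  have hρ0 : ρ 0 = 0 := by
    apply phi_l_inj hker
    rw [← hρ, l_zero, map_one]; group
  have hanti : ∀ x : Fˣ, g * φ (anti x) * g⁻¹ = φ (anti (Units.mk0 (σ x) (hne x x.ne_zero))) := by
    intro x
    rw [anti_eq, anti_eq, map_mul, map_mul, map_mul, map_mul]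
    simp only [Units.val_mk0, Units.val_inv_eq_inv_val]
    rw [← hρσ, ← hσ, ← hρ]; simp only [Units.val_inv_eq_inv_val]; group
  have hsq : ∀ (a : Fˣ) x, σ ((a : F) ^ 2 * x) * σ 1 ^ 2 = σ a ^ 2 * σ x := by
    intro a x
    have e1 : g * φ (hh a) * g⁻¹ = φ (hh (Units.mk0 (σ a) (hne a a.ne_zero) *
        (Units.mk0 (σ 1) (hne 1 one_ne_zero))⁻¹)) := by
      have e2 : ∀ s t : Fˣ, (hh (s * t⁻¹) : SL2 F) = anti s * (anti t)⁻¹ := by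
        intro s t
        apply ext4 <;> simp [mul00, mul01, mul10, mul11, inv00, inv01, inv10, inv11, anti, hh]
        ring
      have h1 := hanti 1
      simp only [Units.val_one] at h1
      rw [e2, map_mul, map_inv, ← hanti, ← h1, hh_eq, map_mul, map_inv]; group
    have h2 : φ (u (σ ((a : F) ^ 2 * x))) = φ (u (((Units.mk0 (σ a) (hne a a.ne_zero) *
        (Units.mk0 (σ 1) (hne 1 one_ne_zero))⁻¹ : Fˣ) : F) ^ 2 * σ x)) := by
      rw [← hσ, ← hh_conj_u, ← hh_conj_u, map_mul, map_mul, map_inv, map_mul, map_mul, map_inv,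
        ← e1, ← hσ]
      group
    have h3 := phi_u_inj hker h2
    rw [h3]
    have := hne 1 one_ne_zero
    simp only [Units.val_mul, Units.val_mk0, Units.val_inv_eq_inv_val]
    field_simp
  have h1 := hne 1 one_ne_zero
  have hmul : ∀ y x, σ (y * x) * σ 1 = σ y * σ x := by
    have hsq' : ∀ a x, σ (a ^ 2 * x) * σ 1 = σ (a ^ 2) * σ x := by
      intro a x
      by_cases ha : a = 0
      · subst ha; simp [h0]
      · have e1 := hsq (Units.mk0 a ha) x
        have e2 := hsq (Units.mk0 a ha) 1
        simp only [Units.val_mk0, mul_one] at e1 e2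
        have : (σ (a ^ 2 * x) * σ 1 - σ (a ^ 2) * σ x) * (σ 1) = 0 := by
          have e3 : σ (a ^ 2) * σ 1 = σ a ^ 2 := by
            apply mul_right_cancel₀ h1; linear_combination e2
          linear_combination e1 - e3 * σ x
        rcases mul_eq_zero.1 this with h | h
        · linear_combination h
        · exact absurd h h1
    intro y x
    by_cases h2 : (2 : F) = 0
    · -- in characteristic two every element is a square
      have hq : Even (Nat.card F) := two_eq_zero_iff.1 h2
      have := Fintype.ofFinite F
      have hch : ringChar F = 2 := by
        have h2' : ((2 : ℕ) : F) = 0 := by exact_mod_cast h2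
        have hd := (ringChar.spec F 2).1 h2'
        rcases (Nat.dvd_prime Nat.prime_two).1 hd with h | h
        · exact absurd h (CharP.ringChar_ne_one)
        · exact h
      obtain ⟨a, ha⟩ := FiniteField.isSquare_of_char_two hch y
      rw [ha, ← pow_two]
      exact hsq' a x
    · -- otherwise it is a difference of squares
      have hsub : ∀ s t, σ (s - t) = σ s - σ t := by
        intro s t
        have := hadd (s - t) t
        rw [sub_add_cancel] at this; rw [this]; ring
      have hy : y = ((y + 1) / 2) ^ 2 - ((y - 1) / 2) ^ 2 := by
        have : (4 : F) ≠ 0 := by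
          intro h4; apply h2; have : (2 : F) * 2 = 0 := by linear_combination h4
          simpa using this
        field_simp; ring
      rw [hy, sub_mul, hsub, hsub, sub_mul, hsq', hsq']; ring
  let τ : F ≃+* F :=
    { Equiv.ofBijective (fun x => (σ 1)⁻¹ * σ x)
        ⟨fun x y h => hinj (mul_left_cancel₀ (inv_ne_zero h1) h), fun y => by
          obtain ⟨x, hx⟩ := hsurj (σ 1 * y)
          exact ⟨x, by simp only [hx]; field_simp⟩⟩ with
      map_mul' := by
        intro x y
        show (σ 1)⁻¹ * σ (x * y) = (σ 1)⁻¹ * σ x * ((σ 1)⁻¹ * σ y)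
        have := hmul x y
        field_simp
        linear_combination this
      map_add' := by
        intro x y
        show (σ 1)⁻¹ * σ (x + y) = (σ 1)⁻¹ * σ x + (σ 1)⁻¹ * σ y
        rw [hadd]; ring }
  have hτ : ∀ x, τ x = (σ 1)⁻¹ * σ x := fun x => rfl
  refine ⟨Units.mk0 (σ 1) h1, τ, fun x => ?_, fun x => ?_⟩
  · rw [hσ, hτ]; simp only [Units.val_mk0]; rw [mul_inv_cancel_left₀ h1]
  · rw [hρ]
    congr 2
    by_cases hx : x = 0
    · rw [hx, hρ0]; simp
    · have e := hρσ (-(Units.mk0 x hx)⁻¹)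
      have e1 : (-(((-(Units.mk0 x hx)⁻¹)⁻¹ : Fˣ) : F)) = x := by
        rw [inv_neg, inv_inv]; simp
      rw [e1] at e
      rw [e]
      have e2 : σ (((-(Units.mk0 x hx)⁻¹ : Fˣ)) : F) = σ 1 * τ (-x⁻¹) := by
        rw [hτ, mul_inv_cancel_left₀ h1]; simp
      rw [e2, map_neg, map_inv₀]
      have : τ x ≠ 0 := by rwa [Ne, map_eq_zero_iff τ τ.injective]
      simp only [Units.val_inv_eq_inv_val, Units.val_mk0]
      field_simp

end Semi

end SLTwo

namespace SLTwo

open OnePoint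

/-! ### Semilinear and diagonal elements -/

section Count

variable {F : Type*} [Field F] {G : Type*} [Group G]

/-- The elements of `G` acting semilinearly and fixing both root subgroups. -/
def semiGroup (φ : SL2 F →* G) : Subgroup G where
  carrier := {g | ∃ c τ, Semi φ g c τ}
  one_mem' := ⟨_, _, semi_one⟩
  mul_mem' := by
    rintro g g' ⟨c, τ, h⟩ ⟨c', τ', h'⟩
    exact ⟨_, _, semi_mul h h'⟩
  inv_mem' := by
    rintro g ⟨c, τ, h⟩
    exact ⟨_, _, semi_inv h⟩

lemma semi_mul_refl {φ : SL2 F →* G} {g g' : G} {c c' : Fˣ} (h : Semi φ g c (RingEquiv.refl F))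
    (h' : Semi φ g' c' (RingEquiv.refl F)) : Semi φ (g * g') (c * c') (RingEquiv.refl F) := by
  have h1 := semi_mul h h'
  have e1 : (RingEquiv.refl F).trans (RingEquiv.refl F) = RingEquiv.refl F := by ext; simp
  have e2 : Units.map (RingEquiv.refl F).toRingHom.toMonoidHom c' = c' := by ext; simp
  rwa [e1, e2] at h1

lemma semi_inv_refl {φ : SL2 F →* G} {g : G} {c : Fˣ} (h : Semi φ g c (RingEquiv.refl F)) :
    Semi φ g⁻¹ c⁻¹ (RingEquiv.refl F) := by
  have h1 := semi_inv h
  have e1 : (RingEquiv.refl F).symm = RingEquiv.refl F := rfl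
  have e2 : Units.map (RingEquiv.refl F).toRingHom.toMonoidHom c⁻¹ = c⁻¹ := by ext; simp
  rwa [e1, e2] at h1

/-- The elements of `G` inducing diagonal automorphisms. -/
def diagGroup (φ : SL2 F →* G) : Subgroup G where
  carrier := {g | ∃ c, Semi φ g c (RingEquiv.refl F)}
  one_mem' := ⟨_, semi_one⟩
  mul_mem' := by
    rintro g g' ⟨c, h⟩ ⟨c', h'⟩
    exact ⟨_, semi_mul_refl h h'⟩
  inv_mem' := by
    rintro g ⟨c, h⟩
    exact ⟨_, semi_inv_refl h⟩

lemma mem_semiGroup {φ : SL2 F →* G} {g : G} : g ∈ semiGroup φ ↔ ∃ c τ, Semi φ g c τ := Iff.rfl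

lemma mem_diagGroup {φ : SL2 F →* G} {g : G} :
    g ∈ diagGroup φ ↔ ∃ c, Semi φ g c (RingEquiv.refl F) := Iff.rfl

variable {φ : SL2 F →* G} [DecidableEq F] [Finite F]

lemma semi_ext (hcent : Subgroup.centralizer (φ.range : Set G) = ⊥) {g g' : G} {c : Fˣ}
    {τ : F ≃+* F} (h : Semi φ g c τ) (h' : Semi φ g' c τ) : g = g' := by
  have h1 := semi_mul h (semi_inv h')
  have e1 : τ.symm.trans τ = RingEquiv.refl F := by ext; simp
  have e2 : c * Units.map τ.toRingHom.toMonoidHom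
      (Units.map τ.symm.toRingHom.toMonoidHom c⁻¹) = 1 := by
    ext; simp
  rw [e1, e2] at h1
  exact mul_inv_eq_one.1 (semi_faithful hcent h1)

lemma card_diagGroup_dvd (hker : φ.ker = Subgroup.center (SL2 F))
    (hcent : Subgroup.centralizer (φ.range : Set G) = ⊥) :
    Nat.card (diagGroup φ) ∣ Nat.card F - 1 := by
  choose χ hχ using fun g : diagGroup φ => g.2
  let X : diagGroup φ →* Fˣ :=
    { toFun := χ
      map_one' := (semi_unique hker (hχ 1) semi_one).1
      map_mul' := by
        intro g h
        exact (semi_unique hker (hχ (g * h)) (semi_mul_refl (hχ g) (hχ h))).1 }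
  have hX : Function.Injective X := by
    intro g h e
    have e' : χ g = χ h := e
    apply Subtype.ext
    have h1 := hχ g
    rw [e'] at h1
    exact semi_ext hcent h1 (hχ h)
  have := Subgroup.card_dvd_of_injective X hX
  rwa [Nat.card_units] at this

lemma card_semiGroup_dvd [Finite G] (hker : φ.ker = Subgroup.center (SL2 F)) :
    Nat.card (semiGroup φ) ∣ Nat.card (diagGroup φ) * Nat.card (F ≃+* F) := by
  choose χ T hT using fun g : semiGroup φ => g.2
  let Λ : semiGroup φ →* (F ≃+* F) :=
    { toFun := T
      map_one' := (semi_unique hker (hT 1) semi_one).2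
      map_mul' := by
        intro g h
        exact (semi_unique hker (hT (g * h)) (semi_mul (hT g) (hT h))).2 }
  have h1 := Subgroup.card_mul_index Λ.ker
  have h2 : Λ.ker.index ∣ Nat.card (F ≃+* F) := by
    rw [Subgroup.index_ker]
    exact Subgroup.card_subgroup_dvd_card _
  have h3 : Nat.card Λ.ker = Nat.card (diagGroup φ) := by
    refine Nat.card_congr ⟨fun g => ⟨g.1.1, χ g.1, ?_⟩, fun g => ⟨⟨g.1, ?_⟩, ?_⟩, ?_, ?_⟩
    · have e : T g.1 = RingEquiv.refl F := g.2
      have := hT g.1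
      rwa [e] at this
    · obtain ⟨c, hc⟩ := g.2
      exact ⟨c, _, hc⟩
    · obtain ⟨c, hc⟩ := g.2
      exact (semi_unique hker (hT _) hc).2
    · intro g; rfl
    · intro g; rfl
  rw [← h1, h3]
  exact Nat.mul_dvd_mul_left _ h2

lemma diagGroup_comm (hcent : Subgroup.centralizer (φ.range : Set G) = ⊥) {g h : G}
    (hg : g ∈ diagGroup φ) (hh' : h ∈ diagGroup φ) : g * h = h * g := by
  obtain ⟨c, hc⟩ := hg
  obtain ⟨d, hd⟩ := hh'
  refine semi_ext hcent (semi_mul_refl hc hd) ?_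
  rw [mul_comm c d]
  exact semi_mul_refl hd hc

lemma hh_conj_l (a : Fˣ) (x : F) : hh a * l x * (hh a)⁻¹ = l (((a ^ 2)⁻¹ : Fˣ) * x) := by
  apply ext4 <;> simp [mul00, mul01, mul10, mul11, inv00, inv01, inv10, inv11, hh, l]
  field_simp

lemma w_conj_u (x : F) : w * u x * w⁻¹ = l (-x) := by
  apply ext4 <;> simp [mul00, mul01, mul10, mul11, inv00, inv01, inv10, inv11, w, u, l]

lemma w_conj_l (x : F) : w * l x * w⁻¹ = u (-x) := by
  apply ext4 <;> simp [mul00, mul01, mul10, mul11, inv00, inv01, inv10, inv11, w, u, l]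

lemma hh_mem_diagGroup (a : Fˣ) : φ (hh a) ∈ diagGroup φ := by
  refine ⟨a ^ 2, fun x => ?_, fun x => ?_⟩
  · rw [← map_inv, ← map_mul, ← map_mul, hh_conj_u]; simp
  · rw [← map_inv, ← map_mul, ← map_mul, hh_conj_l]; simp

lemma w_conj_diag (hcent : Subgroup.centralizer (φ.range : Set G) = ⊥) {g : G}
    (hg : g ∈ diagGroup φ) : φ w * g * (φ w)⁻¹ = g⁻¹ := by
  obtain ⟨c, hc⟩ := hg
  have h1 := semi_inv_refl hc
  refine semi_ext hcent (c := c⁻¹) (τ := RingEquiv.refl F) ?_ h1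
  have k1 : ∀ x, (φ w)⁻¹ * φ (u x) * φ w = φ (l (-x)) := by
    intro x
    have := w_conj_l (-x)
    rw [neg_neg] at this
    rw [← this]; simp [mul_assoc]
  have k2 : ∀ x, (φ w)⁻¹ * φ (l x) * φ w = φ (u (-x)) := by
    intro x
    have := w_conj_u (-x)
    rw [neg_neg] at this
    rw [← this]; simp [mul_assoc]
  have k3 : ∀ x, φ w * φ (u x) * (φ w)⁻¹ = φ (l (-x)) := by
    intro x; rw [← w_conj_u]; simp
  have k4 : ∀ x, φ w * φ (l x) * (φ w)⁻¹ = φ (u (-x)) := by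
    intro x; rw [← w_conj_l]; simp
  have e : ∀ t, φ w * g * (φ w)⁻¹ * t * (φ w * g * (φ w)⁻¹)⁻¹ =
      φ w * (g * ((φ w)⁻¹ * t * φ w) * g⁻¹) * (φ w)⁻¹ := by intro t; group
  constructor
  · intro x
    rw [e, k1, hc.2, k4]; simp
  · intro x
    rw [e, k2, hc.1, k3]; simp

/-- The image in `G` of the upper unipotent subgroup. -/
def rootGroup (φ : SL2 F →* G) : Subgroup G where
  carrier := {g | ∃ x, φ (u x) = g}
  one_mem' := ⟨0, by rw [u_zero, map_one]⟩
  mul_mem' := by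
    rintro _ _ ⟨x, rfl⟩ ⟨y, rfl⟩
    exact ⟨x + y, by rw [← u_mul, map_mul]⟩
  inv_mem' := by
    rintro _ ⟨x, rfl⟩
    exact ⟨-x, by rw [← u_inv, map_inv]⟩

lemma mem_rootGroup {g : G} : g ∈ rootGroup φ ↔ ∃ x, φ (u x) = g := Iff.rfl

lemma card_rootGroup (hker : φ.ker = Subgroup.center (SL2 F)) :
    Nat.card (rootGroup φ) = Nat.card F := by
  refine (Nat.card_congr (Equiv.ofBijective (fun x : F => (⟨φ (u x), x, rfl⟩ : rootGroup φ))
    ⟨?_, ?_⟩)).symm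
  · intro x y h
    exact phi_u_inj hker (Subtype.ext_iff.1 h)
  · rintro ⟨_, x, rfl⟩
    exact ⟨x, rfl⟩

/-- If `φ.range` meets every coset of `N`, then `N` and its preimage have the same index. -/
lemma index_comap_of_cover {S : Type*} [Group S] (ψ : S →* G) (N : Subgroup G)
    (h : ∀ g, ∃ s, (ψ s)⁻¹ * g ∈ N) : (N.comap ψ).index = N.index := by
  letI := MulAction.compHom (G ⧸ N) ψ
  have hs : ∀ (s : S) (x : G ⧸ N), s • x = ψ s • x := fun _ _ => rfl
  have : MulAction.IsPretransitive S (G ⧸ N) := by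
    refine (MulAction.isPretransitive_iff_base (G := S) ((1 : G) : G ⧸ N)).2 fun y => ?_
    induction y using QuotientGroup.induction_on with
    | H g =>
      obtain ⟨s, hs'⟩ := h g
      refine ⟨s, ?_⟩
      rw [hs, MulAction.Quotient.smul_coe, QuotientGroup.eq]
      simpa using hs'
  have h1 := MulAction.index_stabilizer_of_transitive S ((1 : G) : G ⧸ N)
  have h2 : MulAction.stabilizer S ((1 : G) : G ⧸ N) = N.comap ψ := by
    ext s
    rw [MulAction.mem_stabilizer_iff, hs, MulAction.Quotient.smul_coe, eq_comm, QuotientGroup.eq]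
    simp
  rw [← h2, h1]; rfl

lemma exists_prime_pow (F : Type*) [Field F] [Finite F] :
    ∃ p, p.Prime ∧ CharP F p ∧ Nat.card F = p ^ Nat.card (F ≃+* F) := by
  have := Fintype.ofFinite F
  obtain ⟨p, hp⟩ := CharP.exists F
  have hpp : p.Prime := CharP.char_is_prime F p
  have : Fact p.Prime := ⟨hpp⟩
  letI := ZMod.algebra F p
  refine ⟨p, hpp, hp, ?_⟩
  have h1 : Nat.card (F ≃+* F) = Nat.card (F ≃ₐ[ZMod p] F) := by
    refine Nat.card_congr ⟨fun e => AlgEquiv.ofRingEquiv (f := e) ?_, fun e => e.toRingEquiv, ?_, ?_⟩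
    · intro r
      exact congrArg (fun k : ZMod p →+* F => k r)
        (Subsingleton.elim ((e : F →+* F).comp (algebraMap (ZMod p) F)) (algebraMap (ZMod p) F))
    · intro e; rfl
    · intro e; rfl
  rw [h1, IsGalois.card_aut_eq_finrank, Module.natCard_eq_pow_finrank (K := ZMod p), Nat.card_zmod]

end Count

end SLTwo

namespace SLTwo

open OnePoint

/-! ### The order of a group with socle `PSL(2,q)` -/

section CardG

variable {F : Type*} [Field F] {G : Type*} [Group G] {φ : SL2 F →* G} [DecidableEq F] [Finite F]

lemma mem_norm {g : G} (P : Subgroup G) : g ∈ Subgroup.normalizer (P : Set G) ↔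
    ∀ h, h ∈ P ↔ g * h * g⁻¹ ∈ P := Subgroup.mem_normalizer_iff

lemma comap_normalizer_rootGroup (hker : φ.ker = Subgroup.center (SL2 F)) :
    (Subgroup.normalizer (rootGroup φ : Set G)).comap φ = borel F := by
  ext s
  rw [Subgroup.mem_comap, mem_norm, mem_borel]
  constructor
  · intro h
    obtain ⟨y, hy⟩ := (h (φ (u 1))).1 ⟨1, rfl⟩
    rw [← map_inv, ← map_mul, ← map_mul] at hy
    have := (phi_eq hker hy).2
    simp only [mul00, mul01, mul10, mul11, inv00, inv01, inv10, inv11, u, mk00, mk01, mk10,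
      mk11] at this
    have h2 : s 1 0 ^ 2 = 0 := by linear_combination this
    exact pow_eq_zero_iff two_ne_zero |>.1 h2
  · intro h0
    have key : ∀ (t : SL2 F), t 1 0 = 0 → ∀ x, t * u x * t⁻¹ = u (t 0 0 ^ 2 * x) := by
      intro t ht x
      have hd := det_eq t
      rw [ht] at hd
      apply ext4 <;> simp only [mul00, mul01, mul10, mul11, inv00, inv01, inv10, inv11, u, mk00,
        mk01, mk10, mk11, ht]
      · linear_combination hd
      · ring
      · ring
      · linear_combination hd
    have h0' : (s⁻¹ : SL2 F) 1 0 = 0 := by rw [inv10, h0, neg_zero]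
    intro g
    constructor
    · rintro ⟨x, rfl⟩
      exact ⟨s 0 0 ^ 2 * x, by rw [← key s h0, map_mul, map_mul, map_inv]⟩
    · rintro ⟨x, hx⟩
      refine ⟨(s⁻¹ : SL2 F) 0 0 ^ 2 * x, ?_⟩
      rw [← key _ h0', inv_inv, map_mul, map_mul, map_inv, hx]; group

/-- The Frattini argument for the root subgroup. -/
lemma frattini [Finite G] (hker : φ.ker = Subgroup.center (SL2 F)) (hnorm : φ.range.Normal) (g : G) :
    ∃ s, (φ s)⁻¹ * g ∈ Subgroup.normalizer (rootGroup φ : Set G) := by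
  obtain ⟨p, hp, hch, hcard⟩ := exists_prime_pow F
  have : Fact p.Prime := ⟨hp⟩
  have hle : rootGroup φ ≤ φ.range := by
    rintro _ ⟨x, rfl⟩; exact ⟨_, rfl⟩
  have hc : Nat.card ((rootGroup φ).subgroupOf φ.range) = Nat.card F := by
    rw [← card_rootGroup hker]
    exact Nat.card_congr (Subgroup.subgroupOfEquivOfLe hle).toEquiv
  have hq2 : 2 ≤ Nat.card F := Finite.one_lt_card
  have hpg : IsPGroup p ((rootGroup φ).subgroupOf φ.range) := by
    apply IsPGroup.of_card (n := Nat.card (F ≃+* F)); rw [hc, hcard]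
  have hpq : p ∣ Nat.card F := by
    rw [hcard]; apply dvd_pow_self
    intro h0; rw [h0, pow_zero] at hcard; omega
  have hidx : ¬ p ∣ ((rootGroup φ).subgroupOf φ.range).index := by
    intro hd
    have h1 := Subgroup.card_mul_index ((rootGroup φ).subgroupOf φ.range)
    have h2 : Nat.card φ.range ∣ Nat.card (SL2 F) := Subgroup.card_range_dvd φ
    rw [← h1, hc, card_SL2] at h2
    obtain ⟨m, hm⟩ : ∃ m, Nat.card F = m + 1 := ⟨Nat.card F - 1, by omega⟩
    have h3 : ((rootGroup φ).subgroupOf φ.range).index ∣ (Nat.card F + 1) * (Nat.card F - 1) := by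
      apply Nat.dvd_of_mul_dvd_mul_left (by omega : 0 < Nat.card F)
      convert h2 using 1; ring
    have h4 := hd.trans h3
    rcases hp.dvd_mul.1 h4 with h | h
    · have := (Nat.dvd_add_right hpq).1 h
      exact hp.one_lt.ne' (Nat.dvd_one.1 this)
    · have := (Nat.dvd_sub hpq h)
      rw [Nat.sub_sub_self (by omega)] at this
      exact hp.one_lt.ne' (Nat.dvd_one.1 this)
  have h1 := Sylow.normalizer_sup_eq_top (hpg.toSylow hidx)
  have h2 : ((hpg.toSylow hidx : Subgroup φ.range).map φ.range.subtype) = rootGroup φ := by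
    rw [IsPGroup.toSylow_coe]
    exact Subgroup.map_subgroupOf_eq_of_le hle
  have h3 : g⁻¹ ∈ Subgroup.normalizer (rootGroup φ : Set G) ⊔ φ.range := by
    rw [← h2]; erw [h1]; trivial
  obtain ⟨n, hn, _, ⟨s, rfl⟩, e⟩ := Subgroup.mem_sup_of_normal_right.1 h3
  refine ⟨s⁻¹, ?_⟩
  have : (φ s⁻¹)⁻¹ * g = n⁻¹ := by
    rw [map_inv, inv_inv, ← inv_inv g, ← e]; group
  rw [this]
  exact inv_mem hn

lemma index_normalizer [Finite G] (hker : φ.ker = Subgroup.center (SL2 F))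
    (hnorm : φ.range.Normal) :
    (Subgroup.normalizer (rootGroup φ : Set G)).index = Nat.card F + 1 := by
  rw [← index_comap_of_cover φ _ (frattini hker hnorm), comap_normalizer_rootGroup hker]
  rw [MulAction.index_stabilizer_of_transitive, card_line]

lemma u_notMem_semi (hker : φ.ker = Subgroup.center (SL2 F)) {x : F} (h : φ (u x) ∈ semiGroup φ) :
    x = 0 := by
  obtain ⟨c, τ, h⟩ := h
  have h1 := h.2 1
  rw [← map_inv, ← map_mul, ← map_mul] at h1
  have := (phi_eq hker h1).1
  simp only [mul00, mul01, mul10, mul11, inv00, inv01, inv10, inv11, u, l, mk00, mk01, mk10,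
      mk11] at this
  have h2 : x ^ 2 = 0 := by linear_combination this
  exact pow_eq_zero_iff two_ne_zero |>.1 h2

lemma semi_le_norm : semiGroup φ ≤ Subgroup.normalizer (rootGroup φ : Set G) := by
  have key : ∀ g ∈ semiGroup φ, ∀ h, h ∈ rootGroup φ → g * h * g⁻¹ ∈ rootGroup φ := by
    rintro g ⟨c, τ, h⟩ _ ⟨x, rfl⟩
    exact ⟨_, (h.1 x).symm⟩
  intro g hg
  rw [mem_norm]
  intro h
  refine ⟨key g hg h, fun hh' => ?_⟩
  have := key g⁻¹ (inv_mem hg) _ hh'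
  simpa [mul_assoc] using this

lemma cover_norm [Finite G] (hker : φ.ker = Subgroup.center (SL2 F)) (hnorm : φ.range.Normal) {n : G}
    (hn : n ∈ Subgroup.normalizer (rootGroup φ : Set G)) : ∃ x, (φ (u x))⁻¹ * n ∈ semiGroup φ := by
  have hb : ∀ s, φ s ∈ Subgroup.normalizer (rootGroup φ : Set G) ↔ s 1 0 = 0 := by
    intro s
    rw [← mem_borel, ← comap_normalizer_rootGroup hker, Subgroup.mem_comap]
  obtain ⟨s, hs⟩ := frattini hker hnorm (n * φ w)
  have hs0 : s 1 0 ≠ 0 := by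
    intro h0
    have h1 := mul_mem (inv_mem hn) (mul_mem ((hb s).2 h0) hs)
    have : n⁻¹ * (φ s * ((φ s)⁻¹ * (n * φ w))) = φ w := by group
    rw [this, hb] at h1
    simp [w] at h1
  refine ⟨s 0 0 / s 1 0, ?_⟩
  set x := s 0 0 / s 1 0 with hx
  set n' := (φ (u x))⁻¹ * n with hn'
  set s' := (u x)⁻¹ * s with hs'
  set m := (φ s)⁻¹ * (n * φ w) with hm
  have hn'N : n' ∈ Subgroup.normalizer (rootGroup φ : Set G) := by
    apply mul_mem (inv_mem _) hn
    rw [hb]; simp [u]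
  have hs'0 : s' 0 0 = 0 := by
    rw [hs', u_inv]; simp [mul00, u, hx]; field_simp; ring
  have hd := det_eq s'
  rw [hs'0] at hd
  have key : ∀ z, s' * u z * s'⁻¹ = l (-(s' 1 0) ^ 2 * z) := by
    intro z
    apply ext4 <;> simp only [mul00, mul01, mul10, mul11, inv00, inv01, inv10, inv11, u, l, mk00,
        mk01, mk10, mk11, hs'0]
    · linear_combination hd
    · ring
    · ring
    · linear_combination hd
  have e1 : n' * φ w = φ s' * m := by
    rw [hn', hs', hm, map_mul, map_inv]; group
  apply semi_of_normalizes hker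
  · intro y
    obtain ⟨z, hz⟩ := ((mem_norm _).1 hn'N (φ (u y))).1 ⟨y, rfl⟩
    exact ⟨z, hz.symm⟩
  · intro y
    obtain ⟨z, hz⟩ := ((mem_norm _).1 (inv_mem hn'N) (φ (u y))).1 ⟨y, rfl⟩
    exact ⟨z, by rw [hz]; group⟩
  · intro y
    obtain ⟨z, hz⟩ := ((mem_norm _).1 hs (φ (u (-y)))).1 ⟨_, rfl⟩
    refine ⟨-(s' 1 0) ^ 2 * z, ?_⟩
    have e2 : l y = w * u (-y) * w⁻¹ := by rw [w_conj_u, neg_neg]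
    rw [e2, map_mul, map_mul, map_inv]
    have e3 : n' * (φ w * φ (u (-y)) * (φ w)⁻¹) * n'⁻¹ =
        (n' * φ w) * φ (u (-y)) * (n' * φ w)⁻¹ := by group
    clear_value s' n' m
    rw [e3, e1, ← key, map_mul, map_mul, map_inv, hz]; group

lemma card_normalizer [Finite G] (hker : φ.ker = Subgroup.center (SL2 F)) (hnorm : φ.range.Normal) :
    Nat.card (Subgroup.normalizer (rootGroup φ : Set G)) =
      Nat.card F * Nat.card (semiGroup φ) := by
  have hu : ∀ x, φ (u x) ∈ Subgroup.normalizer (rootGroup φ : Set G) := by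
    intro x
    rw [← Subgroup.mem_comap, comap_normalizer_rootGroup hker]; exact u_mem_borel x
  rw [← Nat.card_prod]
  refine (Nat.card_congr (Equiv.ofBijective (fun t : F × semiGroup φ =>
    (⟨φ (u t.1) * t.2, mul_mem (hu _) (semi_le_norm t.2.2)⟩ :
      Subgroup.normalizer (rootGroup φ : Set G))) ⟨?_, ?_⟩)).symm
  · rintro ⟨x, a⟩ ⟨y, b⟩ h
    have h1 : φ (u x) * a = φ (u y) * b := Subtype.ext_iff.1 h
    have h2 : φ (u (x - y)) ∈ semiGroup φ := by
      have : φ (u (x - y)) = b * (a : G)⁻¹ := by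
        rw [sub_eq_add_neg, add_comm, ← u_mul, ← u_inv, map_mul, map_inv, eq_mul_inv_iff_mul_eq,
          mul_assoc, h1]
        group
      rw [this]
      exact mul_mem b.2 (inv_mem a.2)
    have h3 := sub_eq_zero.1 (u_notMem_semi hker h2)
    subst h3
    have h4 : a = b := Subtype.ext (mul_left_cancel h1)
    rw [h4]
  · rintro ⟨n, hn⟩
    obtain ⟨x, hx⟩ := cover_norm hker hnorm hn
    exact ⟨(x, ⟨_, hx⟩), Subtype.ext (by simp)⟩

lemma card_G [Finite G] (hker : φ.ker = Subgroup.center (SL2 F)) (hnorm : φ.range.Normal) :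
    Nat.card G = (Nat.card F + 1) * (Nat.card F * Nat.card (semiGroup φ)) := by
  rw [← Subgroup.card_mul_index (Subgroup.normalizer (rootGroup φ : Set G)),
    index_normalizer hker hnorm, card_normalizer hker hnorm, mul_comm]

/-- The order of a group with socle `PSL(2,q)` in terms of its diagonal part. -/
lemma card_G_dvd [Finite G] (hker : φ.ker = Subgroup.center (SL2 F)) (hnorm : φ.range.Normal) :
    Nat.card G ∣ (Nat.card F + 1) * (Nat.card F * (Nat.card (diagGroup φ) * Nat.card (F ≃+* F))) := by
  rw [card_G hker hnorm]
  exact Nat.mul_dvd_mul_left _ (Nat.mul_dvd_mul_left _ (card_semiGroup_dvd hker))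

lemma card_G_dvd' [Finite G] (hker : φ.ker = Subgroup.center (SL2 F)) (hnorm : φ.range.Normal)
    (hcent : Subgroup.centralizer (φ.range : Set G) = ⊥) :
    Nat.card G ∣ Nat.card (SL2 F) * Nat.card (F ≃+* F) := by
  refine (card_G_dvd hker hnorm).trans ?_
  rw [card_SL2, mul_assoc, mul_assoc]
  exact Nat.mul_dvd_mul_left _ (Nat.mul_dvd_mul_left _
    (Nat.mul_dvd_mul_right (card_diagGroup_dvd hker hcent) _))

end CardG

end SLTwo

namespace SLTwo

open OnePoint

/-! ### The action on points -/

section Action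

variable {F : Type*} [Field F] {G : Type*} [Group G] {φ : SL2 F →* G} [DecidableEq F] [Finite F]
  {Pt : Type*} [Finite Pt] [MulAction G Pt]

/-- The preimage in `SL(2,F)` of the stabilizer of a point. -/
abbrev ptStab (φ : SL2 F →* G) (α : Pt) : Subgroup (SL2 F) := (MulAction.stabilizer G α).comap φ

lemma mem_ptStab {α : Pt} {s : SL2 F} : s ∈ ptStab φ α ↔ φ s • α = α := Iff.rfl

lemma index_ptStab (htr : ∀ α β : Pt, ∃ s, φ s • α = β) (α : Pt) :
    (ptStab φ α).index = Nat.card Pt := by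
  have : MulAction.IsPretransitive G Pt := ⟨fun x y => (htr x y).imp' φ fun s h => h⟩
  rw [index_comap_of_cover, MulAction.index_stabilizer_of_transitive]
  intro g
  obtain ⟨s, hs⟩ := htr α (g • α)
  refine ⟨s, ?_⟩
  rw [MulAction.mem_stabilizer_iff, mul_smul, ← hs, inv_smul_smul]

lemma card_ptStab (htr : ∀ α β : Pt, ∃ s, φ s • α = β) (α : Pt) :
    Nat.card (ptStab φ α) * Nat.card Pt = Nat.card (SL2 F) := by
  rw [← index_ptStab htr α, Subgroup.card_mul_index]

lemma card_stab (htr : ∀ α β : Pt, ∃ s, φ s • α = β) (α : Pt) :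
    Nat.card (MulAction.stabilizer G α) * Nat.card Pt = Nat.card G := by
  have : MulAction.IsPretransitive G Pt := ⟨fun x y => (htr x y).imp' φ fun s h => h⟩
  rw [← MulAction.index_stabilizer_of_transitive G α, Subgroup.card_mul_index]

lemma card_stab_dvd [Finite G] (hker : φ.ker = Subgroup.center (SL2 F)) (hnorm : φ.range.Normal)
    (hcent : Subgroup.centralizer (φ.range : Set G) = ⊥)
    (htr : ∀ α β : Pt, ∃ s, φ s • α = β) (α : Pt) :
    Nat.card (MulAction.stabilizer G α) ∣ Nat.card (ptStab φ α) * Nat.card (F ≃+* F) := by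
  have h := card_G_dvd' hker hnorm hcent
  rw [← card_stab htr α, ← card_ptStab htr α, mul_right_comm] at h
  have : Nonempty Pt := ⟨α⟩
  exact Nat.dvd_of_mul_dvd_mul_right Nat.card_pos h

lemma ptStab_ne_top (htr : ∀ α β : Pt, ∃ s, φ s • α = β) (hv : 1 < Nat.card Pt) (α : Pt) :
    ptStab φ α ≠ ⊤ := by
  intro h
  have := index_ptStab htr α
  rw [h, Subgroup.index_top] at this
  omega

/-- A subgroup containing the upper unipotent matrices and a matrix that is not upper triangular
is everything. -/
lemma eq_top_of_u_of_notMem {M : Subgroup (SL2 F)} (hu : ∀ x, u x ∈ M) {s : SL2 F} (hs : s ∈ M)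
    (h0 : s 1 0 ≠ 0) : M = ⊤ := by
  apply eq_top_of_ul hu
  intro x
  have h1 : l x = u (-(s 0 0 / s 1 0)) * s * u (-x / (s 1 0) ^ 2) * s⁻¹ * u (s 0 0 / s 1 0) := by
    have hd := det_eq s
    set a := s 0 0 with ha
    set b := s 0 1 with hb
    set c := s 1 0 with hc
    set d := s 1 1 with hd'
    have hbb : b = (a * d - 1) / c := by field_simp; linear_combination -hd
    apply ext4 <;> simp only [mul00, mul01, mul10, mul11, inv00, inv01, inv10, inv11, u, l, mk00,
        mk01, mk10, mk11, ← ha, ← hb, ← hc, ← hd', hbb] <;> field_simp <;> ring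
  rw [h1]
  exact mul_mem (mul_mem (mul_mem (mul_mem (hu _) hs) (hu _)) (inv_mem hs)) (hu _)

lemma fixed_of_pgroup {ℓ : ℕ} [Fact ℓ.Prime] {K : Subgroup G} (hK : IsPGroup ℓ K)
    (hv : ¬ ℓ ∣ Nat.card Pt) : ∃ α : Pt, K ≤ MulAction.stabilizer G α := by
  obtain ⟨α, hα⟩ := hK.nonempty_fixed_point_of_prime_not_dvd_card Pt hv
  exact ⟨α, fun g hg => hα ⟨g, hg⟩⟩

/-- If the characteristic does not divide the number of points, a root subgroup fixes a point, and
the point stabilizers are Borel subgroups. -/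
lemma coatom_of_not_dvd [Finite G] (hker : φ.ker = Subgroup.center (SL2 F)) (hnorm : φ.range.Normal)
    (htr : ∀ α β : Pt, ∃ s, φ s • α = β) (hv : 1 < Nat.card Pt)
    (hcoat : ∀ α : Pt, IsCoatom (MulAction.stabilizer G α))
    {p : ℕ} (hp : p.Prime) (hpq : Nat.card F = p ^ Nat.card (F ≃+* F)) (hpv : ¬ p ∣ Nat.card Pt) :
    ∃ α : Pt, IsCoatom (ptStab φ α) := by
  have : Fact p.Prime := ⟨hp⟩
  have hP : IsPGroup p (rootGroup φ) := by
    apply IsPGroup.of_card (n := Nat.card (F ≃+* F)); rw [card_rootGroup hker, hpq]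
  obtain ⟨α, hα⟩ := fixed_of_pgroup hP hpv
  have hu : ∀ x, u x ∈ ptStab φ α := fun x => hα ⟨x, rfl⟩
  have hle : ∀ s ∈ ptStab φ α, s 1 0 = 0 := by
    intro s hs
    by_contra h0
    exact ptStab_ne_top htr hv α (eq_top_of_u_of_notMem hu hs h0)
  have hle' : MulAction.stabilizer G α ≤ Subgroup.normalizer (rootGroup φ : Set G) := by
    intro g hg
    obtain ⟨s, hs⟩ := frattini hker hnorm g
    set n := (φ s)⁻¹ * g with hn
    have hs0 : s 1 0 = 0 := by
      obtain ⟨z, hz⟩ := ((mem_norm _).1 (inv_mem hs) (φ (u 1))).1 ⟨1, rfl⟩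
      have h1 : s * u 1 * s⁻¹ ∈ ptStab φ α := by
        rw [Subgroup.mem_comap, map_mul, map_mul, map_inv]
        have : φ s * φ (u 1) * (φ s)⁻¹ = g * φ (u z) * g⁻¹ := by
          rw [hz, hn]; group
        rw [this]
        exact mul_mem (mul_mem hg (hu z)) (inv_mem hg)
      have h2 := hle _ h1
      simp only [mul00, mul01, mul10, mul11, inv00, inv01, inv10, inv11, u, mk00, mk01, mk10,
        mk11] at h2
      have h3 : s 1 0 ^ 2 = 0 := by linear_combination -h2
      exact pow_eq_zero_iff two_ne_zero |>.1 h3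
    have h4 : φ s ∈ Subgroup.normalizer (rootGroup φ : Set G) := by
      rw [← Subgroup.mem_comap, comap_normalizer_rootGroup hker, mem_borel]; exact hs0
    have := mul_mem h4 hs
    rwa [hn, mul_inv_cancel_left] at this
  have hne : Subgroup.normalizer (rootGroup φ : Set G) ≠ ⊤ := by
    intro h
    have h1 := index_normalizer hker hnorm
    rw [h, Subgroup.index_top] at h1
    have : 0 < Nat.card F := Nat.card_pos
    omega
  have heq : MulAction.stabilizer G α = Subgroup.normalizer (rootGroup φ : Set G) := by
    by_contra hne'
    exact hne ((hcoat α).2 _ (lt_of_le_of_ne hle' hne'))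
  refine ⟨α, ?_⟩
  rw [ptStab, heq, comap_normalizer_rootGroup hker]
  exact borel_coatom

/-- An `ℓ`-subgroup `K` with `ℓ ∤ v` fixes a point `α`. If it fixes no other point, its normalizer
fixes `α`; otherwise `K` fixes some `β ≠ α`, and the length of the orbit of `β` under `G_α` is a
multiple of `R` dividing `|G_α| / |K|`. -/
lemma normalizer_or_dvd [Finite G] {R ℓ : ℕ} (hℓ : ℓ.Prime) {K : Subgroup G} (hK : IsPGroup ℓ K)
    (hv : ¬ ℓ ∣ Nat.card Pt)
    (hR : ∀ α β : Pt, β ≠ α → R ∣ (MulAction.orbit (MulAction.stabilizer G α) β).ncard) :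
    (∃ α : Pt, Subgroup.normalizer (K : Set G) ≤ MulAction.stabilizer G α) ∨
      Nat.card K * R ∣ Nat.card G := by
  have : Fact ℓ.Prime := ⟨hℓ⟩
  obtain ⟨α, hα⟩ := fixed_of_pgroup hK hv
  by_cases h : ∃ β : Pt, β ≠ α ∧ K ≤ MulAction.stabilizer G β
  · right
    obtain ⟨β, hne, hβ⟩ := h
    have h1 := Subgroup.card_mul_index (MulAction.stabilizer (MulAction.stabilizer G α) β)
    rw [MulAction.index_stabilizer] at h1
    have h2 : Nat.card K ∣ Nat.card (MulAction.stabilizer (MulAction.stabilizer G α) β) := by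
      let ι : K →* MulAction.stabilizer (MulAction.stabilizer G α) β :=
        { toFun := fun g => ⟨⟨g.1, hα g.2⟩, hβ g.2⟩
          map_one' := rfl
          map_mul' := fun _ _ => rfl }
      refine Subgroup.card_dvd_of_injective ι fun a b hab => ?_
      have : ((ι a).1 : G) = (ι b).1 := by rw [hab]
      exact Subtype.ext this
    refine (Nat.mul_dvd_mul h2 (hR α β hne)).trans ?_
    rw [h1]
    exact Subgroup.card_subgroup_dvd_card _
  · left
    push Not at h
    refine ⟨α, fun g hg => ?_⟩
    by_contra hne
    refine h (g • α) hne fun t ht => ?_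
    have h1 : g⁻¹ * t * g ∈ K := by
      have := ((mem_norm K).1 (inv_mem hg) t).1 ht
      simpa using this
    have h2 := hα h1
    rw [MulAction.mem_stabilizer_iff] at h2 ⊢
    rw [mul_smul, mul_smul, inv_smul_eq_iff] at h2
    exact h2

end Action

end SLTwo

namespace SLTwo

open OnePoint

/-! ### Point stabilizers and tori -/

section Branch

variable {F : Type*} [Field F] {G : Type*} [Group G] {φ : SL2 F →* G} [DecidableEq F] [Finite F]
  {Pt : Type*} [Finite Pt] [MulAction G Pt]

lemma aut_card_of_prime (hq : (Nat.card F).Prime) : Nat.card (F ≃+* F) = 1 := by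
  obtain ⟨p, hp, -, h⟩ := exists_prime_pow F
  rw [h] at hq
  exact Nat.Prime.eq_one_of_pow hq

lemma aut_card_nine (hq : Nat.card F = 9) : Nat.card (F ≃+* F) = 2 := by
  obtain ⟨p, hp, -, h⟩ := exists_prime_pow F
  rw [hq] at h
  have h1 : p ∣ 3 ^ 2 := by
    norm_num; rw [h]; apply dvd_pow_self
    intro h0; rw [h0] at h; norm_num at h
  have h2 := (Nat.prime_dvd_prime_iff_eq hp Nat.prime_three).1 (hp.dvd_of_dvd_pow h1)
  subst h2
  have : 3 ^ 2 = 3 ^ Nat.card (F ≃+* F) := by rw [← h]; norm_num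
  exact (Nat.pow_right_injective (by norm_num : 2 ≤ 3) this).symm

lemma card_lt_of_lt {S : Type*} [Group S] [Finite S] {H M : Subgroup S} (h : H < M) :
    Nat.card H < Nat.card M := by
  by_contra hle
  exact h.ne (Subgroup.eq_of_le_of_card_ge h.le (not_lt.1 hle))

/-- The degrees 28 and 10, coming from torus normalizers that fail to be maximal for `q = 7, 5`,
are incompatible with the divisibility conditions on `R`. -/
lemma small_absurd {R v : ℕ} (hR2 : 2 ≤ R) (hRv : R ∣ v - 1) (hRb : 3 * R ∣ 12)
    (hv : v = 28 ∨ v = 10) : False := by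
  have h1 : R ∣ 4 := by
    have : 3 * R ∣ 3 * 4 := hRb
    exact Nat.dvd_of_mul_dvd_mul_left (by norm_num) this
  have h2 : R ≤ 4 := Nat.le_of_dvd (by norm_num) h1
  rcases hv with rfl | rfl <;> interval_cases R <;> revert h1 hRv <;> decide

/-- A point stabilizer containing the normalizer of a split torus is maximal: the small exceptions
of `split_lemma` contradict `R ∣ v - 1` and `3 R ∣ |G_α|`. -/
lemma coatom_of_split [Finite G] (hker : φ.ker = Subgroup.center (SL2 F)) (hnorm : φ.range.Normal)
    (hcent : Subgroup.centralizer (φ.range : Set G) = ⊥)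
    (htr : ∀ α β : Pt, ∃ s, φ s • α = β) (hv : 1 < Nat.card Pt) (hq : 4 ≤ Nat.card F)
    {R : ℕ} (hR2 : 2 ≤ R) (hRv : R ∣ Nat.card Pt - 1)
    (hRst : ∀ α : Pt, 3 * R ∣ Nat.card (MulAction.stabilizer G α))
    {α : Pt} (hT : ∀ a : Fˣ, hh a ∈ ptStab φ α) (hw : w ∈ ptStab φ α) :
    IsCoatom (ptStab φ α) := by
  refine ⟨ptStab_ne_top htr hv α, fun M hM => ?_⟩
  by_contra hMt
  have hlt := card_lt_of_lt hM
  have h1 := split_lemma hq hT hw (ptStab_ne_top htr hv α)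
  have h2 := split_lemma hq (fun a => hM.le (hT a)) (hM.le hw) hMt
  have hd := (hRst α).trans (card_stab_dvd hker hnorm hcent htr α)
  have h3 : 3 ∣ Nat.card (ptStab φ α) * Nat.card (F ≃+* F) := (Dvd.intro _ rfl).trans hd
  have hc := card_ptStab htr α
  rw [card_SL2] at hc
  rcases h2 with h2 | ⟨hq9, h2⟩ | ⟨hq', h2⟩
  · rcases h1 with h1 | ⟨hq9, h1⟩ | ⟨hq', h1⟩
    · omega
    · rw [hq9] at h2; omega
    · have : 2 * (Nat.card F - 1) ≤ (Nat.card F - 1) * (Nat.card F + 1) := by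
        rw [mul_comm]; exact Nat.mul_le_mul_left _ (by omega)
      omega
  · rw [aut_card_nine hq9] at h3
    rw [hq9] at h1
    have : Nat.card (ptStab φ α) = 16 := by omega
    rw [this] at h3
    omega
  · have h1' : Nat.card (ptStab φ α) = 2 * (Nat.card F - 1) := by
      rcases h1 with h1 | ⟨hq9, h1⟩ | ⟨hq', h1⟩
      · exact h1
      · omega
      · omega
    have hf : Nat.card (F ≃+* F) = 1 := by
      apply aut_card_of_prime
      rcases hq' with h | h | h <;> rw [h] <;> norm_num
    rw [h1', hf] at h3 hd
    rw [h1'] at hc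
    rcases hq' with h | h | h <;> rw [h] at h3 hd hc
    · omega
    · exact small_absurd hR2 hRv hd (Or.inl (by omega))
    · omega

/-- A point stabilizer containing the normalizer of a nonsplit torus is maximal: the small
exceptions of `nonsplit_lemma` contradict `R ∣ v - 1` and `3 R ∣ |G_α|`. -/
lemma coatom_of_nonsplit [Finite G] (hker : φ.ker = Subgroup.center (SL2 F)) (hnorm : φ.range.Normal)
    (hcent : Subgroup.centralizer (φ.range : Set G) = ⊥)
    (htr : ∀ α β : Pt, ∃ s, φ s • α = β) (hv : 1 < Nat.card Pt) (hq : 4 ≤ Nat.card F)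
    {R : ℕ} (hR2 : 2 ≤ R) (hRv : R ∣ Nat.card Pt - 1)
    (hRst : ∀ α : Pt, 3 * R ∣ Nat.card (MulAction.stabilizer G α))
    {τ : F} (hτ : NonsplitTrace τ) {α : Pt}
    (hN : nonsplitNormalizer τ ≤ ptStab φ α) : IsCoatom (ptStab φ α) := by
  refine ⟨ptStab_ne_top htr hv α, fun M hM => ?_⟩
  by_contra hMt
  have hlt := card_lt_of_lt hM
  have h1 := nonsplit_lemma hq hτ hN (ptStab_ne_top htr hv α)
  have h2 := nonsplit_lemma hq hτ (hN.trans hM.le) hMt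
  have hd := (hRst α).trans (card_stab_dvd hker hnorm hcent htr α)
  have h3 : 3 ∣ Nat.card (ptStab φ α) * Nat.card (F ≃+* F) := (Dvd.intro _ rfl).trans hd
  have hc := card_ptStab htr α
  rw [card_SL2] at hc
  have h1' : Nat.card (ptStab φ α) = 2 * (Nat.card F + 1) := by omega
  rw [h1'] at h3 hd hc
  rcases h2 with h2 | ⟨h, h2⟩ | ⟨h, h2⟩ | ⟨h, h2⟩
  · omega
  · rw [aut_card_of_prime (by rw [h]; norm_num), h] at h3 hd
    rw [h] at hc
    exact small_absurd hR2 hRv hd (Or.inr (by omega))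
  · rw [aut_card_of_prime (by rw [h]; norm_num), h] at h3
    omega
  · rw [aut_card_nine h, h] at h3
    omega

end Branch

section Prime

variable {F : Type*} [Field F] {G : Type*} [Group G] {φ : SL2 F →* G} [DecidableEq F] [Finite F]
  {Pt : Type*} [Finite Pt] [MulAction G Pt]

lemma mem_norm_of_pm {K : Subgroup G} {g : G} (h : ∀ t ∈ K, g * t * g⁻¹ = t ∨ g * t * g⁻¹ = t⁻¹) :
    g ∈ Subgroup.normalizer (K : Set G) := by
  rw [mem_norm]
  intro t
  constructor
  · intro ht
    rcases h t ht with e | e <;> rw [e]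
    · exact ht
    · exact inv_mem ht
  · intro ht
    rcases h _ ht with e | e
    · have : t = g * t * g⁻¹ := by
        have := mul_left_cancel (mul_right_cancel (e.trans (rfl : _ = g * t * g⁻¹)))
        nth_rewrite 1 [← this]; rfl
      rw [this]; exact ht
    · have : t = (g * t * g⁻¹)⁻¹ := by
        have e2 : g * (g * t * g⁻¹) * g⁻¹ = g * t⁻¹ * g⁻¹ := by rw [e]; group
        have := mul_left_cancel (mul_right_cancel e2)
        rw [this, inv_inv]
      rw [this]; exact inv_mem ht

lemma torus_conj {τ : F} (hτ : NonsplitTrace τ) {n t : SL2 F} (hn : n ∈ nonsplitNormalizer τ)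
    (ht : t ∈ cen ⊤ (y0 τ)) : n * t * n⁻¹ = t ∨ n * t * n⁻¹ = t⁻¹ := by
  have hc := (mem_cen.1 ht).2
  have hy := fx_y0 hτ
  have hyc := fx_zero_notMem hy
  by_cases hz : t ∈ Subgroup.center (SL2 F)
  · left
    rw [(Subgroup.mem_center_iff.1 hz) n]; group
  · have h0 : fx t = 0 := by rw [fx_commute hz hyc hc, hy]
    apply conj_eq_or_inv (charpoly_ne h0)
    have h1 : Commute (n * t * n⁻¹) (n * y0 τ * n⁻¹) := (Commute.conj_iff n).2 hc
    have h2 : Commute (n * t * n⁻¹) (y0 τ) := by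
      rcases hn with e | e
      · rwa [e] at h1
      · rw [e] at h1; simpa using h1.inv_right
    exact ct _ _ _ hyc h2 hc.symm

/-- A Sylow `ℓ`-subgroup of the diagonal group fixes a point since `ℓ ∤ v`. Either it fixes only one,
and then the normalizer of the split torus lies in a point stabilizer, or it bounds the `ℓ`-part
of `R`. -/
lemma split_prime [Finite G] (hker : φ.ker = Subgroup.center (SL2 F)) (hnorm : φ.range.Normal)
    (hcent : Subgroup.centralizer (φ.range : Set G) = ⊥)
    {R ℓ b : ℕ} (hℓ : ℓ.Prime) (hℓv : ¬ ℓ ∣ Nat.card Pt) (hℓq : ¬ ℓ ∣ Nat.card F)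
    (hR : ∀ α β : Pt, β ≠ α → R ∣ (MulAction.orbit (MulAction.stabilizer G α) β).ncard)
    (hb : ℓ ^ b ∣ R) :
    (∃ α : Pt, (∀ a : Fˣ, hh a ∈ ptStab φ α) ∧ w ∈ ptStab φ α) ∨
    ℓ ^ b ∣ (Nat.card F + 1) * Nat.card (F ≃+* F) := by
  have : Fact ℓ.Prime := ⟨hℓ⟩
  let Q : Sylow ℓ (diagGroup φ) := default
  let K : Subgroup G := (Q : Subgroup (diagGroup φ)).map (diagGroup φ).subtype
  have hKp : IsPGroup ℓ K := Q.isPGroup'.map _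
  have hKD : K ≤ diagGroup φ := by
    rintro _ ⟨x, -, rfl⟩; exact x.2
  rcases normalizer_or_dvd hℓ hKp hℓv hR with ⟨α, hα⟩ | hdvd
  · left
    refine ⟨α, fun a => hα (mem_norm_of_pm fun t ht => Or.inl ?_),
      hα (mem_norm_of_pm fun t ht => Or.inr (w_conj_diag hcent (hKD ht)))⟩
    rw [diagGroup_comm hcent (hh_mem_diagGroup a) (hKD ht)]; group
  · right
    have hcK : Nat.card K = Nat.card (Q : Subgroup (diagGroup φ)) :=
      Nat.card_congr ((Q : Subgroup (diagGroup φ)).equivMapOfInjective _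
        (Subgroup.subtype_injective _)).toEquiv.symm
    have h1 := Subgroup.card_mul_index (Q : Subgroup (diagGroup φ))
    have h2 : ¬ ℓ ∣ (Q : Subgroup (diagGroup φ)).index := Q.not_dvd_index
    have h3 := ((Nat.mul_dvd_mul_left (Nat.card K) hb).trans hdvd).trans (card_G_dvd hker hnorm)
    rw [← h1, hcK] at h3
    have h4 : ℓ ^ b ∣ ((Nat.card F + 1) * Nat.card (F ≃+* F)) *
        (Nat.card F * (Q : Subgroup (diagGroup φ)).index) := by
      apply Nat.dvd_of_mul_dvd_mul_left (Nat.card_pos (α := (Q : Subgroup (diagGroup φ))))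
      exact h3.trans (dvd_of_eq (by ring))
    refine Nat.Coprime.dvd_of_dvd_mul_right ?_ h4
    apply Nat.Coprime.pow_left
    exact Nat.Coprime.mul_right ((Nat.Prime.coprime_iff_not_dvd hℓ).2 hℓq)
      ((Nat.Prime.coprime_iff_not_dvd hℓ).2 h2)

/-- The analogue of `split_prime` for the nonsplit torus. -/
lemma nonsplit_prime [Finite G] (hker : φ.ker = Subgroup.center (SL2 F)) (hnorm : φ.range.Normal)
    (hcent : Subgroup.centralizer (φ.range : Set G) = ⊥)
    {R ℓ b : ℕ} (hℓ : ℓ.Prime) (hℓv : ¬ ℓ ∣ Nat.card Pt) (hℓq : ¬ ℓ ∣ Nat.card F)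
    (hR : ∀ α β : Pt, β ≠ α → R ∣ (MulAction.orbit (MulAction.stabilizer G α) β).ncard)
    (hb : ℓ ^ b ∣ R)
    {τ : F} (hτ : NonsplitTrace τ) :
    (∃ α : Pt, nonsplitNormalizer τ ≤ ptStab φ α) ∨
    ℓ ^ b ∣ 2 * (Nat.card F - 1) * Nat.card (F ≃+* F) := by
  have : Fact ℓ.Prime := ⟨hℓ⟩
  let Q : Sylow ℓ (cen ⊤ (y0 τ)) := default
  let L : Subgroup (SL2 F) := (Q : Subgroup (cen ⊤ (y0 τ))).map (cen ⊤ (y0 τ)).subtype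
  have hLp : IsPGroup ℓ L := Q.isPGroup'.map _
  have hL : L ≤ cen ⊤ (y0 τ) := by
    rintro _ ⟨x, -, rfl⟩; exact x.2
  have hKp : IsPGroup ℓ (L.map φ) := hLp.map _
  rcases normalizer_or_dvd hℓ hKp hℓv hR with ⟨α, hα⟩ | hdvd
  · left
    refine ⟨α, fun n hn => hα (mem_norm_of_pm ?_)⟩
    rintro _ ⟨t, ht, rfl⟩
    rw [← map_inv, ← map_mul, ← map_mul, ← map_inv]
    rcases torus_conj hτ hn (hL ht) with e | e <;> rw [e]
    · exact Or.inl rfl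
    · exact Or.inr rfl
  · right
    have hcL : Nat.card L = Nat.card Q :=
      Nat.card_congr ((Q : Subgroup (cen ⊤ (y0 τ))).equivMapOfInjective _
        (Subgroup.subtype_injective _)).toEquiv.symm
    have h1 := Subgroup.card_mul_index (Q : Subgroup (cen ⊤ (y0 τ)))
    rw [card_torus hτ] at h1
    have h2 : ¬ ℓ ∣ (Q : Subgroup (cen ⊤ (y0 τ))).index := Q.not_dvd_index
    -- the kernel of `φ` on `L` has order at most two
    have h5 : Nat.card L ∣ 2 * Nat.card (L.map φ) := by
      have e1 := Subgroup.card_mul_index (φ.subgroupMap L).ker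
      rw [Subgroup.index_ker] at e1
      have e2 : Nat.card (φ.subgroupMap L).ker ∣ Nat.card (Subgroup.center (SL2 F)) := by
        let ι : (φ.subgroupMap L).ker →* Subgroup.center (SL2 F) :=
          { toFun := fun g => ⟨g.1.1, by
              rw [← hker, MonoidHom.mem_ker]
              exact congrArg Subtype.val g.2⟩
            map_one' := rfl
            map_mul' := fun _ _ => rfl }
        refine Subgroup.card_dvd_of_injective ι fun a b hab => ?_
        have : (ι a : SL2 F) = ι b := by rw [hab]
        exact Subtype.ext (Subtype.ext this)
      have e3 : Nat.card (Subgroup.center (SL2 F)) ∣ 2 := by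
        by_cases h : (2 : F) = 0
        · rw [card_center_one h]; norm_num
        · rw [card_center_two h]
      rw [← e1]
      exact Nat.mul_dvd_mul (e2.trans e3) (Subgroup.card_subgroup_dvd_card _)
    have h3 := ((Nat.mul_dvd_mul_left (Nat.card (L.map φ)) hb).trans hdvd).trans
      (card_G_dvd hker hnorm)
    have h6 : Nat.card Q * ℓ ^ b ∣ 2 * ((Nat.card F + 1) * (Nat.card F *
        ((Nat.card F - 1) * Nat.card (F ≃+* F)))) := by
      rw [← hcL]
      refine (Nat.mul_dvd_mul_right h5 _).trans ?_
      rw [mul_assoc]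
      refine Nat.mul_dvd_mul_left _ (h3.trans ?_)
      exact Nat.mul_dvd_mul_left _ (Nat.mul_dvd_mul_left _
        (Nat.mul_dvd_mul_right (card_diagGroup_dvd hker hcent) _))
    have h4 : ℓ ^ b ∣ (2 * (Nat.card F - 1) * Nat.card (F ≃+* F)) *
        (Nat.card F * (Q : Subgroup (cen ⊤ (y0 τ))).index) := by
      apply Nat.dvd_of_mul_dvd_mul_left (Nat.card_pos (α := Q))
      convert h6 using 1
      rw [← h1]
      ring
    refine Nat.Coprime.dvd_of_dvd_mul_right ?_ h4
    apply Nat.Coprime.pow_left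
    exact Nat.Coprime.mul_right ((Nat.Prime.coprime_iff_not_dvd hℓ).2 hℓq)
      ((Nat.Prime.coprime_iff_not_dvd hℓ).2 h2)

end Prime

end SLTwo

namespace SLTwo

open OnePoint

/-! ### The exceptional case and a lower bound for the degree -/

section Bounds

variable {F : Type*} [Field F] {G : Type*} [Group G] {φ : SL2 F →* G} [DecidableEq F] [Finite F]
  {Pt : Type*} [Finite Pt] [MulAction G Pt]

/-- If the point stabilizers in the socle are not maximal, `R` divides a small multiple of the
order of the group of field automorphisms: every prime power dividing `R` satisfies the bounds of
both `split_prime` and `nonsplit_prime`, and `q + 1` and `q - 1` have gcd at most two. -/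
lemma coatom_or_dvd [Finite G] (hker : φ.ker = Subgroup.center (SL2 F)) (hnorm : φ.range.Normal)
    (hcent : Subgroup.centralizer (φ.range : Set G) = ⊥)
    (htr : ∀ α β : Pt, ∃ s, φ s • α = β) (hv : 1 < Nat.card Pt) (hq : 4 ≤ Nat.card F)
    {R : ℕ} (hR2 : 2 ≤ R) (hRv : R ∣ Nat.card Pt - 1)
    (hRst : ∀ α : Pt, 3 * R ∣ Nat.card (MulAction.stabilizer G α))
    (hR : ∀ α β : Pt, β ≠ α → R ∣ (MulAction.orbit (MulAction.stabilizer G α) β).ncard)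
    {p : ℕ} (hp : p.Prime) (hpq : Nat.card F = p ^ Nat.card (F ≃+* F)) (hpv : p ∣ Nat.card Pt) :
    (∃ α : Pt, IsCoatom (ptStab φ α)) ∨
      (Nat.card F % 2 = 0 ∧ R ∣ Nat.card (F ≃+* F)) ∨
      (Nat.card F % 4 = 1 ∧ R ∣ 2 * Nat.card (F ≃+* F)) ∨
      (Nat.card F % 4 = 3 ∧ R ∣ 4 * Nat.card (F ≃+* F)) := by
  by_cases hco : ∃ α : Pt, IsCoatom (ptStab φ α)
  · exact Or.inl hco
  right
  obtain ⟨τ, hτ⟩ := exists_nonsplit (F := F)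
  have hnv : ∀ ℓ : ℕ, ℓ.Prime → ℓ ∣ R → ¬ ℓ ∣ Nat.card Pt := by
    intro ℓ hℓ h1 h2
    have := Nat.dvd_sub h2 (h1.trans hRv)
    rw [Nat.sub_sub_self hv.le] at this
    exact hℓ.one_lt.ne' (Nat.dvd_one.1 this)
  have hnq : ∀ ℓ : ℕ, ℓ.Prime → ℓ ∣ R → ¬ ℓ ∣ Nat.card F := by
    intro ℓ hℓ h1 h2
    rw [hpq] at h2
    have := (Nat.prime_dvd_prime_iff_eq hℓ hp).1 (hℓ.dvd_of_dvd_pow h2)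
    subst this
    exact hnv _ hℓ h1 hpv
  have key : ∀ ℓ b : ℕ, ℓ.Prime → b ≠ 0 → ℓ ^ b ∣ R →
      ℓ ^ b ∣ (Nat.card F + 1) * Nat.card (F ≃+* F) ∧
        ℓ ^ b ∣ 2 * (Nat.card F - 1) * Nat.card (F ≃+* F) := by
    intro ℓ b hℓ hb0 hb
    have hℓR : ℓ ∣ R := (dvd_pow_self ℓ hb0).trans hb
    constructor
    · rcases split_prime hker hnorm hcent hℓ (hnv ℓ hℓ hℓR) (hnq ℓ hℓ hℓR) hR hb with ⟨α, h1, h2⟩ | h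
      · exact absurd ⟨α, coatom_of_split hker hnorm hcent htr hv hq hR2 hRv hRst h1 h2⟩ hco
      · exact h
    · rcases nonsplit_prime hker hnorm hcent hℓ (hnv ℓ hℓ hℓR) (hnq ℓ hℓ hℓR) hR hb hτ with
        ⟨α, h1⟩ | h
      · exact absurd ⟨α, coatom_of_nonsplit hker hnorm hcent htr hv hq hR2 hRv hRst hτ h1⟩ hco
      · exact h
  have hodd : ∀ ℓ b : ℕ, ℓ.Prime → ℓ ≠ 2 → ℓ ^ b ∣ R → ℓ ^ b ∣ Nat.card (F ≃+* F) := by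
    intro ℓ b hℓ h2 hb
    rcases Nat.eq_zero_or_pos b with rfl | hb0
    · simp
    obtain ⟨k1, k2⟩ := key ℓ b hℓ hb0.ne' hb
    by_cases hd : ℓ ∣ Nat.card F + 1
    · refine Nat.Coprime.dvd_of_dvd_mul_left ?_ k2
      apply Nat.Coprime.pow_left
      rw [Nat.Prime.coprime_iff_not_dvd hℓ, hℓ.dvd_mul, not_or]
      have h3 : ¬ ℓ ∣ 2 := fun h => h2 ((Nat.prime_dvd_prime_iff_eq hℓ Nat.prime_two).1 h)
      refine ⟨h3, fun h => h3 ?_⟩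
      have := Nat.dvd_sub hd h
      rwa [show Nat.card F + 1 - (Nat.card F - 1) = 2 by omega] at this
    · refine Nat.Coprime.dvd_of_dvd_mul_left ?_ k1
      apply Nat.Coprime.pow_left
      rwa [Nat.Prime.coprime_iff_not_dvd hℓ]
  have h2odd : ∀ b m : ℕ, ¬ 2 ∣ m → Nat.Coprime (2 ^ b) m := by
    intro b m hm
    apply Nat.Coprime.pow_left
    rwa [Nat.Prime.coprime_iff_not_dvd Nat.prime_two]
  rcases (by omega : Nat.card F % 2 = 0 ∨ Nat.card F % 4 = 1 ∨ Nat.card F % 4 = 3) with h | h | h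
  · refine Or.inl ⟨h, (Nat.dvd_iff_prime_pow_dvd_dvd _ _).2 fun ℓ b hℓ hb => ?_⟩
    by_cases h2 : ℓ = 2
    · rcases Nat.eq_zero_or_pos b with rfl | hb0
      · simp
      subst h2
      exact absurd (Nat.dvd_of_mod_eq_zero h) (hnq 2 hℓ ((dvd_pow_self 2 hb0.ne').trans hb))
    · exact hodd ℓ b hℓ h2 hb
  · refine Or.inr (Or.inl ⟨h, (Nat.dvd_iff_prime_pow_dvd_dvd _ _).2 fun ℓ b hℓ hb => ?_⟩)
    by_cases h2 : ℓ = 2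
    · rcases Nat.eq_zero_or_pos b with rfl | hb0
      · simp
      subst h2
      have k1 := (key 2 b hℓ hb0.ne' hb).1
      obtain ⟨m, hm⟩ : ∃ m, Nat.card F + 1 = 2 * m := ⟨(Nat.card F + 1) / 2, by omega⟩
      rw [hm, mul_right_comm] at k1
      exact (h2odd b m (by omega)).dvd_of_dvd_mul_right k1
    · exact (hodd ℓ b hℓ h2 hb).trans (Dvd.intro_left _ rfl)
  · refine Or.inr (Or.inr ⟨h, (Nat.dvd_iff_prime_pow_dvd_dvd _ _).2 fun ℓ b hℓ hb => ?_⟩)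
    by_cases h2 : ℓ = 2
    · rcases Nat.eq_zero_or_pos b with rfl | hb0
      · simp
      subst h2
      have k1 := (key 2 b hℓ hb0.ne' hb).2
      obtain ⟨m, hm⟩ : ∃ m, Nat.card F - 1 = 2 * m := ⟨(Nat.card F - 1) / 2, by omega⟩
      rw [hm, show 2 * (2 * m) * Nat.card (F ≃+* F) = 4 * Nat.card (F ≃+* F) * m by ring] at k1
      exact (h2odd b m (by omega)).dvd_of_dvd_mul_right k1
    · exact (hodd ℓ b hℓ h2 hb).trans (Dvd.intro_left _ rfl)

/-- The number of points fixed by a unipotent element. -/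
noncomputable def fixNum (φ : SL2 F →* G) (Pt : Type*) [MulAction G Pt] (x : F) : ℕ :=
  Nat.card (MulAction.fixedBy Pt (φ (u x)))

lemma fixNum_sq {a : F} (ha : a ≠ 0) (x : F) : fixNum φ Pt (a ^ 2 * x) = fixNum φ Pt x := by
  have h := hh_conj_u (Units.mk0 a ha) x
  rw [Units.val_mk0] at h
  have e : φ (u (a ^ 2 * x)) = φ (hh (Units.mk0 a ha)) * φ (u x) * (φ (hh (Units.mk0 a ha)))⁻¹ := by
    rw [← h]; simp
  rw [fixNum, fixNum, e]
  set t := φ (hh (Units.mk0 a ha))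
  refine Nat.card_congr ⟨fun y => ⟨t⁻¹ • y.1, ?_⟩, fun y => ⟨t • y.1, ?_⟩, fun y => ?_, fun y => ?_⟩
  · have := y.2
    rw [MulAction.mem_fixedBy] at this ⊢
    rw [mul_smul, mul_smul] at this
    rw [eq_inv_smul_iff]; exact this
  · have := y.2
    rw [MulAction.mem_fixedBy] at this ⊢
    rw [mul_smul, mul_smul, inv_smul_smul, this]
  · simp
  · simp

lemma fixNum_neg (x : F) : fixNum φ Pt (-x) = fixNum φ Pt x := by
  rw [fixNum, fixNum, ← u_inv, map_inv, MulAction.fixedBy_inv]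

lemma fixNum_zero : fixNum φ Pt (0 : F) = Nat.card Pt := by
  rw [fixNum, u_zero, map_one]
  have : MulAction.fixedBy Pt (1 : G) = Set.univ := by ext; simp [MulAction.mem_fixedBy]
  rw [this]; exact Nat.card_congr (Equiv.Set.univ Pt)

lemma fixNum_lt [FaithfulSMul G Pt] (hker : φ.ker = Subgroup.center (SL2 F)) {x : F} (hx : x ≠ 0) :
    fixNum φ Pt x < Nat.card Pt := by
  have := Fintype.ofFinite Pt
  classical
  rw [fixNum]
  by_contra hle
  have h1 : (MulAction.fixedBy Pt (φ (u x))) = Set.univ := by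
    apply Set.eq_of_subset_of_ncard_le (Set.subset_univ _)
    rw [Set.ncard_univ, ← Nat.card_coe_set_eq]; omega
  have h2 : φ (u x) = 1 := by
    apply FaithfulSMul.eq_of_smul_eq_smul (α := Pt)
    intro y
    have : y ∈ MulAction.fixedBy Pt (φ (u x)) := by rw [h1]; trivial
    rw [one_smul]; exact this
  apply hx
  apply phi_u_inj hker
  rw [h2, u_zero, map_one]

/-- Burnside's count of the orbits of the upper unipotent group. -/
lemma sum_fixNum [Fintype F] : ∃ n, ∑ x : F, fixNum φ Pt x = Nat.card F * n := by
  classical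
  have := Fintype.ofFinite Pt
  let U : Multiplicative F →* G :=
    { toFun := fun x => φ (u x.toAdd)
      map_one' := by rw [toAdd_one, u_zero, map_one]
      map_mul' := fun x y => by rw [toAdd_mul, ← u_mul, map_mul] }
  letI := MulAction.compHom Pt U
  have : Fintype (Quotient (MulAction.orbitRel (Multiplicative F) Pt)) := Fintype.ofFinite _
  have hfin : ∀ a : Multiplicative F, Fintype (MulAction.fixedBy Pt a) := fun a => Fintype.ofFinite _
  have h := MulAction.sum_card_fixedBy_eq_card_orbits_mul_card_group (Multiplicative F) Pt
  rw [Fintype.card_multiplicative] at h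
  refine ⟨Fintype.card (Quotient (MulAction.orbitRel (Multiplicative F) Pt)), ?_⟩
  rw [mul_comm, Nat.card_eq_fintype_card, ← h]
  refine Fintype.sum_equiv Multiplicative.ofAdd _ _ fun x => ?_
  rw [← Nat.card_eq_fintype_card]; rfl

lemma char_two_sq (h : Nat.card F % 2 = 0) (x : F) : IsSquare x := by
  have := Fintype.ofFinite F
  have h2 : (2 : F) = 0 := two_eq_zero_iff.2 (Nat.even_iff.2 h)
  have h2' : ((2 : ℕ) : F) = 0 := by exact_mod_cast h2
  apply FiniteField.isSquare_of_char_two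
  rcases (Nat.dvd_prime Nat.prime_two).1 ((ringChar.spec F 2).1 h2') with h | h
  · exact absurd h (CharP.ringChar_ne_one)
  · exact h

/-- The fixed point number of `u x` depends only on the square class of `x`. -/
lemma fixNum_pair {ν : F} (hν : ν ≠ 0) (hs : ¬ IsSquare ν ∨ Nat.card F % 2 = 0) {x : F}
    (hx : x ≠ 0) :
    fixNum φ Pt x + fixNum φ Pt (ν * x) = fixNum φ Pt 1 + fixNum φ Pt ν := by
  have := Fintype.ofFinite F
  by_cases hsq : IsSquare x
  · obtain ⟨a, rfl⟩ := hsq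
    have ha : a ≠ 0 := by rintro rfl; simp at hx
    have e1 := fixNum_sq (φ := φ) (Pt := Pt) ha 1
    have e2 := fixNum_sq (φ := φ) (Pt := Pt) ha ν
    rw [mul_one] at e1
    rw [← pow_two, mul_comm ν, e1, e2]
  · rcases hs with hs | hs
    · have h1 : IsSquare (ν * x) := by
        rw [← quadraticChar_one_iff_isSquare (mul_ne_zero hν hx), map_mul,
          quadraticChar_neg_one_iff_not_isSquare.2 hs, quadraticChar_neg_one_iff_not_isSquare.2 hsq]
        norm_num
      obtain ⟨a, ha'⟩ := h1
      have ha : a ≠ 0 := by rintro rfl; simp [hν, hx] at ha'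
      have e1 := fixNum_sq (φ := φ) (Pt := Pt) ha 1
      have e2 := fixNum_sq (φ := φ) (Pt := Pt) (div_ne_zero ha hν) ν
      have e3 : (a / ν) ^ 2 * ν = x := by
        field_simp; rw [pow_two, ← ha']
      rw [mul_one] at e1
      rw [e3] at e2
      rw [ha', ← pow_two, e1, e2, add_comm]
    · exact absurd (char_two_sq hs x) hsq

lemma card_points_mod {ν : F} (hν : ν ≠ 0) (hs : ¬ IsSquare ν ∨ Nat.card F % 2 = 0) :
    ∃ n, 2 * Nat.card Pt + (Nat.card F - 1) * (fixNum φ Pt 1 + fixNum φ Pt ν) =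
      2 * (Nat.card F * n) := by
  have := Fintype.ofFinite F
  obtain ⟨n, hn⟩ := sum_fixNum (φ := φ) (Pt := Pt)
  refine ⟨n, ?_⟩
  rw [← hn, ← Finset.add_sum_erase _ _ (Finset.mem_univ (0 : F)), fixNum_zero]
  have h1 : ∑ x ∈ Finset.univ.erase (0 : F), fixNum φ Pt (ν * x) =
      ∑ x ∈ Finset.univ.erase (0 : F), fixNum φ Pt x := by
    refine Finset.sum_bij' (fun x _ => ν * x) (fun x _ => ν⁻¹ * x) ?_ ?_ ?_ ?_ ?_
    · intro x hx; simp at hx ⊢; exact ⟨hν, hx⟩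
    · intro x hx; simp at hx ⊢; exact ⟨hν, hx⟩
    · intro x hx; field_simp
    · intro x hx; field_simp
    · intro x hx; rfl
  have h2 : ∑ x ∈ Finset.univ.erase (0 : F), (fixNum φ Pt x + fixNum φ Pt (ν * x)) =
      (Nat.card F - 1) * (fixNum φ Pt 1 + fixNum φ Pt ν) := by
    rw [Finset.sum_congr rfl fun x hx => fixNum_pair hν hs (Finset.ne_of_mem_erase hx)]
    rw [Finset.sum_const, smul_eq_mul, Finset.card_erase_of_mem (Finset.mem_univ _),
      Finset.card_univ, Nat.card_eq_fintype_card]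
  rw [Finset.sum_add_distrib, h1] at h2
  rw [← h2]; ring

lemma le_of_mod {q v c n : ℕ} (hq : 1 ≤ q) (hc : c < v) (h : v + (q - 1) * c = q * n) : q ≤ v := by
  obtain ⟨m, rfl⟩ : ∃ m, q = m + 1 := ⟨q - 1, by omega⟩
  rw [Nat.add_sub_cancel] at h
  have h1 : c < n := by
    by_contra hle
    have : (m + 1) * n ≤ (m + 1) * c := Nat.mul_le_mul_left _ (by omega)
    nlinarith
  nlinarith

/-- Burnside's count for the upper unipotent group gives `v + (q - 1) c ≡ 0 (mod q)` when all its
nontrivial elements fix the same number `c < v` of points, so `q ≤ v`. For `q ≡ 1 (mod 4)` there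
may be two fixed point numbers, with average `c`, and one obtains `q ≤ 2 v`. -/
lemma card_points_ge [FaithfulSMul G Pt] (hker : φ.ker = Subgroup.center (SL2 F)) :
    Nat.card F ≤ 2 * Nat.card Pt ∧ (Nat.card F % 4 ≠ 1 → Nat.card F ≤ Nat.card Pt) := by
  have := Fintype.ofFinite F
  have hpos : 1 ≤ Nat.card F := Nat.card_pos
  have hlt : ∀ ν : F, ν ≠ 0 → fixNum φ Pt ν < Nat.card Pt := fun ν hν => fixNum_lt hker hν
  have main : ∀ ν : F, ν ≠ 0 → (¬ IsSquare ν ∨ Nat.card F % 2 = 0) →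
      Nat.card F ≤ 2 * Nat.card Pt := by
    intro ν hν hs
    obtain ⟨n, hn⟩ := card_points_mod (φ := φ) (Pt := Pt) hν hs
    refine le_of_mod hpos (n := 2 * n) ?_ (hn.trans (by ring))
    have h1 := hlt 1 one_ne_zero
    have h2 := hlt ν hν
    omega
  have main' : ∀ ν : F, ν ≠ 0 → (¬ IsSquare ν ∨ Nat.card F % 2 = 0) →
      fixNum φ Pt ν = fixNum φ Pt 1 → Nat.card F ≤ Nat.card Pt := by
    intro ν hν hs he
    obtain ⟨n, hn⟩ := card_points_mod (φ := φ) (Pt := Pt) hν hs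
    refine le_of_mod hpos (n := n) (hlt 1 one_ne_zero) ?_
    rw [he, ← two_mul, mul_left_comm, ← mul_add] at hn
    exact Nat.eq_of_mul_eq_mul_left two_pos hn
  rcases (by omega : Nat.card F % 2 = 0 ∨ Nat.card F % 4 = 1 ∨ Nat.card F % 4 = 3) with h | h | h
  · have h1 := main' 1 one_ne_zero (Or.inr h) rfl
    exact ⟨by omega, fun _ => h1⟩
  · have hch : ringChar F ≠ 2 := by
      intro h2
      have := FiniteField.even_card_iff_char_two.1 h2
      rw [← Nat.card_eq_fintype_card] at this; omega
    obtain ⟨ν, hν⟩ := FiniteField.exists_nonsquare hch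
    exact ⟨main ν (by rintro rfl; simp at hν) (Or.inl hν), fun h' => absurd h h'⟩
  · have h1 := main' (-1) (by simp) (Or.inl (by
      rw [FiniteField.isSquare_neg_one_iff, ← Nat.card_eq_fintype_card]; simpa using h)) (fixNum_neg 1)
    exact ⟨by omega, fun _ => h1⟩

end Bounds

end SLTwo

namespace SLTwo

/-! ### Arithmetic of the exceptional parameters -/

/-- The finite search for `q` even. -/
lemma check_even : ∀ f ∈ Finset.range 8, ∀ R ∈ Finset.range 8, (1 ≤ f ∧ 2 ≤ R ∧ R ∣ f) →
    ∀ k ∈ Finset.range (3 * R), ¬ (3 ≤ k ∧ 2 ^ f ≤ R * (k - 1) + 1 ∧ 2 ∣ R * (k - 1) + 1 ∧ k ∣ 3 * R * (R - 1) ∧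
    3 * R * (R * (k - 1) + 1) ∣ 2 ^ f * ((2 ^ f) ^ 2 - 1) * f) := by
  decide +kernel

/-- The finite search for `q ≡ 1 (mod 4)`; only `q = 5`, `R = 2`, `k = 3` survives. -/
lemma check_one : ∀ f ∈ Finset.range 7, ∀ p ∈ Finset.range 25,
    (1 ≤ f ∧ p % 2 = 1 ∧ 3 ≤ p ∧ p ^ f % 4 = 1 ∧ p ^ f ≤ 24 * f ^ 2) →
    ∀ R ∈ Finset.range (2 * f + 1), (2 ≤ R ∧ R ∣ 2 * f) → ∀ k ∈ Finset.range (3 * R), (3 ≤ k ∧ k < R * (k - 1) ∧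
    p ^ f ≤ 2 * (R * (k - 1) + 1) ∧ p ∣ R * (k - 1) + 1 ∧ k ∣ 3 * R * (R - 1) ∧
    3 * R * (R * (k - 1) + 1) ∣ p ^ f * ((p ^ f) ^ 2 - 1) * f) → R * (k - 1) + 1 = 5 := by
  decide +kernel

/-- The finite search for `q ≡ 3 (mod 4)`. -/
lemma check_three : ∀ f ∈ Finset.range 8, ∀ p ∈ Finset.range 49,
    (1 ≤ f ∧ p % 2 = 1 ∧ 3 ≤ p ∧ p ^ f % 4 = 3 ∧ p ^ f ≤ 48 * f ^ 2 ∧ 4 ≤ p ^ f) →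
    ∀ R ∈ Finset.range (4 * f + 1), (2 ≤ R ∧ R ∣ 4 * f) → ∀ k ∈ Finset.range (3 * R), ¬ (3 ≤ k ∧ k < R * (k - 1) ∧
    p ^ f ≤ R * (k - 1) + 1 ∧ p ∣ R * (k - 1) + 1 ∧ k ∣ 3 * R * (R - 1) ∧
    3 * R * (R * (k - 1) + 1) ∣ p ^ f * ((p ^ f) ^ 2 - 1) * f) := by
  decide +kernel

/-- Exponentials outgrow quadratics. -/
lemma pow_gt {a c n : ℕ} (ha : 2 ≤ a) (hn : 3 ≤ n) (h : c * n ^ 2 < a ^ n) :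
    ∀ f, n ≤ f → c * f ^ 2 < a ^ f := by
  intro f hf
  induction f, hf using Nat.le_induction with
  | base => exact h
  | succ m hm ih =>
    rw [pow_succ a]
    have h1 : (m + 1) ^ 2 ≤ 2 * m ^ 2 := by nlinarith
    calc c * (m + 1) ^ 2 ≤ c * (2 * m ^ 2) := Nat.mul_le_mul_left _ h1
      _ = c * m ^ 2 * 2 := by ring
      _ < a ^ m * 2 := by omega
      _ ≤ a ^ m * a := Nat.mul_le_mul_left _ ha

lemma card_le {R k m : ℕ} (hk : 3 ≤ k) (hkR : k < 3 * R) (hR : R ≤ m) :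
    R * (k - 1) + 1 ≤ 3 * m ^ 2 := by
  have h1 : R * (k - 1) ≤ R * (3 * R - 2) := Nat.mul_le_mul_left _ (by omega)
  have h2 : R * (3 * R - 2) + 2 * R = 3 * R ^ 2 := by
    obtain ⟨t, ht⟩ : ∃ t, 3 * R = t + 2 := ⟨3 * R - 2, by omega⟩
    rw [ht, Nat.add_sub_cancel]
    calc R * t + 2 * R = R * (t + 2) := by ring
      _ = 3 * R ^ 2 := by rw [← ht]; ring
  have h3 : R ^ 2 ≤ m ^ 2 := Nat.pow_le_pow_left hR 2
  omega

/-- The arithmetic end of the argument: in the exceptional cases `R` divides a small multiple of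
`f`, so `v ≤ 3 R ^ 2` is too small compared with `q = p ^ f`, except for `v = 5`. -/
lemma numerics {p f R k : ℕ} (hp : p.Prime) (hq : 4 ≤ p ^ f) (hR2 : 2 ≤ R) (hk : 3 ≤ k)
    (hkR : k < 3 * R) (hkv : k < R * (k - 1)) (hkd : k ∣ 3 * R * (R - 1))
    (hpv : p ∣ R * (k - 1) + 1) (hqv : p ^ f ≤ 2 * (R * (k - 1) + 1))
    (hqv' : p ^ f % 4 ≠ 1 → p ^ f ≤ R * (k - 1) + 1)
    (hord : 3 * R * (R * (k - 1) + 1) ∣ p ^ f * ((p ^ f) ^ 2 - 1) * f)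
    (h : (p ^ f % 2 = 0 ∧ R ∣ f) ∨ (p ^ f % 4 = 1 ∧ R ∣ 2 * f) ∨ (p ^ f % 4 = 3 ∧ R ∣ 4 * f)) :
    R * (k - 1) + 1 = 5 := by
  have hf : 1 ≤ f := by
    rcases Nat.eq_zero_or_pos f with rfl | h
    · norm_num at hq
    · exact h
  have hodd : p ^ f % 2 = 1 → p % 2 = 1 ∧ 3 ≤ p := by
    intro h1
    have h2 : p ≠ 2 := by
      rintro rfl
      have : 2 ∣ 2 ^ f := dvd_pow_self 2 (by omega)
      omega
    have h3 := hp.eq_two_or_odd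
    have h4 := hp.two_le
    omega
  rcases h with ⟨h1, h2⟩ | ⟨h1, h2⟩ | ⟨h1, h2⟩
  · have hp2 : p = 2 := by
      have : 2 ∣ p := Nat.prime_two.dvd_of_dvd_pow (Nat.dvd_of_mod_eq_zero h1)
      exact ((Nat.prime_dvd_prime_iff_eq Nat.prime_two hp).1 this).symm
    subst hp2
    have hRf : R ≤ f := Nat.le_of_dvd hf h2
    have hv := card_le hk hkR hRf
    have hqv := hqv' (by omega)
    have hf8 : f < 8 := by
      by_contra hle
      have := pow_gt (a := 2) (c := 3) (n := 8) (by norm_num) (by norm_num) (by norm_num) f (by omega)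
      omega
    exact absurd ⟨hk, hqv, hpv, hkd, hord⟩ (check_even f (Finset.mem_range.2 hf8) R
      (Finset.mem_range.2 (by omega)) ⟨hf, hR2, h2⟩ k (Finset.mem_range.2 hkR))
  · obtain ⟨hp1, hp3⟩ := hodd (by omega)
    have hRf : R ≤ 2 * f := Nat.le_of_dvd (by omega) h2
    have hv := card_le hk hkR hRf
    have hq24 : p ^ f ≤ 24 * f ^ 2 := by rw [mul_pow] at hv; omega
    have hf7 : f < 7 := by
      by_contra hle
      have := pow_gt (a := 3) (c := 24) (n := 7) (by norm_num) (by norm_num) (by norm_num) f (by omega)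
      have := Nat.pow_le_pow_left hp3 f
      omega
    have hp25 : p < 25 := by
      by_contra hle
      have := Nat.pow_le_pow_left (not_lt.1 hle) f
      interval_cases f <;> omega
    exact check_one f (Finset.mem_range.2 hf7) p (Finset.mem_range.2 hp25)
      ⟨hf, hp1, hp3, h1, hq24⟩ R (Finset.mem_range.2 (by omega)) ⟨hR2, h2⟩ k
      (Finset.mem_range.2 hkR) ⟨hk, hkv, hqv, hpv, hkd, hord⟩
  · obtain ⟨hp1, hp3⟩ := hodd (by omega)
    have hRf : R ≤ 4 * f := Nat.le_of_dvd (by omega) h2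
    have hv := card_le hk hkR hRf
    have hqv := hqv' (by omega)
    have hq48 : p ^ f ≤ 48 * f ^ 2 := by rw [mul_pow] at hv; omega
    have hf8 : f < 8 := by
      by_contra hle
      have := pow_gt (a := 3) (c := 48) (n := 8) (by norm_num) (by norm_num) (by norm_num) f (by omega)
      have := Nat.pow_le_pow_left hp3 f
      omega
    have hp49 : p < 49 := by
      by_contra hle
      have := Nat.pow_le_pow_left (not_lt.1 hle) f
      interval_cases f <;> omega
    exact absurd ⟨hk, hkv, hqv, hpv, hkd, hord⟩ (check_three f (Finset.mem_range.2 hf8) p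
      (Finset.mem_range.2 hp49) ⟨hf, hp1, hp3, h1, hq48, hq⟩ R (Finset.mem_range.2 (by omega))
      ⟨hR2, h2⟩ k (Finset.mem_range.2 hkR))

/-- The parameters of a non-trivial non-symmetric `2-(v,k,3)` design with `r = 3 R`. -/
lemma design_numerics {v k b R : ℕ} (hk : 2 < k) (hkv : k < v - 1)
    (h1 : 3 * R * (k - 1) = 3 * (v - 1)) (h2 : b * k = v * (3 * R))
    (hb : 1 < R → v ≤ b) (hbv : b ≠ v) :
    v = R * (k - 1) + 1 ∧ 2 ≤ R ∧ k < 3 * R ∧ k ∣ 3 * R * (R - 1) := by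
  have e : R * (k - 1) = v - 1 := by rw [mul_assoc] at h1; omega
  have hv : v = R * (k - 1) + 1 := by omega
  have hR : 2 ≤ R := by
    by_contra h
    have : R = 0 ∨ R = 1 := by omega
    rcases this with rfl | rfl <;> omega
  have hlt : v < b := lt_of_le_of_ne (hb hR) (Ne.symm hbv)
  refine ⟨hv, hR, ?_, ?_⟩
  · by_contra hle
    have h3 : v * (3 * R) ≤ v * k := Nat.mul_le_mul_left _ (by omega)
    have h4 : v * k < b * k := Nat.mul_lt_mul_of_pos_right hlt (by omega)
    omega
  · have h3 : k ∣ v * (3 * R) := ⟨b, by rw [← h2, mul_comm]⟩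
    have h4 : v + (R - 1) = R * k := by
      obtain ⟨t, rfl⟩ : ∃ t, k = t + 1 := ⟨k - 1, by omega⟩
      rw [Nat.add_sub_cancel] at hv
      rw [mul_add, hv]; omega
    have h5 : v * (3 * R) + 3 * R * (R - 1) = k * (R * (3 * R)) := by
      calc v * (3 * R) + 3 * R * (R - 1) = (v + (R - 1)) * (3 * R) := by ring
        _ = k * (R * (3 * R)) := by rw [h4]; ring
    exact (Nat.dvd_add_right h3).1 (h5 ▸ Dvd.intro _ rfl)

end SLTwo

namespace SLTwo

/-! ### Primitivity of the socle -/

/-- Either the point stabilizers in the socle are maximal, or `v = 5`. -/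
lemma coatom_or_five {F : Type*} [Field F] [DecidableEq F] [Finite F] {G : Type*} [Group G]
    [Finite G] {φ : SL2 F →* G} {Pt : Type*} [Fintype Pt] [MulAction G Pt] [FaithfulSMul G Pt]
    (hker : φ.ker = Subgroup.center (SL2 F)) (hnorm : φ.range.Normal)
    (hcent : Subgroup.centralizer (φ.range : Set G) = ⊥)
    (htr : ∀ α β : Pt, ∃ s, φ s • α = β) (hq : 4 ≤ Nat.card F)
    (hcoat : ∀ α : Pt, IsCoatom (MulAction.stabilizer G α))
    {𝓑 : Set (Set Pt)} {k r : ℕ} (hD : IsDesign 𝓑 k 3) (hk : 2 < k) (hkv : k < Nat.card Pt - 1)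
    (hnonsym : Nat.card 𝓑 ≠ Nat.card Pt) (hr : ∀ x : Pt, repNum 𝓑 x = r) (h3r : 3 ∣ r)
    (hacts : ActsOn G 𝓑) (hflag : FlagTransitive G 𝓑) :
    (∃ α : Pt, IsCoatom (ptStab φ α)) ∨ Nat.card Pt = 5 := by
  obtain ⟨R, rfl⟩ := h3r
  have hne : Nonempty Pt := (Nat.card_pos_iff.1 (by omega : 0 < Nat.card Pt)).1
  obtain ⟨α₀⟩ := hne
  have h1 := rep_eq hD α₀
  rw [hr] at h1
  obtain ⟨hv, hR2, hkR, hkd⟩ := design_numerics hk hkv h1 (block_count hD hr)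
    (fun h => fisher hD hr (by omega)) hnonsym
  have hv1 : 1 < Nat.card Pt := by omega
  obtain ⟨p, hp, -, hpq⟩ := exists_prime_pow F
  by_cases hpv : p ∣ Nat.card Pt
  · have hRst : ∀ α : Pt, 3 * R ∣ Nat.card (MulAction.stabilizer G α) := by
      intro α
      rw [← hr α]
      refine rep_dvd hacts hflag α ?_
      have : 0 < repNum 𝓑 α := by rw [hr]; omega
      obtain ⟨⟨B, hB⟩⟩ := (Nat.card_pos_iff.1 this).1
      exact ⟨B, hB⟩
    have hRorb : ∀ α β : Pt, β ≠ α → R ∣ (MulAction.orbit (MulAction.stabilizer G α) β).ncard := by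
      intro α β hne
      have := rep_dvd_orbit (G := G) hD hflag hne
      rw [hr] at this
      exact Nat.dvd_of_mul_dvd_mul_left (by norm_num) this
    rcases coatom_or_dvd hker hnorm hcent htr hv1 hq hR2 ⟨k - 1, by omega⟩ hRst hRorb hp hpq hpv
      with h | h
    · exact Or.inl h
    · right
      obtain ⟨hq1, hq2⟩ := card_points_ge (Pt := Pt) hker
      have hord : 3 * R * (R * (k - 1) + 1) ∣
          Nat.card F * (Nat.card F ^ 2 - 1) * Nat.card (F ≃+* F) := by
        rw [← hv]
        refine (Nat.mul_dvd_mul_right (hRst α₀) _).trans ?_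
        rw [card_stab htr α₀]
        refine (card_G_dvd' hker hnorm hcent).trans (dvd_of_eq ?_)
        rw [card_SL2]
        congr 1
        rw [show Nat.card F ^ 2 - 1 = (Nat.card F + 1) * (Nat.card F - 1) from
          by simpa using Nat.sq_sub_sq (Nat.card F) 1]
        ring
      rw [hv] at hq1 hq2 hpv ⊢
      rw [hpq] at hq1 hq2 hord hq h
      exact numerics hp hq hR2 hk hkR (by omega) hkd hpv hq1 hq2 hord h
  · exact Or.inl (coatom_of_not_dvd hker hnorm htr hv1 hcoat hp hpq hpv)

/-- Maximality descends along a surjective homomorphism. -/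
lemma isCoatom_of_comap {S X : Type*} [Group S] [Group X] {ψ : S →* X}
    (hψ : Function.Surjective ψ) {H : Subgroup X} (h : IsCoatom (H.comap ψ)) : IsCoatom H := by
  refine ⟨fun e => h.1 (by rw [e, Subgroup.comap_top]), fun K hK => ?_⟩
  have h1 : K.comap ψ = ⊤ := h.2 _ ((Subgroup.comap_lt_comap_of_surjective hψ).2 hK)
  rw [← Subgroup.comap_top ψ] at h1
  exact Subgroup.comap_injective hψ h1

end SLTwo

/-- For a non-trivial, non-symmetric flag-transitive, point-primitive
`2-(v,k,3)` design with `3 ∣ r` and almost simple automorphism group `G` with socle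
`X ≅ PSL(2,q)`, the socle `X` itself acts point-primitively; equivalently, every point
stabilizer `X_α` is a maximal subgroup of `X`. -/
theorem stmt_8
    (q : ℕ) (hq4 : 4 ≤ q)
    (F : Type) [Field F] [Fintype F] (hF : Fintype.card F = q)
    {Pt : Type*} [Fintype Pt] {G : Type*} [Group G] [MulAction G Pt] [FaithfulSMul G Pt]
    -- `D = (Pt, 𝓑)` is a non-trivial, non-symmetric `2-(v,k,3)` design …
    (𝓑 : Set (Set Pt)) (v k : ℕ) (hv : Nat.card Pt = v)
    (hD : IsDesign 𝓑 k 3) (hnt : 2 < k ∧ k < v - 1)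
    (hnonsym : Nat.card 𝓑 ≠ v)
    -- … whose replication number `r` is divisible by 3, …
    (r : ℕ) (hr : ∀ x : Pt, repNum 𝓑 x = r) (h3r : 3 ∣ r)
    -- … admitting the flag-transitive, point-primitive automorphism group `G`, …
    (hacts : ActsOn G 𝓑) (hflag : FlagTransitive G 𝓑)
    (hprim : PointPrimitive G Pt)
    -- … where `G` is almost simple with socle `X ≅ PSL(2,q)` (so `PSL(2,q) ⊴ G ≤ PΓL(2,q)`):
    (X : Subgroup G) (hXnormal : X.Normal)
    (hXiso : Nonempty (X ≃* PSL2 F))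
    (hXcent : Subgroup.centralizer (X : Set G) = ⊥)
    :
    PointPrimitive X Pt ∧ ∀ α : Pt, IsCoatom (MulAction.stabilizer X α) := by
  classical
  obtain ⟨e⟩ := hXiso
  subst hv hF
  have hcard : (4 : ℕ) ≤ Nat.card F := by rw [Nat.card_eq_fintype_card]; exact hq4
  have hfin : Finite G := Finite.of_injective _ (MulAction.toPerm_injective (α := G) (β := Pt))
  have hnt' : Nontrivial Pt := by
    rw [← Finite.one_lt_card_iff_nontrivial]; omega
  have hpre : MulAction.IsPreprimitive G Pt :=
    { toIsPretransitive := hprim.1, isTrivialBlock_of_isBlock := fun {B} hB => hprim.2 B hB }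
  let ψ : SLTwo.SL2 F →* X :=
    (e.symm.toMonoidHom).comp (QuotientGroup.mk' (Subgroup.center (SLTwo.SL2 F)))
  have hψ : Function.Surjective ψ := e.symm.surjective.comp (QuotientGroup.mk'_surjective _)
  let φ : SLTwo.SL2 F →* G := X.subtype.comp ψ
  have hrange : φ.range = X := by
    rw [MonoidHom.range_comp, MonoidHom.range_eq_top.2 hψ, ← MonoidHom.range_eq_map,
      Subgroup.range_subtype]
  have hker : φ.ker = Subgroup.center (SLTwo.SL2 F) := by
    rw [← QuotientGroup.ker_mk' (Subgroup.center (SLTwo.SL2 F))]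
    ext s
    simp only [φ, ψ, MonoidHom.mem_ker]
    simp
  -- `X` is nontrivial: otherwise its centralizer would be all of `G`, hence `G` trivial,
  -- while `G` is transitive on more than one point.
  have hXtr : MulAction.IsPretransitive X Pt := by
    refine MulAction.IsQuasiPreprimitive.isPretransitive_of_normal (G := G) fun hfix => ?_
    have hbot : ∀ x ∈ X, x = 1 := by
      intro x hx
      apply FaithfulSMul.eq_of_smul_eq_smul (α := Pt)
      intro y
      have : y ∈ MulAction.fixedPoints X Pt := by rw [hfix]; trivial
      rw [one_smul]
      exact this ⟨x, hx⟩
    have htop : Subgroup.centralizer (X : Set G) = ⊤ := by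
      refine eq_top_iff.2 fun g _ => Subgroup.mem_centralizer_iff.2 fun x hx => ?_
      rw [hbot x hx, one_mul, mul_one]
    obtain ⟨a, b, hab⟩ := exists_pair_ne Pt
    obtain ⟨g, hg⟩ := hprim.1.exists_smul_eq a b
    have hg1 : g ∈ (⊥ : Subgroup G) := by rw [← hXcent, htop]; trivial
    rw [Subgroup.mem_bot.1 hg1, one_smul] at hg
    exact hab hg
  have htr : ∀ α β : Pt, ∃ s, φ s • α = β := by
    intro α β
    obtain ⟨x, hx⟩ := hXtr.exists_smul_eq α β
    obtain ⟨s, rfl⟩ := hψ x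
    exact ⟨s, hx⟩
  have hXpre : MulAction.IsPreprimitive X Pt := by
    rcases SLTwo.coatom_or_five (φ := φ) hker (by rw [hrange]; exact hXnormal)
      (by rw [hrange]; exact hXcent) htr hcard
      (fun α => (MulAction.isCoatom_stabilizer_iff_preprimitive G α).2 hpre)
      hD hnt.1 hnt.2 hnonsym hr h3r hacts hflag with ⟨α, hα⟩ | h5
    · refine (MulAction.isCoatom_stabilizer_iff_preprimitive X α).1
        (SLTwo.isCoatom_of_comap hψ ?_)
      exact hα
    · exact MulAction.IsPreprimitive.of_prime_card (by rw [h5]; norm_num)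
  exact ⟨⟨hXtr, fun s hs => hXpre.isTrivialBlock_of_isBlock hs⟩,
    fun α => (MulAction.isCoatom_stabilizer_iff_preprimitive X α).2 hXpre⟩
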